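/- arXiv:2501.06840 — 2 statements merged into one kernel-verified Lean document; each statement's English description precedes it below -/
import Mathlib

section
/- Let n ≥ 3 and let φ : GL(n) → M_n be a continuous, commutativity-preserving and spectrum-shrinking map. Then there exists T ∈ GL(n) such that either φ(X) = T X T⁻¹ for all X ∈ GL(n), or φ(X) = T Xᵗ T⁻¹ for all X ∈ GL(n) (where Xᵗ denotes the transpose). -/
open Matrix

/-!
Along `S diag(l) S⁻¹`, with the `l i` distinct and nonzero, the spectrum of `φ` lies in `{l i}` with
multiplicities that are constant by connectedness, hence symmetric under permutations of `l` and so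
all equal to one. As commuting matrices have commuting images, `φ` maps each torus `S D S⁻¹` to a
torus `T D T⁻¹`, with eigenvalues matched, and adding a large scalar to the argument extends this
from `GL(n)` to a continuous map `ρ` on `M_n`.

Such a `ρ` is additive on orthogonal idempotents. Writing the idempotent `eᵢ aᵗ` with `a i = 1` as
`1` minus the other idempotents of its frame shows that changing the entry `a k` alters `ρ (eᵢ aᵗ)`
by an amount depending only on the old and new values of `a k`; conjugating by a transvection
through a third index makes this amount additive. So `ρ` is linear on rows, on columns by
transposition, and hence everywhere.
Since `ρ` preserves squares, it is a Jordan homomorphism, and its values on matrix units exhibit it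
as a conjugation, possibly composed with the transpose.
-/

section PolynomialPreliminaries

variable {σ K : Type*}

lemma finite_setOf_eval_lineMap_eq_zero [Field K] (p : MvPolynomial σ K) {a : σ → K}
    (ha : p.eval a ≠ 0) (b : σ → K) :
    {z : K | p.eval (AffineMap.lineMap a b z) = 0}.Finite := by
  let q : Polynomial K := MvPolynomial.aeval
    (fun i => Polynomial.X * Polynomial.C (b i - a i) + Polynomial.C (a i)) p
  have hq (z : K) : q.eval z = p.eval (AffineMap.lineMap a b z) := by
    simp [q, MvPolynomial.aeval_def, MvPolynomial.eval₂_eq, Polynomial.eval_finsetSum,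
      MvPolynomial.eval_eq, Polynomial.eval_prod, AffineMap.lineMap_apply]
  have hq0 : q ≠ 0 := fun h => ha (by simpa [h] using (hq 0).symm)
  exact (Polynomial.finite_setOfPred_isRoot hq0).subset fun z hz => (hq z).trans hz

theorem dense_setOf_eval_ne_zero [NontriviallyNormedField K] {p : MvPolynomial σ K} {a : σ → K}
    (ha : p.eval a ≠ 0) : Dense {x | p.eval x ≠ 0} := fun b => by
  have hline : Continuous (AffineMap.lineMap a b : K → σ → K) := AffineMap.lineMap_continuous
  have hdense : Dense {z : K | p.eval (AffineMap.lineMap a b z) = 0}ᶜ := by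
    rw [Set.compl_eq_univ_sdiff]
    exact dense_univ.sdiff_finite (finite_setOf_eval_lineMap_eq_zero p ha b)
  simpa using map_mem_closure hline (hdense 1) fun z hz => hz

theorem isPreconnected_setOf_eval_ne_zero (p : MvPolynomial σ ℂ) :
    IsPreconnected {x | p.eval x ≠ 0} := by
  refine isPreconnected_of_forall_pair fun a ha b hb => ?_
  have hline : Continuous (AffineMap.lineMap a b : ℂ → σ → ℂ) := AffineMap.lineMap_continuous
  have hconn :=
    (finite_setOf_eval_lineMap_eq_zero p ha b).countable.isConnected_compl_of_one_lt_rank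
      (by simp [Complex.rank_real_complex])
  refine ⟨AffineMap.lineMap a b '' {z : ℂ | p.eval (AffineMap.lineMap a b z) = 0}ᶜ, ?_,
    ⟨0, by simpa using ha, by simp⟩, ⟨1, by simpa using hb, by simp⟩,
    hconn.isPreconnected.image _ hline.continuousOn⟩
  rintro _ ⟨z, hz, rfl⟩
  exact hz

/-- The polynomial whose nonvanishing locus consists of the tuples of distinct nonzero scalars. -/
noncomputable def distinctNonzeroPoly (ι R : Type*) [Fintype ι] [DecidableEq ι] [CommRing R] :
    MvPolynomial ι R :=
  (∏ i, MvPolynomial.X i) * ∏ p ∈ Finset.univ.offDiag, (MvPolynomial.X p.1 - MvPolynomial.X p.2)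

lemma eval_distinctNonzeroPoly_ne_zero {ι R : Type*} [Fintype ι] [DecidableEq ι] [CommRing R]
    [IsDomain R] (l : ι → R) :
    (distinctNonzeroPoly ι R).eval l ≠ 0 ↔ (∀ i, l i ≠ 0) ∧ Function.Injective l := by
  simp only [distinctNonzeroPoly, map_mul, map_prod, map_sub, MvPolynomial.eval_X, mul_ne_zero_iff,
    Finset.prod_ne_zero_iff, Finset.mem_univ, true_imp_iff, Finset.mem_offDiag, true_and,
    sub_ne_zero, Prod.forall]
  exact and_congr_right' ⟨fun h i j => not_imp_not.1 (h i j), fun h i j => h.ne⟩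

lemma prod_sub_pow_injective {ι R : Type*} [Fintype ι] [CommRing R] [IsDomain R] [Infinite R]
    {l : ι → R} (hl : Function.Injective l) :
    Function.Injective fun (k : ι → ℕ) (z : R) => ∏ i, (z - l i) ^ k i := by
  classical
  intro k m hkm
  let P (k : ι → ℕ) : Polynomial R := ∏ i, (Polynomial.X - Polynomial.C (l i)) ^ k i
  have hP : P k = P m := Polynomial.funext fun z => by
    simpa [P, Polynomial.eval_prod] using congrFun hkm z
  have hmult (k : ι → ℕ) (i : ι) : (P k).rootMultiplicity (l i) = k i := by
    rw [← Polynomial.count_roots, Polynomial.roots_prod _ _ (Finset.prod_ne_zero_iff.2 fun j _ =>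
      pow_ne_zero _ (Polynomial.X_sub_C_ne_zero _))]
    simp [Multiset.count_bind, hl.eq_iff, Multiset.count_singleton, Multiset.count_nsmul]
  funext i
  rw [← hmult k, hP, hmult]

end PolynomialPreliminaries

section TopologicalPreliminaries

lemma exists_forall_eq_of_isClosed_fibers {X κ : Type*} [TopologicalSpace X] [PreconnectedSpace X]
    [Nonempty X] [Finite κ] (f : X → κ) (hf : ∀ k, IsClosed (f ⁻¹' {k})) : ∃ k, ∀ x, f x = k := by
  have hloc : IsLocallyConstant f := by
    let : TopologicalSpace κ := ⊥
    have : DiscreteTopology κ := ⟨rfl⟩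
    refine (IsLocallyConstant.iff_continuous f).2 (continuous_iff_isClosed.2 fun s _ => ?_)
    rw [← Set.biUnion_of_singleton s, Set.preimage_iUnion₂]
    exact s.toFinite.isClosed_biUnion fun k _ => hf k
  exact ⟨_, fun x => hloc.apply_eq_of_preconnectedSpace x (Classical.arbitrary X)⟩

theorem exists_eq_of_forall_exists_eq {X Y κ : Type*} [TopologicalSpace X] [PreconnectedSpace X]
    [Nonempty X] [TopologicalSpace Y] [T2Space Y] [Finite κ] {f : X → Y} {g : κ → X → Y}
    (hf : Continuous f) (hg : ∀ k, Continuous (g k)) (hinj : ∀ x, Function.Injective (g · x))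
    (h : ∀ x, ∃ k, f x = g k x) : ∃ k, f = g k := by
  choose k hk using h
  obtain ⟨k₀, hk₀⟩ := exists_forall_eq_of_isClosed_fibers k fun j => by
    convert! isClosed_eq hf (hg j) using 1
    ext x
    exact ⟨fun h => h ▸ hk x, fun h => hinj x ((hk x).symm.trans h)⟩
  exact ⟨k₀, funext fun x => hk₀ x ▸ hk x⟩

-- Additivity along the line makes the increments real-linear in `t`; comparing `F (r • x + t • y)`
-- for `r → 0` identifies the slope with `F y`, and homogeneity of `F` does the rest.
theorem apply_add_smul_of_additive {E V : Type*} [AddCommGroup E] [Module ℂ E] [TopologicalSpace E]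
    [ContinuousAdd E] [ContinuousSMul ℂ E] [AddCommGroup V] [Module ℂ V]
    [TopologicalSpace V] [IsTopologicalAddGroup V] [ContinuousSMul ℂ V] [T2Space V] {F : E → V}
    (hF : Continuous F) (hsmul : ∀ (c : ℂ) a, F (c • a) = c • F a) {x y : E}
    (hadd : ∀ s t : ℂ, F (x + (s + t) • y) - F x =
      (F (x + s • y) - F x) + (F (x + t • y) - F x)) (t : ℂ) :
    F (x + t • y) = F x + t • F y := by
  have : ContinuousSMul ℝ V := IsScalarTower.continuousSMul ℂ
  let g : ℂ →+ V := AddMonoidHom.mk' (fun t => F (x + t • y) - F x) hadd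
  have hg : Continuous g := by
    change Continuous fun t : ℂ => F (x + t • y) - F x
    fun_prop
  have hscale (r : ℝ) (hr : r ∈ ({0}ᶜ : Set ℝ)) :
      F ((r : ℂ) • x + t • y) = (r : ℂ) • F x + g t := by
    have hr : (r : ℂ) ≠ 0 := Complex.ofReal_ne_zero.2 hr
    calc F ((r : ℂ) • x + t • y)
        = (r : ℂ) • F (x + ((r : ℂ)⁻¹ * t) • y) := by
          rw [← hsmul, smul_add, smul_smul, mul_inv_cancel_left₀ hr]
      _ = (r : ℂ) • F x + r • g ((r : ℂ)⁻¹ * t) := by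
          rw [← Complex.coe_smul, ← smul_add]
          exact congrArg _ (add_sub_cancel _ _).symm
      _ = (r : ℂ) • F x + g t := by
          rw [← map_real_smul g hg, Complex.real_smul, mul_inv_cancel_left₀ hr]
  have hlimit : F (t • y) = g t := by
    have hleft : Continuous fun r : ℝ => F ((r : ℂ) • x + t • y) := by fun_prop
    have hright : Continuous fun r : ℝ => (r : ℂ) • F x + g t := by fun_prop
    simpa using congrFun (hleft.ext_on (dense_compl_singleton 0) hright hscale) 0
  rw [← hsmul, hlimit]
  exact (add_sub_cancel _ _).symm

end TopologicalPreliminaries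

section MatrixAlgebra

variable {ι R K : Type*} [Fintype ι] [DecidableEq ι] [CommRing R] [Field K]

/-- The conjugation `A ↦ S A S⁻¹`, as an automorphism of the matrix algebra. -/
def glConj (S : GL ι R) : Matrix ι ι R ≃ₐ[R] Matrix ι ι R :=
  MulSemiringAction.toAlgEquiv R _ (ConjAct.toConjAct S)

lemma glConj_apply (S : GL ι R) (A : Matrix ι ι R) :
    glConj S A = (S : Matrix ι ι R) * A * ((S⁻¹ : GL ι R) : Matrix ι ι R) := rfl

lemma glConj_val (S X : GL ι R) : glConj S (X : Matrix ι ι R) = (S * X * S⁻¹ : GL ι R) := rfl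

lemma glConj_one (A : Matrix ι ι R) : glConj 1 A = A := by
  simp [glConj_apply]

lemma glConj_mul (S T : GL ι R) (A : Matrix ι ι R) : glConj (S * T) A = glConj S (glConj T A) :=
  mul_smul (ConjAct.toConjAct S) (ConjAct.toConjAct T) A

lemma glConj_inv_glConj (S : GL ι R) (A : Matrix ι ι R) : glConj S⁻¹ (glConj S A) = A :=
  inv_smul_smul (ConjAct.toConjAct S) A

lemma glConj_glConj_inv (S : GL ι R) (A : Matrix ι ι R) : glConj S (glConj S⁻¹ A) = A :=
  smul_inv_smul (ConjAct.toConjAct S) A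

lemma exists_glConj_transpose (S : GL ι R) : ∃ T, ∀ A, (glConj S A)ᵀ = glConj T Aᵀ :=
  ⟨⟨S⁻¹.valᵀ, S.valᵀ, by simp [← transpose_mul], by simp [← transpose_mul]⟩, fun A => by
    simp [glConj_apply, transpose_mul, mul_assoc]⟩

lemma glConj_vecMulVec (S : GL ι R) (x y : ι → R) :
    glConj S (vecMulVec x y) = vecMulVec ((S : Matrix ι ι R) *ᵥ x) (y ᵥ* (S⁻¹ : GL ι R).val) := by
  rw [glConj_apply, mul_vecMulVec, vecMulVec_mul]

/-- The diagonal torus of the general linear group. -/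
def diagGL : (ι → Rˣ) →* GL ι R :=
  (Units.map (diagonalRingHom ι R).toMonoidHom).comp MulEquiv.piUnits.symm.toMonoidHom

lemma val_diagGL (l : ι → Rˣ) : (diagGL l : Matrix ι ι R) = diagonal fun i => (l i : R) := rfl

lemma glConj_diagGL_single (l : ι → Rˣ) (i j : ι) (a : R) :
    glConj (diagGL l) (single i j a) = single i j (l i * a * (l j)⁻¹.val) := by
  rw [glConj_apply, ← map_inv, val_diagGL, val_diagGL]
  ext
  simp only [diagonal_mul, mul_diagonal, single_apply, Pi.inv_apply]
  grind

/-- The transvection `v ↦ v + (y ⬝ v) x` along `x`, which is invertible since `y ⬝ x = 0`. -/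
def transvectionGL (x y : ι → R) (h : y ⬝ᵥ x = 0) : GL ι R where
  val := 1 + vecMulVec x y
  inv := 1 - vecMulVec x y
  val_inv := by simp [mul_sub, add_mul, vecMulVec_mul_vecMulVec, h]
  inv_val := by simp [mul_add, sub_mul, vecMulVec_mul_vecMulVec, h]

lemma transvectionGL_mulVec {x y : ι → R} (h : y ⬝ᵥ x = 0) (v : ι → R) :
    (transvectionGL x y h : Matrix ι ι R) *ᵥ v = v + (y ⬝ᵥ v) • x := by
  change (1 + vecMulVec x y) *ᵥ v = _
  rw [add_mulVec, one_mulVec, vecMulVec_mulVec, op_smul_eq_smul]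

lemma vecMul_transvectionGL_inv {x y : ι → R} (h : y ⬝ᵥ x = 0) (v : ι → R) :
    v ᵥ* ((transvectionGL x y h)⁻¹ : GL ι R).val = v - (v ⬝ᵥ x) • y := by
  change v ᵥ* (1 - vecMulVec x y) = _
  rw [vecMul_sub, vecMul_one, vecMul_vecMulVec]

lemma exists_GL_mulVec_single {x : ι → K} (hx : x ≠ 0) :
    ∃ (S : GL ι K) (i : ι), (S : Matrix ι ι K) *ᵥ Pi.single i 1 = x := by
  obtain ⟨i, hi⟩ := Function.ne_iff.1 hx
  have hdet : ((1 : Matrix ι ι K).updateCol i x).det = x i := by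
    rw [← cramer_apply, cramer_one, Module.End.one_apply]
  have hunit : IsUnit ((1 : Matrix ι ι K).updateCol i x) := by
    rwa [isUnit_iff_isUnit_det, hdet, isUnit_iff_ne_zero]
  refine ⟨hunit.unit, i, ?_⟩
  rw [mulVec_single_one]
  exact funext fun j => updateCol_self

lemma exists_mul_diagGL_mul_inv_eq_comp (σ : Equiv.Perm ι) :
    ∃ P : GL ι R, ∀ l, P * diagGL l * P⁻¹ = diagGL (l ∘ σ) := by
  refine ⟨Matrix.permMatrixHom.toHomUnits σ⁻¹, fun l => mul_inv_eq_of_eq_mul (Units.ext ?_)⟩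
  have hP : ((Matrix.permMatrixHom.toHomUnits σ⁻¹ : GL ι R) : Matrix ι ι R) = σ.permMatrix R := by
    change σ⁻¹⁻¹.permMatrix R = _
    rw [inv_inv]
  ext i j
  simp only [Units.val_mul, hP, val_diagGL, Matrix.mul_diagonal, Matrix.diagonal_mul,
    PEquiv.toMatrix_apply, Equiv.toPEquiv_apply]
  aesop

lemma eq_diagonal_of_commute [IsDomain R] {A : Matrix ι ι R} {l : ι → R} (hl : Function.Injective l)
    (h : Commute A (diagonal l)) : A = diagonal fun i => A i i := by
  ext i j
  obtain rfl | hij := eq_or_ne i j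
  · rw [diagonal_apply_eq]
  have hentry := congrFun (congrFun h.eq i) j
  rw [mul_diagonal, diagonal_mul] at hentry
  rw [diagonal_apply_ne _ hij]
  refine (mul_eq_zero.1 (?_ : A i j * (l j - l i) = 0)).resolve_right
    (sub_ne_zero.2 (hl.ne hij.symm))
  linear_combination hentry

lemma exists_eq_glConj_diagonal_of_injective {A : Matrix ι ι K} {l : ι → K}
    (hl : Function.Injective l) (h : ∀ i, l i ∈ spectrum K A) : ∃ S, A = glConj S (diagonal l) := by
  have heig (i : ι) : Module.End.HasEigenvalue (Matrix.toLin' A) (l i) := by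
    rw [Module.End.hasEigenvalue_iff_mem_spectrum, Matrix.spectrum_toLin']
    exact h i
  choose v hv using fun i => (heig i).exists_hasEigenvector
  have hS : IsUnit (Matrix.of v)ᵀ := Matrix.linearIndependent_cols_iff_isUnit.1
    (Module.End.eigenvectors_linearIndependent' _ l hl v hv)
  have hAS : A * hS.unit = hS.unit * diagonal l := by
    ext i j
    rw [Matrix.mul_diagonal]
    simpa [Matrix.mul_apply, Matrix.mulVec, dotProduct, mul_comm] using
      congrFun (hv j).apply_eq_smul i
  exact ⟨hS.unit, by rw [glConj_apply, ← hAS, Units.mul_inv_cancel_right]⟩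

lemma exists_eq_glConj_diagonal_of_separable [IsAlgClosed K] {A : Matrix ι ι K}
    (hA : A.charpoly.Separable) : ∃ S l, A = glConj S (diagonal l) := by
  classical
  have hcard : A.charpoly.roots.toFinset.card = Fintype.card ι := by
    rw [Multiset.toFinset_card_of_nodup (Polynomial.nodup_roots hA),
      ← (IsAlgClosed.splits A.charpoly).natDegree_eq_card_roots, A.charpoly_natDegree_eq_dim]
  let e := Finset.equivFinOfCardEq hcard
  let l (i : ι) : K := e.symm (Fintype.equivFin ι i)
  have hl : Function.Injective l :=
    Subtype.val_injective.comp (e.symm.injective.comp (Fintype.equivFin ι).injective)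
  obtain ⟨S, hS⟩ := exists_eq_glConj_diagonal_of_injective (A := A) hl fun i =>
    A.mem_spectrum_iff_isRoot_charpoly.2 <|
      Polynomial.isRoot_of_mem_roots (Multiset.mem_toFinset.1 (e.symm _).2)
  exact ⟨S, l, hS⟩

lemma exists_eval_charpoly_eq_prod [IsAlgClosed K] {A : Matrix ι ι K} {l : ι → K}
    (hl : Function.Injective l) (h : spectrum K A ⊆ Set.range l) :
    ∃ k : ι → Fin (Fintype.card ι + 1),
      ∀ z, A.charpoly.eval z = ∏ i, (z - l i) ^ (k i : ℕ) := by
  classical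
  let m (i : ι) := A.charpoly.roots.count (l i)
  have hm (i : ι) : m i < Fintype.card ι + 1 := by
    rw [Nat.lt_succ_iff, ← A.charpoly_natDegree_eq_dim]
    exact (Multiset.count_le_card _ _).trans A.charpoly.card_roots'
  have hsub : A.charpoly.roots.toFinset ⊆ Finset.univ.image l := fun z hz => by
    simpa using h (A.mem_spectrum_iff_isRoot_charpoly.2
      (Polynomial.isRoot_of_mem_roots (Multiset.mem_toFinset.1 hz)))
  refine ⟨fun i => ⟨m i, hm i⟩, fun z => ?_⟩
  calc A.charpoly.eval z
      = ∏ a ∈ A.charpoly.roots.toFinset, (z - a) ^ A.charpoly.roots.count a := by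
        conv_lhs => rw [(IsAlgClosed.splits A.charpoly).eq_prod_roots_of_monic A.charpoly_monic]
        simp [Finset.prod_multiset_map_count, Polynomial.eval_prod]
    _ = ∏ a ∈ Finset.univ.image l, (z - a) ^ A.charpoly.roots.count a :=
        Finset.prod_subset hsub fun a _ ha => by
          rw [Multiset.count_eq_zero_of_notMem (by simpa using ha), pow_zero]
    _ = ∏ i, (z - l i) ^ m i := Finset.prod_image hl.injOn

/-- The resultant of the universal characteristic polynomial and its derivative, as a polynomial in
the matrix entries; up to sign it is the discriminant of the characteristic polynomial. -/
noncomputable def charpolyResultant (ι R : Type*) [Fintype ι] [DecidableEq ι] [CommRing R] :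
    MvPolynomial (ι × ι) R :=
  (charpoly.univ R ι).resultant (charpoly.univ R ι).derivative (Fintype.card ι)
    (Fintype.card ι - 1)

lemma eval_charpolyResultant_ne_zero [CharZero K] (A : Matrix ι ι K) :
    (charpolyResultant ι K).eval (Function.uncurry A) ≠ 0 ↔ A.charpoly.Separable := by
  have hmap : (charpoly.univ K ι).map (MvPolynomial.eval (Function.uncurry A)) = A.charpoly :=
    charpoly.univ_map_eval₂Hom ι (RingHom.id K) _
  have hdeg : A.charpoly.derivative.natDegree = Fintype.card ι - 1 := by
    rw [Polynomial.natDegree_derivative, A.charpoly_natDegree_eq_dim]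
  rw [charpolyResultant, ← Polynomial.resultant_map_map, ← Polynomial.derivative_map, hmap, ← hdeg,
    ← A.charpoly_natDegree_eq_dim, ← isUnit_iff_ne_zero,
    Polynomial.isUnit_resultant_iff_isCoprime A.charpoly_monic, Polynomial.separable_def]

end MatrixAlgebra

section DiagonalJordanHom

variable {ι R : Type*} [Fintype ι] [DecidableEq ι] [CommRing R]

/-- A Jordan endomorphism of the matrix algebra, i.e. a linear map preserving squares, that fixes
the diagonal matrix units. -/
structure IsDiagonalJordanHom (Ψ : Matrix ι ι R →ₗ[R] Matrix ι ι R) : Prop where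
  map_mul_self : ∀ X, Ψ (X * X) = Ψ X * Ψ X
  map_single_self : ∀ k, Ψ (single k k 1) = single k k 1

namespace IsDiagonalJordanHom

variable {Ψ : Matrix ι ι R →ₗ[R] Matrix ι ι R} {i j k : ι}

lemma map_mul_add_mul (hΨ : IsDiagonalJordanHom Ψ) (X Y : Matrix ι ι R) :
    Ψ (X * Y + Y * X) = Ψ X * Ψ Y + Ψ Y * Ψ X := by
  have hexpand {R : Type _} [Ring R] (A B : R) :
      A * B + B * A = (A + B) * (A + B) - A * A - B * B := by noncomm_ring
  rw [hexpand, map_sub, map_sub, hΨ.map_mul_self, hΨ.map_mul_self, hΨ.map_mul_self, map_add,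
    ← hexpand]

lemma transpose_comp (hΨ : IsDiagonalJordanHom Ψ) :
    IsDiagonalJordanHom ((transposeLinearEquiv ι ι R R).toLinearMap ∘ₗ Ψ) where
  map_mul_self X := by simp [hΨ.map_mul_self, transpose_mul]
  map_single_self k := by simp [hΨ.map_single_self]

lemma apply_single (hΨ : IsDiagonalJordanHom Ψ) (hij : i ≠ j) :
    Ψ (single i j 1) =
      single i j (Ψ (single i j 1) i j) + single j i (Ψ (single i j 1) j i) := by
  have hleft := hΨ.map_mul_add_mul (single i i 1) (single i j 1)
  have hright := hΨ.map_mul_add_mul (single i j 1) (single j j 1)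
  simp only [hΨ.map_single_self, single_mul_single_same,
    single_mul_single_of_ne _ _ _ _ hij.symm, mul_one, add_zero] at hleft hright
  ext k l
  have hl := congrFun (congrFun hleft k) l
  have hr := congrFun (congrFun hright k) l
  simp only [← diagonal_single, Matrix.add_apply, diagonal_mul, mul_diagonal, Pi.single_apply,
    ite_mul, mul_ite, one_mul, mul_one, zero_mul, mul_zero] at hl hr
  simp only [Matrix.add_apply, single_apply]
  grind

lemma apply_single_mul_apply_single_swap (hΨ : IsDiagonalJordanHom Ψ) (hij : i ≠ j) :
    Ψ (single i j 1) i j * Ψ (single i j 1) j i = 0 := by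
  have h := hΨ.map_mul_self (single i j 1)
  rw [single_mul_single_of_ne _ _ _ _ hij.symm, map_zero, hΨ.apply_single hij] at h
  simpa [add_mul, mul_add, hij, hij.symm] using (congrFun (congrFun h i) i).symm

lemma apply_single_mul_add_eq_one (hΨ : IsDiagonalJordanHom Ψ) (hij : i ≠ j) :
    Ψ (single i j 1) i j * Ψ (single j i 1) j i +
      Ψ (single i j 1) j i * Ψ (single j i 1) i j = 1 := by
  have h := hΨ.map_mul_add_mul (single i j 1) (single j i 1)
  rw [hΨ.apply_single hij, hΨ.apply_single hij.symm] at h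
  simpa [add_mul, mul_add, hΨ.map_single_self, hij, hij.symm, mul_comm] using
    (congrFun (congrFun h i) i).symm

lemma apply_single_mul_apply_single (hΨ : IsDiagonalJordanHom Ψ) (hij : i ≠ j) (hjk : j ≠ k)
    (hik : i ≠ k) :
    Ψ (single i j 1) i j * Ψ (single j k 1) j k = Ψ (single i k 1) i k := by
  have h := hΨ.map_mul_add_mul (single i j 1) (single j k 1)
  rw [hΨ.apply_single hij, hΨ.apply_single hjk] at h
  simpa [add_mul, mul_add, hij, hij.symm, hjk, hjk.symm, hik, hik.symm] using
    (congrFun (congrFun h i) k).symm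

lemma apply_single_cocycle (hΨ : IsDiagonalJordanHom Ψ)
    (h : ∀ i j, i ≠ j → Ψ (single i j 1) j i = 0) (i j k : ι) :
    Ψ (single i j 1) i j * Ψ (single j k 1) j k = Ψ (single i k 1) i k := by
  have hdiag (i) : Ψ (single i i 1) i i = 1 := by simp [hΨ.map_single_self]
  obtain rfl | hij := eq_or_ne i j
  · rw [hdiag, one_mul]
  obtain rfl | hjk := eq_or_ne j k
  · rw [hdiag, mul_one]
  obtain rfl | hik := eq_or_ne i k
  · simpa [h i j hij, hdiag] using hΨ.apply_single_mul_add_eq_one hij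
  · exact hΨ.apply_single_mul_apply_single hij hjk hik

lemma exists_eq_glConj_of_swap_eq_zero (hΨ : IsDiagonalJordanHom Ψ)
    (h : ∀ i j, i ≠ j → Ψ (single i j 1) j i = 0) : ∃ S, ∀ X, Ψ X = glConj S X := by
  cases isEmpty_or_nonempty ι
  · exact ⟨1, fun X => Subsingleton.elim _ _⟩
  obtain ⟨o⟩ := ‹Nonempty ι›
  have hinv (i j) : Ψ (single i j 1) i j * Ψ (single j i 1) j i = 1 := by
    rw [hΨ.apply_single_cocycle h, hΨ.map_single_self, single_apply_same]
  let t (i : ι) : Rˣ := ⟨Ψ (single i o 1) i o, Ψ (single o i 1) o i, hinv i o, hinv o i⟩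
  refine ⟨diagGL t, fun X => LinearMap.congr_fun (f := Ψ) (g := (glConj (diagGL t)).toLinearMap)
    (ext_linearMap _ fun i j => LinearMap.ext_ring ?_) X⟩
  have hsingle : Ψ (single i j 1) = single i j (Ψ (single i j 1) i j) := by
    obtain rfl | hij := eq_or_ne i j
    · simp only [hΨ.map_single_self, single_apply_same]
    · conv_lhs => rw [hΨ.apply_single hij, h i j hij, single_zero, add_zero]
  change Ψ (single i j 1) = glConj (diagGL t) (single i j 1)
  rw [glConj_diagGL_single, hsingle, mul_one]
  exact congrArg _ (hΨ.apply_single_cocycle h i o j).symm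

lemma apply_single_ne_zero_of_swap_eq_zero [Nontrivial R] (hΨ : IsDiagonalJordanHom Ψ) (hij : i ≠ j)
    (h : Ψ (single i j 1) j i = 0) : Ψ (single i j 1) i j ≠ 0 := fun h' => by
  simpa [h, h'] using hΨ.apply_single_mul_add_eq_one hij

variable [IsDomain R]

lemma apply_single_swap_eq_zero_symm (hΨ : IsDiagonalJordanHom Ψ) (hij : i ≠ j)
    (h : Ψ (single i j 1) j i = 0) : Ψ (single j i 1) i j = 0 := by
  have hsum := hΨ.apply_single_mul_add_eq_one hij
  rw [h, zero_mul, add_zero] at hsum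
  exact (mul_eq_zero.1 (hΨ.apply_single_mul_apply_single_swap hij.symm)).resolve_left
    (right_ne_zero_of_mul_eq_one hsum)

lemma apply_single_swap_eq_zero_trans (hΨ : IsDiagonalJordanHom Ψ) (hij : i ≠ j) (hik : i ≠ k)
    (h : Ψ (single i j 1) j i = 0) : Ψ (single i k 1) k i = 0 := by
  by_contra hne
  have hjk : j ≠ k := fun hjk => hne (hjk ▸ h)
  have hik0 : Ψ (single i k 1) i k = 0 :=
    (mul_eq_zero.1 (hΨ.apply_single_mul_apply_single_swap hik)).resolve_right hne
  have hjk0 : Ψ (single j k 1) j k = 0 :=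
    (mul_eq_zero.1 ((hΨ.apply_single_mul_apply_single hij hjk hik).trans hik0)).resolve_left
      (hΨ.apply_single_ne_zero_of_swap_eq_zero hij h)
  have hkj0 : Ψ (single k j 1) j k = 0 :=
    (mul_eq_zero.1 ((hΨ.transpose_comp.apply_single_mul_apply_single hik hjk.symm hij).trans
      h)).resolve_left hne
  simpa [hjk0, hkj0] using hΨ.apply_single_mul_add_eq_one hjk

theorem exists_eq_glConj (hΨ : IsDiagonalJordanHom Ψ) :
    (∃ S, ∀ X, Ψ X = glConj S X) ∨ ∃ S, ∀ X, Ψ X = glConj S Xᵀ := by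
  by_cases h : ∃ i j, i ≠ j ∧ Ψ (single i j 1) j i = 0
  · obtain ⟨i, j, hij, h⟩ := h
    refine .inl (hΨ.exists_eq_glConj_of_swap_eq_zero fun k l hkl => ?_)
    obtain rfl | hik := eq_or_ne i k
    · exact hΨ.apply_single_swap_eq_zero_trans hij hkl h
    · exact hΨ.apply_single_swap_eq_zero_trans hik.symm hkl <|
        hΨ.apply_single_swap_eq_zero_symm hik (hΨ.apply_single_swap_eq_zero_trans hij hik h)
  · push Not at h
    obtain ⟨S, hS⟩ := hΨ.transpose_comp.exists_eq_glConj_of_swap_eq_zero fun i j hij =>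
      (mul_eq_zero.1 (hΨ.apply_single_mul_apply_single_swap hij)).resolve_right (h i j hij)
    obtain ⟨T, hT⟩ := exists_glConj_transpose S
    exact .inr ⟨T, fun X => by rw [← hT, ← hS]; simp⟩

end IsDiagonalJordanHom

end DiagonalJordanHom

section MatrixTopology

lemma continuous_of_curry {m n R : Type*} [TopologicalSpace R] :
    Continuous fun x : m × n → R => of (Function.curry x) :=
  continuous_matrix fun i j => continuous_apply (i, j)

lemma surjective_of_curry {m n R : Type*} :
    Function.Surjective fun x : m × n → R => of (Function.curry x) :=
  fun A => ⟨Function.uncurry A, rfl⟩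

variable {ι : Type*}

lemma isOpenEmbedding_units_val_pi [Finite ι] :
    Topology.IsOpenEmbedding (Pi.map fun _ => Units.val : (ι → ℂˣ) → ι → ℂ) :=
  .piMap fun _ => Units.isOpenEmbedding_val

instance [Finite ι] : Nonempty {l : ι → ℂˣ // Function.Injective l} := by
  refine ⟨fun i => Units.mk0 ((Finite.equivFin ι i + 1 : ℕ) : ℂ)
    (Nat.cast_ne_zero.2 (Nat.succ_ne_zero _)), fun i j h => ?_⟩
  simpa [Fin.val_inj] using congrArg Units.val h

lemma dense_setOf_injective_units [Finite ι] :
    Dense {l : ι → ℂˣ | Function.Injective l} := by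
  classical
  have := Fintype.ofFinite ι
  obtain ⟨l, hl⟩ : Nonempty {l : ι → ℂˣ // Function.Injective l} := inferInstance
  have hdense := dense_setOf_eval_ne_zero (a := Pi.map (fun _ => Units.val) l) <|
    (eval_distinctNonzeroPoly_ne_zero _).2 ⟨fun i => (l i).ne_zero, Units.val_injective.comp hl⟩
  exact (hdense.preimage isOpenEmbedding_units_val_pi.isOpenMap).mono fun m hm i j h =>
    ((eval_distinctNonzeroPoly_ne_zero _).1 hm).2 (congrArg Units.val h)

instance [Finite ι] : PreconnectedSpace {l : ι → ℂˣ // Function.Injective l} := by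
  classical
  have := Fintype.ofFinite ι
  refine Subtype.preconnectedSpace (s := {l : ι → ℂˣ | Function.Injective l}) ?_
  rw [← isOpenEmbedding_units_val_pi.isInducing.isPreconnected_image]
  convert! isPreconnected_setOf_eval_ne_zero (distinctNonzeroPoly ι ℂ) using 1
  ext l
  rw [Set.mem_ofPred, eval_distinctNonzeroPoly_ne_zero]
  constructor
  · rintro ⟨l, hl, rfl⟩
    exact ⟨fun i => (l i).ne_zero, Units.val_injective.comp hl⟩
  · rintro ⟨h0, hl⟩
    exact ⟨fun i => Units.mk0 _ (h0 i), fun i j h => hl (congrArg Units.val h), rfl⟩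

variable [Fintype ι] [DecidableEq ι]

lemma continuous_glConj {R : Type*} [CommRing R] [TopologicalSpace R] [IsTopologicalRing R]
    (S : GL ι R) : Continuous (glConj S) :=
  (continuous_const.mul continuous_id).mul continuous_const

section Norms

open scoped Matrix.Norms.Operator

lemma isOpenEmbedding_val_GL : Topology.IsOpenEmbedding (Units.val : GL ι ℂ → Matrix ι ι ℂ) :=
  Units.isOpenEmbedding_val

lemma exists_continuous_isUnit_smul_one_add :
    ∃ c : Matrix ι ι ℂ → ℂ, Continuous c ∧ ∀ A, IsUnit (c A • 1 + A) := by
  refine ⟨fun A => (‖A‖ * ‖(1 : Matrix ι ι ℂ)‖ + 1 : ℝ), by fun_prop, fun A => ?_⟩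
  by_contra h
  have hle := spectrum.norm_le_norm_mul_of_mem (spectrum.mem_iff.2
    (by rwa [sub_neg_eq_add, Algebra.algebraMap_eq_smul_one]) : _ ∈ spectrum ℂ (-A))
  rw [norm_neg, Complex.norm_of_nonneg (by positivity)] at hle
  linarith

end Norms

lemma range_val_GL {K : Type*} [Field K] :
    Set.range (Units.val : GL ι K → Matrix ι ι K) = {A | A.det ≠ 0} :=
  Set.ext fun A => (isUnit_iff_isUnit_det A).trans isUnit_iff_ne_zero

lemma continuous_diagGL : Continuous (diagGL : (ι → ℂˣ) → GL ι ℂ) :=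
  isOpenEmbedding_val_GL.isInducing.continuous_iff.2 <| Continuous.matrix_diagonal <|
    continuous_pi fun i => Units.continuous_val.comp (continuous_apply i)

theorem dense_setOf_charpoly_separable : Dense {A : Matrix ι ι ℂ | A.charpoly.Separable} := by
  let l (i : ι) : ℂ := (Fintype.equivFin ι i : ℕ)
  have hl : Function.Injective l := fun i j h => by simpa [l, Fin.val_inj] using h
  have hdiag : (charpolyResultant ι ℂ).eval (Function.uncurry (diagonal l)) ≠ 0 := by
    rw [eval_charpolyResultant_ne_zero, charpoly_diagonal, Polynomial.separable_prod_X_sub_C_iff]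
    exact hl
  refine (surjective_of_curry.denseRange.dense_image continuous_of_curry
    (dense_setOf_eval_ne_zero hdiag)).mono ?_
  rintro _ ⟨x, hx, rfl⟩
  exact (eval_charpolyResultant_ne_zero _).1 hx

theorem dense_setOf_eq_glConj_diagonal :
    Dense {A : Matrix ι ι ℂ | ∃ S l, A = glConj S (diagonal l)} :=
  dense_setOf_charpoly_separable.mono fun _ => exists_eq_glConj_diagonal_of_separable

theorem isPreconnected_setOf_det_ne_zero : IsPreconnected {A : Matrix ι ι ℂ | A.det ≠ 0} := by
  rw [← Set.image_preimage_eq {A : Matrix ι ι ℂ | A.det ≠ 0} surjective_of_curry]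
  refine IsPreconnected.image ?_ _ continuous_of_curry.continuousOn
  simpa only [eval_det_mvPolynomialX] using!
    isPreconnected_setOf_eval_ne_zero (mvPolynomialX ι ι ℂ).det

instance : PreconnectedSpace (GL ι ℂ) := by
  refine ⟨?_⟩
  rw [← isOpenEmbedding_val_GL.isInducing.isPreconnected_image, Set.image_univ, range_val_GL]
  exact isPreconnected_setOf_det_ne_zero

end MatrixTopology

section Preserver

variable {ι : Type*} [Fintype ι] [DecidableEq ι]

theorem eq_diagonal_of_commute_of_spectrum_subset {m : (ι → ℂˣ) → Matrix ι ι ℂ}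
    (hm : Continuous m) {l₀ : ι → ℂˣ} (hl₀ : Function.Injective l₀)
    (hm₀ : m l₀ = diagonal fun i => (l₀ i : ℂ)) (hcomm : ∀ l, Commute (m l) (m l₀))
    (hspec : ∀ l, spectrum ℂ (m l) ⊆ Set.range fun i => (l i : ℂ)) (l : ι → ℂˣ) :
    m l = diagonal fun i => (l i : ℂ) := by
  have hdiag (l : ι → ℂˣ) : m l = diagonal fun i => m l i i :=
    eq_diagonal_of_commute (Units.val_injective.comp hl₀) (hm₀ ▸ hcomm l)
  have hmem (l : ι → ℂˣ) (i : ι) : ∃ j, m l i i = l j := by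
    obtain ⟨j, hj⟩ := hspec l (by rw [hdiag l, spectrum_diagonal]; exact ⟨i, rfl⟩)
    exact ⟨j, hj.symm⟩
  have hentry (i : ι) (l : {l : ι → ℂˣ // Function.Injective l}) : m l i i = l.1 i := by
    obtain ⟨j, hj⟩ := exists_eq_of_forall_exists_eq (X := {l : ι → ℂˣ // Function.Injective l})
      (f := fun l => m l.1 i i) (g := fun j l => (l.1 j : ℂ))
      ((hm.matrix_elem i i).comp continuous_subtype_val)
      (fun j => Units.continuous_val.comp ((continuous_apply j).comp continuous_subtype_val))
      (fun l => Units.val_injective.comp l.2) (fun l => hmem l i)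
    have hij : i = j := hl₀ <| Units.val_injective <| by
      simpa [hm₀] using congrFun hj ⟨l₀, hl₀⟩
    exact hij ▸ congrFun hj l
  have hcont : Continuous fun l : ι → ℂˣ => (diagonal fun i => (l i : ℂ) : Matrix ι ι ℂ) :=
    Units.continuous_val.comp continuous_diagGL
  refine congrFun (hm.ext_on dense_setOf_injective_units hcont fun l hl => ?_) l
  rw [hdiag l]
  exact congrArg diagonal (funext fun i => hentry i ⟨l, hl⟩)

/-- The continuous, commutativity-preserving, spectrum-shrinking maps `GL(n) → M_n`, with `GL(n)`
as a group of units; its unit topology coincides with the subspace topology. -/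
structure IsContinuousPreserver (φ : GL ι ℂ → Matrix ι ι ℂ) : Prop where
  continuous : Continuous φ
  map_commute : ∀ X Y, Commute X Y → Commute (φ X) (φ Y)
  spectrum_subset : ∀ X, spectrum ℂ (φ X) ⊆ spectrum ℂ (X : Matrix ι ι ℂ)

/-- The maps `M_n → M_n` that send matrices with a common eigenbasis `S` to matrices with a common
eigenbasis `T`, keeping the eigenvalue of each eigenvector. -/
structure IsFramePreserving (ρ : Matrix ι ι ℂ → Matrix ι ι ℂ) : Prop where
  continuous : Continuous ρ
  exists_apply_glConj_diagonal : ∀ S, ∃ T, ∀ d, ρ (glConj S (diagonal d)) = glConj T (diagonal d)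

namespace IsContinuousPreserver

variable {φ : GL ι ℂ → Matrix ι ι ℂ}

lemma spectrum_apply_conj_subset (hφ : IsContinuousPreserver φ) (S : GL ι ℂ) (l : ι → ℂˣ) :
    spectrum ℂ (φ (S * diagGL l * S⁻¹)) ⊆ Set.range fun i => (l i : ℂ) := by
  refine (hφ.spectrum_subset _).trans ?_
  rw [← glConj_val, AlgEquiv.spectrum_eq, val_diagGL, spectrum_diagonal]

lemma exists_forall_eval_charpoly_eq_prod (hφ : IsContinuousPreserver φ) :
    ∃ k : ι → ℕ, ∀ (S : GL ι ℂ) (l : ι → ℂˣ), Function.Injective l →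
      ∀ z, (φ (S * diagGL l * S⁻¹)).charpoly.eval z = ∏ i, (z - l i) ^ k i := by
  let X (p : GL ι ℂ × {l : ι → ℂˣ // Function.Injective l}) : GL ι ℂ :=
    p.1 * diagGL p.2.1 * p.1⁻¹
  have hX : Continuous X := (continuous_fst.mul
    (continuous_diagGL.comp (continuous_subtype_val.comp continuous_snd))).mul continuous_fst.inv
  have hval (l : {l : ι → ℂˣ // Function.Injective l}) : Function.Injective fun i => (l.1 i : ℂ) :=
    Units.val_injective.comp l.2
  let f (p : GL ι ℂ × {l : ι → ℂˣ // Function.Injective l}) (z : ℂ) : ℂ :=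
    (φ (X p)).charpoly.eval z
  let g (k : ι → Fin (Fintype.card ι + 1)) (p : GL ι ℂ × {l : ι → ℂˣ // Function.Injective l})
      (z : ℂ) : ℂ := ∏ i, (z - p.2.1 i) ^ (k i : ℕ)
  have hf : Continuous f := continuous_pi fun z => by
    simp only [f, eval_charpoly]
    exact (continuous_const.sub (hφ.continuous.comp hX)).matrix_det
  have hg (k : ι → Fin (Fintype.card ι + 1)) : Continuous (g k) := continuous_pi fun z =>
    continuous_finsetProd _ fun i _ => (continuous_const.sub (Units.continuous_val.comp
      ((continuous_apply i).comp (continuous_subtype_val.comp continuous_snd)))).pow _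
  have hginj (p) : Function.Injective (g · p) := fun k m h =>
    funext fun i => Fin.val_injective (congrFun (prod_sub_pow_injective (hval p.2) h) i)
  have hfg (p) : ∃ k, f p = g k p := (exists_eval_charpoly_eq_prod (hval p.2)
    (hφ.spectrum_apply_conj_subset p.1 p.2.1)).imp fun _ => funext
  obtain ⟨k, hk⟩ := exists_eq_of_forall_exists_eq hf hg hginj hfg
  exact ⟨fun i => k i, fun S l hl z => congrFun (congrFun hk (S, ⟨l, hl⟩)) z⟩

-- Conjugating by permutation matrices makes all the exponents equal, and one of them is nonzero.
lemma mem_spectrum_apply_conj (hφ : IsContinuousPreserver φ) (S : GL ι ℂ) {l : ι → ℂˣ}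
    (hl : Function.Injective l) (j : ι) : (l j : ℂ) ∈ spectrum ℂ (φ (S * diagGL l * S⁻¹)) := by
  obtain ⟨k, hk⟩ := hφ.exists_forall_eval_charpoly_eq_prod
  have hconst (i : ι) : k i = k j := by
    let σ := Equiv.swap i j
    obtain ⟨P, hP⟩ := exists_mul_diagGL_mul_inv_eq_comp (R := ℂ) σ
    have hkσ : k = k ∘ σ := by
      refine prod_sub_pow_injective (Units.val_injective.comp hl) (funext fun z => ?_)
      calc ∏ i, (z - l i) ^ k i
          = (φ (S * P * diagGL l * (S * P)⁻¹)).charpoly.eval z := (hk _ l hl z).symm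
        _ = (φ (S * diagGL (l ∘ σ) * S⁻¹)).charpoly.eval z := by
          rw [← hP]; simp only [mul_assoc, _root_.mul_inv_rev]
        _ = ∏ i, (z - l (σ i)) ^ k i := hk S _ (hl.comp σ.injective) z
        _ = ∏ i, (z - l i) ^ k (σ i) := by
          rw [← Equiv.prod_comp σ]; simp [σ]
    simpa [σ] using congrFun hkσ i
  have hk0 : k j ≠ 0 := fun h0 => by
    have : Nonempty ι := ⟨j⟩
    obtain ⟨c, hc⟩ :=
      spectrum.nonempty_of_isAlgClosed_of_finiteDimensional ℂ (φ (S * diagGL l * S⁻¹))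
    have hroot := hk S l hl c
    rw [(mem_spectrum_iff_isRoot_charpoly.1 hc).eq_zero] at hroot
    simp [hconst, h0] at hroot
  rw [mem_spectrum_iff_isRoot_charpoly, Polynomial.IsRoot, hk S l hl]
  exact Finset.prod_eq_zero (Finset.mem_univ j) (by simp [hk0])

lemma exists_apply_conj_diagGL (hφ : IsContinuousPreserver φ) (S : GL ι ℂ) :
    ∃ T, ∀ l : ι → ℂˣ, φ (S * diagGL l * S⁻¹) = glConj T (diagonal fun i => (l i : ℂ)) := by
  obtain ⟨l₀, hl₀⟩ : Nonempty {l : ι → ℂˣ // Function.Injective l} := inferInstance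
  obtain ⟨T, hT⟩ := exists_eq_glConj_diagonal_of_injective (Units.val_injective.comp hl₀)
    (hφ.mem_spectrum_apply_conj S hl₀)
  let m (l : ι → ℂˣ) : Matrix ι ι ℂ := glConj T⁻¹ (φ (S * diagGL l * S⁻¹))
  have hm : Continuous m := (continuous_glConj _).comp <|
    hφ.continuous.comp <| (continuous_const.mul continuous_diagGL).mul continuous_const
  have hm₀ : m l₀ = diagonal fun i => (l₀ i : ℂ) :=
    (congrArg _ hT).trans (glConj_inv_glConj T _)
  have hcomm (l : ι → ℂˣ) : Commute (m l) (m l₀) := (hφ.map_commute _ _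
    (((Commute.all l l₀).map diagGL).map (MulAut.conj S))).map (glConj T⁻¹)
  have hspec (l : ι → ℂˣ) : spectrum ℂ (m l) ⊆ Set.range fun i => (l i : ℂ) := by
    rw [AlgEquiv.spectrum_eq]
    exact hφ.spectrum_apply_conj_subset S l
  refine ⟨T, fun l => ?_⟩
  rw [← eq_diagonal_of_commute_of_spectrum_subset hm hl₀ hm₀ hcomm hspec l, glConj_glConj_inv]

lemma exists_apply_eq_glConj_diagonal (hφ : IsContinuousPreserver φ) (S : GL ι ℂ) :
    ∃ T, ∀ (X : GL ι ℂ) (d : ι → ℂ), (X : Matrix ι ι ℂ) = glConj S (diagonal d) →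
      φ X = glConj T (diagonal d) := by
  obtain ⟨T, hT⟩ := hφ.exists_apply_conj_diagGL S
  refine ⟨T, fun X d hX => ?_⟩
  have hd : IsUnit (diagonal d) := by
    rw [← glConj_inv_glConj S (diagonal d), ← hX, glConj_val]
    exact Units.isUnit _
  rw [isUnit_diagonal, Pi.isUnit_iff] at hd
  have hXl : X = S * diagGL (fun i => (hd i).unit) * S⁻¹ := Units.ext hX
  rw [hXl, hT]
  rfl

-- `A ↦ φ (c(A) + A) - c(A)` makes sense on every matrix once `c(A)` is large, and it agrees with
-- `φ` on invertible diagonalizable matrices since eigenbases are not affected by adding a scalar.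
theorem exists_isFramePreserving_extension (hφ : IsContinuousPreserver φ) :
    ∃ ρ, IsFramePreserving ρ ∧ ∀ X : GL ι ℂ, φ X = ρ X := by
  obtain ⟨c, hc, hunit⟩ := exists_continuous_isUnit_smul_one_add (ι := ι)
  let ρ (A : Matrix ι ι ℂ) : Matrix ι ι ℂ := φ (hunit A).unit - c A • 1
  have hρ : Continuous ρ := by
    refine (hφ.continuous.comp (isOpenEmbedding_val_GL.isInducing.continuous_iff.2 ?_)).sub
      (hc.smul continuous_const)
    exact (hc.smul continuous_const).add continuous_id
  have hglue {S T : GL ι ℂ} (hT : ∀ (X : GL ι ℂ) (d : ι → ℂ),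
      (X : Matrix ι ι ℂ) = glConj S (diagonal d) → φ X = glConj T (diagonal d)) (d : ι → ℂ) :
      ρ (glConj S (diagonal d)) = glConj T (diagonal d) := by
    have hshift (c : ℂ) (R : GL ι ℂ) :
        c • 1 + glConj R (diagonal d) = glConj R (diagonal fun i => c + d i) := by
      rw [← diagonal_add, map_add, ← smul_one_eq_diagonal, map_smul, map_one]
    refine sub_eq_iff_eq_add'.2 ?_
    rw [hshift _ T]
    exact hT _ _ (hshift _ S)
  refine ⟨ρ, ⟨hρ, fun S => ?_⟩, congrFun (g := ρ ∘ Units.val) ?_⟩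
  · exact (hφ.exists_apply_eq_glConj_diagonal S).imp fun _ => hglue
  · refine hφ.continuous.ext_on
      (dense_setOf_eq_glConj_diagonal.preimage isOpenEmbedding_val_GL.isOpenMap)
      (hρ.comp Units.continuous_val) ?_
    rintro X ⟨S, d, hX⟩
    obtain ⟨T, hT⟩ := hφ.exists_apply_eq_glConj_diagonal S
    rw [Function.comp_apply, hT X d hX, ← hglue hT, ← hX]

end IsContinuousPreserver

end Preserver

section FramePreserving

variable {ι : Type*} [Fintype ι] [DecidableEq ι]

namespace IsFramePreserving

variable {ρ : Matrix ι ι ℂ → Matrix ι ι ℂ}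

lemma comp_glConj (hρ : IsFramePreserving ρ) (R : GL ι ℂ) :
    IsFramePreserving fun A => ρ (glConj R A) where
  continuous := hρ.continuous.comp (continuous_glConj R)
  exists_apply_glConj_diagonal S := by
    simpa only [← glConj_mul] using hρ.exists_apply_glConj_diagonal (R * S)

lemma comp_transpose (hρ : IsFramePreserving ρ) : IsFramePreserving fun A => ρ Aᵀ where
  continuous := hρ.continuous.comp continuous_id.matrix_transpose
  exists_apply_glConj_diagonal S := by
    obtain ⟨R, hR⟩ := exists_glConj_transpose S
    simpa only [hR, diagonal_transpose] using hρ.exists_apply_glConj_diagonal R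

lemma apply_aeval (hρ : IsFramePreserving ρ) (p : Polynomial ℂ) (A : Matrix ι ι ℂ) :
    ρ (Polynomial.aeval A p) = Polynomial.aeval (ρ A) p := by
  refine congrFun (f := fun A => ρ (Polynomial.aeval A p)) (Continuous.ext_on
    dense_setOf_eq_glConj_diagonal (hρ.continuous.comp p.continuous_aeval)
    (p.continuous_aeval.comp hρ.continuous) ?_) A
  rintro _ ⟨S, d, rfl⟩
  obtain ⟨T, hT⟩ := hρ.exists_apply_glConj_diagonal S
  have haeval (R : GL ι ℂ) : Polynomial.aeval (glConj R (diagonal d)) p =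
      glConj R (diagonal (Polynomial.aeval d p)) := by
    rw [Polynomial.aeval_algHom_apply]
    exact congrArg _ (Polynomial.aeval_algHom_apply (diagonalAlgHom ℂ) d p)
  simp only [Function.comp_apply, haeval, hT]

lemma apply_smul (hρ : IsFramePreserving ρ) (c : ℂ) (A : Matrix ι ι ℂ) : ρ (c • A) = c • ρ A := by
  simpa using hρ.apply_aeval (c • .X : Polynomial ℂ) A

lemma apply_mul_self (hρ : IsFramePreserving ρ) (A : Matrix ι ι ℂ) : ρ (A * A) = ρ A * ρ A := by
  simpa using hρ.apply_aeval (.X * .X : Polynomial ℂ) A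

lemma apply_one (hρ : IsFramePreserving ρ) : ρ 1 = 1 := by
  simpa using hρ.apply_aeval 1 0

lemma apply_glConj_diagonal_eq_sum (hρ : IsFramePreserving ρ) (S : GL ι ℂ) (d : ι → ℂ) :
    ρ (glConj S (diagonal d)) = ∑ k, d k • ρ (glConj S (single k k 1)) := by
  obtain ⟨T, hT⟩ := hρ.exists_apply_glConj_diagonal S
  have hd : diagonal d = ∑ k, d k • diagonal (Pi.single k (1 : ℂ)) := by
    simp only [diagonal_single, smul_single, smul_eq_mul, mul_one, sum_single_eq_diagonal]
  simp only [← diagonal_single, hT]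
  rw [hd, map_sum]
  simp only [map_smul]

lemma apply_row_eq_one_sub_sum (hρ : IsFramePreserving ρ) {i : ι} {a : ι → ℂ} (ha : a i = 1) :
    ρ (vecMulVec (Pi.single i 1) a) = 1 - ∑ k ∈ Finset.univ.erase i,
      ρ (vecMulVec (Pi.single k 1 - a k • Pi.single i 1) (Pi.single k 1)) := by
  let S := transvectionGL (Pi.single i 1) (Pi.single i 1 - a) (by simp [ha])
  have hS (k : ι) : glConj S (single k k 1) = vecMulVec
      (Pi.single k 1 + (Pi.single i 1 - a : ι → ℂ) k • Pi.single i 1)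
      (Pi.single k 1 - (Pi.single k 1 : ι → ℂ) i • (Pi.single i 1 - a)) := by
    rw [single_eq_single_vecMulVec_single, glConj_vecMulVec, transvectionGL_mulVec,
      vecMul_transvectionGL_inv, dotProduct_single_one, dotProduct_single_one]
  have hsum : ∑ k, ρ (glConj S (single k k 1)) = 1 := by
    simpa [hρ.apply_one] using (hρ.apply_glConj_diagonal_eq_sum S 1).symm
  rw [← Finset.add_sum_erase _ _ (Finset.mem_univ i)] at hsum
  rw [eq_sub_iff_add_eq, ← hsum]
  congr 1
  · simp [hS, ha]
  · refine Finset.sum_congr rfl fun k hk => ?_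
    have hki : k ≠ i := Finset.ne_of_mem_erase hk
    simp [hS, hki, hki.symm, sub_eq_add_neg]

lemma apply_row_add_single_sub (hρ : IsFramePreserving ρ) {i k : ι} (hik : i ≠ k) {a : ι → ℂ}
    (ha : a i = 1) (t : ℂ) :
    ρ (vecMulVec (Pi.single i 1) (a + Pi.single k t)) - ρ (vecMulVec (Pi.single i 1) a) =
      ρ (vecMulVec (Pi.single k 1 - a k • Pi.single i 1) (Pi.single k 1)) -
        ρ (vecMulVec (Pi.single k 1 - (a k + t) • Pi.single i 1) (Pi.single k 1)) := by
  rw [hρ.apply_row_eq_one_sub_sum ha, hρ.apply_row_eq_one_sub_sum (by simp [ha, hik]),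
    sub_sub_sub_cancel_left, ← Finset.sum_sub_distrib,
    Finset.sum_eq_single_of_mem k (by simp [hik.symm]) fun m _ hm => by simp [hm]]
  simp

lemma apply_row_add_single_sub_congr (hρ : IsFramePreserving ρ) {i k : ι} (hik : i ≠ k)
    {a b : ι → ℂ} (ha : a i = 1) (hb : b i = 1) (hab : a k = b k) (t : ℂ) :
    ρ (vecMulVec (Pi.single i 1) (a + Pi.single k t)) - ρ (vecMulVec (Pi.single i 1) a) =
      ρ (vecMulVec (Pi.single i 1) (b + Pi.single k t)) - ρ (vecMulVec (Pi.single i 1) b) := by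
  rw [hρ.apply_row_add_single_sub hik ha, hρ.apply_row_add_single_sub hik hb, hab]

-- Conjugating by a transvection adds `s` times the `j`-th entry of a row, `j` a third index, to its
-- `k`-th entry. An increment of `ρ` along `k` does not depend on the `j`-th entry, neither before
-- nor after this shift, so it is the same at the `k`-th entries `0` and `s`.
lemma apply_row_add_single_add (hρ : IsFramePreserving ρ) (hcard : 3 ≤ Fintype.card ι) {i k : ι}
    (hik : i ≠ k) (s t : ℂ) :
    ρ (vecMulVec (Pi.single i 1) (Pi.single i 1 + Pi.single k (s + t))) -
        ρ (vecMulVec (Pi.single i 1) (Pi.single i 1)) =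
      (ρ (vecMulVec (Pi.single i 1) (Pi.single i 1 + Pi.single k s)) -
        ρ (vecMulVec (Pi.single i 1) (Pi.single i 1))) +
      (ρ (vecMulVec (Pi.single i 1) (Pi.single i 1 + Pi.single k t)) -
        ρ (vecMulVec (Pi.single i 1) (Pi.single i 1))) := by
  obtain ⟨j, hji, hjk⟩ : ∃ j, j ≠ i ∧ j ≠ k := by
    obtain ⟨j, hj⟩ := Finset.exists_mem_notMem_of_card_lt_card
      (Finset.card_le_two.trans_lt hcard : ({i, k} : Finset ι).card < Finset.univ.card)
    exact ⟨j, by simpa using hj⟩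
  let R := transvectionGL (Pi.single j 1) (-Pi.single k s) (by simp [hjk])
  have hR (a : ι → ℂ) : ρ (glConj R (vecMulVec (Pi.single i 1) a)) =
      ρ (vecMulVec (Pi.single i 1) (a + Pi.single k (s * a j))) := by
    rw [glConj_vecMulVec, transvectionGL_mulVec, vecMul_transvectionGL_inv]
    simp [hik.symm, ← Pi.single_smul, mul_comm]
  have hshift := (hρ.comp_glConj R).apply_row_add_single_sub_congr hik
    (a := Pi.single i 1 + Pi.single j 1) (b := Pi.single i 1) (by simp [hji.symm]) (by simp)
    (by simp [hjk.symm]) t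
  simp only [hR] at hshift
  have hF := hρ.apply_row_add_single_sub_congr hik
    (a := Pi.single i 1 + Pi.single j 1 + Pi.single k s) (b := Pi.single i 1 + Pi.single k s)
    (by simp [hji.symm, hik]) (by simp [hik]) (by simp [hjk.symm]) t
  rw [add_right_comm] at hF
  have hstep : ρ (vecMulVec (Pi.single i 1) (Pi.single i 1 + Pi.single k s + Pi.single k t)) -
        ρ (vecMulVec (Pi.single i 1) (Pi.single i 1 + Pi.single k s)) =
      ρ (vecMulVec (Pi.single i 1) (Pi.single i 1 + Pi.single k t)) -
        ρ (vecMulVec (Pi.single i 1) (Pi.single i 1)) := by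
    rw [← hF]
    simpa [hji, hjk] using hshift
  rw [Pi.single_add, ← add_assoc, ← hstep]
  abel

lemma apply_row_add_single (hρ : IsFramePreserving ρ) (hcard : 3 ≤ Fintype.card ι) {i k : ι}
    (hik : i ≠ k) (t : ℂ) :
    ρ (vecMulVec (Pi.single i 1) (Pi.single i 1 + Pi.single k t)) =
      ρ (vecMulVec (Pi.single i 1) (Pi.single i 1)) +
        t • ρ (vecMulVec (Pi.single i 1) (Pi.single k 1)) := by
  have hline (s : ℂ) : s • (Pi.single k 1 : ι → ℂ) = Pi.single k s := by simp [← Pi.single_smul]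
  simpa only [hline] using apply_add_smul_of_additive
    (F := fun a => ρ (vecMulVec (Pi.single i 1) a)) (x := Pi.single i 1) (y := Pi.single k 1)
    (hρ.continuous.comp (continuous_const.matrix_vecMulVec continuous_id))
    (fun c a => by rw [vecMulVec_smul, hρ.apply_smul])
    (fun s t => by simpa only [hline] using hρ.apply_row_add_single_add hcard hik s t) t

lemma apply_row_eq_sum_of_apply_eq_one (hρ : IsFramePreserving ρ) (hcard : 3 ≤ Fintype.card ι)
    {i : ι} {a : ι → ℂ} (ha : a i = 1) : ρ (vecMulVec (Pi.single i 1) a) =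
      ∑ k, a k • ρ (vecMulVec (Pi.single i 1) (Pi.single k 1)) := by
  have hterm (k : ι) (hk : k ∈ Finset.univ.erase i) :
      a k • ρ (vecMulVec (Pi.single i 1) (Pi.single k 1)) =
        ρ (vecMulVec (Pi.single k 1) (Pi.single k 1)) -
          ρ (vecMulVec (Pi.single k 1 - a k • Pi.single i 1) (Pi.single k 1)) := by
    have hik : i ≠ k := (Finset.ne_of_mem_erase hk).symm
    have hincr := hρ.apply_row_add_single_sub hik (Pi.single_eq_same i 1) (a k)
    rw [hρ.apply_row_add_single hcard hik, add_sub_cancel_left] at hincr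
    simpa [hik] using hincr
  have hbase : ρ (vecMulVec (Pi.single i 1) (Pi.single i 1)) =
      1 - ∑ k ∈ Finset.univ.erase i, ρ (vecMulVec (Pi.single k 1) (Pi.single k 1)) := by
    rw [hρ.apply_row_eq_one_sub_sum (Pi.single_eq_same i 1)]
    exact congrArg _ (Finset.sum_congr rfl fun k hk => by simp [Finset.ne_of_mem_erase hk])
  rw [← Finset.add_sum_erase _ _ (Finset.mem_univ i), ha, one_smul, Finset.sum_congr rfl hterm,
    Finset.sum_sub_distrib, hbase, hρ.apply_row_eq_one_sub_sum ha]
  abel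

lemma apply_row_eq_sum (hρ : IsFramePreserving ρ) (hcard : 3 ≤ Fintype.card ι) (i : ι)
    (a : ι → ℂ) : ρ (vecMulVec (Pi.single i 1) a) =
      ∑ k, a k • ρ (vecMulVec (Pi.single i 1) (Pi.single k 1)) := by
  let F (a : ι → ℂ) : Matrix ι ι ℂ := ρ (vecMulVec (Pi.single i 1) a)
  have hF : Continuous F := hρ.continuous.comp (continuous_const.matrix_vecMulVec continuous_id)
  have hne {a : ι → ℂ} (ha : a i ≠ 0) : F a = ∑ k, a k • F (Pi.single k 1) := by
    have hscaled := hρ.apply_row_eq_sum_of_apply_eq_one hcard (i := i)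
      (a := (a i)⁻¹ • a) (by simp [ha])
    rw [vecMulVec_smul, hρ.apply_smul, inv_smul_eq_iff₀ ha, Finset.smul_sum] at hscaled
    simpa [smul_smul, ha] using hscaled
  have hdense : Dense {a : ι → ℂ | a i ≠ 0} := (dense_compl_singleton 0).preimage (isOpenMap_eval i)
  exact congrFun (hF.ext_on hdense (by fun_prop) fun a => hne) a

lemma isLinearMap_vecMulVec_right (hρ : IsFramePreserving ρ) (hcard : 3 ≤ Fintype.card ι)
    (x : ι → ℂ) : IsLinearMap ℂ fun y => ρ (vecMulVec x y) := by
  rcases eq_or_ne x 0 with rfl | hx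
  · have hzero : ρ 0 = 0 := by simpa using hρ.apply_smul 0 0
    constructor <;> simp [hzero]
  · obtain ⟨S, i, rfl⟩ := exists_GL_mulVec_single hx
    have hrow (y : ι → ℂ) : ρ (vecMulVec (S.val *ᵥ Pi.single i 1) y) = ∑ k,
        (y ᵥ* S.val) k • ρ (glConj S (vecMulVec (Pi.single i 1) (Pi.single k 1))) := by
      rw [← (hρ.comp_glConj S).apply_row_eq_sum hcard, glConj_vecMulVec, vecMul_vecMul,
        Units.mul_inv, vecMul_one]
    rw [funext hrow]
    constructor
    · intro y z
      simp only [add_vecMul, Pi.add_apply, add_smul, Finset.sum_add_distrib]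
    · intro c y
      simp only [smul_vecMul, Pi.smul_apply, smul_assoc, Finset.smul_sum]

lemma isLinearMap_vecMulVec_left (hρ : IsFramePreserving ρ) (hcard : 3 ≤ Fintype.card ι)
    (y : ι → ℂ) : IsLinearMap ℂ fun x => ρ (vecMulVec x y) := by
  simpa only [transpose_vecMulVec] using hρ.comp_transpose.isLinearMap_vecMulVec_right hcard y

theorem isLinearMap (hρ : IsFramePreserving ρ) (hcard : 3 ≤ Fintype.card ι) :
    IsLinearMap ℂ ρ := by
  let Ψ : Matrix ι ι ℂ →ₗ[ℂ] Matrix ι ι ℂ :=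
    (stdBasis ℂ ι ι).constr ℂ fun p => ρ (single p.1 p.2 1)
  let B : (ι → ℂ) →ₗ[ℂ] (ι → ℂ) →ₗ[ℂ] Matrix ι ι ℂ :=
    LinearMap.mk₂ ℂ (fun x y => ρ (vecMulVec x y))
      (fun x₁ x₂ y => (hρ.isLinearMap_vecMulVec_left hcard y).map_add x₁ x₂)
      (fun c x y => (hρ.isLinearMap_vecMulVec_left hcard y).map_smul c x)
      (fun x => (hρ.isLinearMap_vecMulVec_right hcard x).map_add)
      (fun c x => (hρ.isLinearMap_vecMulVec_right hcard x).map_smul c)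
  have hΨB : (vecMulVecBilin ℂ ℂ).compr₂ Ψ = B := by
    ext i j : 4
    have := (stdBasis ℂ ι ι).constr_basis ℂ (fun p => ρ (single p.1 p.2 1)) (i, j)
    simpa [B, Ψ, stdBasis_eq_single, single_eq_single_vecMulVec_single] using this
  have hΨ (x y : ι → ℂ) : Ψ (vecMulVec x y) = ρ (vecMulVec x y) := LinearMap.congr_fun₂ hΨB x y
  have hframe (S : GL ι ℂ) (k : ι) : Ψ (glConj S (single k k 1)) = ρ (glConj S (single k k 1)) := by
    rw [single_eq_single_vecMulVec_single, glConj_vecMulVec, hΨ]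
  suffices ρ = Ψ from this ▸ Ψ.isLinear
  refine hρ.continuous.ext_on dense_setOf_eq_glConj_diagonal Ψ.continuous_of_finiteDimensional ?_
  rintro _ ⟨S, d, rfl⟩
  rw [hρ.apply_glConj_diagonal_eq_sum, ← sum_single_eq_diagonal d]
  simp only [← hframe, ← map_smul, ← map_sum, smul_single, smul_eq_mul, mul_one]

theorem exists_eq_glConj (hρ : IsFramePreserving ρ) (hcard : 3 ≤ Fintype.card ι) :
    ∃ T, (∀ X, ρ X = glConj T X) ∨ ∀ X, ρ X = glConj T Xᵀ := by
  obtain ⟨T, hT⟩ := hρ.exists_apply_glConj_diagonal 1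
  let Ψ : Matrix ι ι ℂ →ₗ[ℂ] Matrix ι ι ℂ :=
    (glConj T⁻¹).toLinearMap ∘ₗ (hρ.isLinearMap hcard).mk' ρ
  have hΨ (X : Matrix ι ι ℂ) : ρ X = glConj T (Ψ X) := (glConj_glConj_inv T (ρ X)).symm
  have hJordan : IsDiagonalJordanHom Ψ := by
    refine ⟨fun X => (glConj T).injective ?_, fun k => (glConj T).injective ?_⟩
    · rw [map_mul (glConj T), ← hΨ, ← hΨ, hρ.apply_mul_self]
    · rw [← hΨ, ← diagonal_single, ← hT, glConj_one]
  obtain ⟨S, hS⟩ | ⟨S, hS⟩ := hJordan.exists_eq_glConj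
  · exact ⟨T * S, .inl fun X => by rw [hΨ, hS, glConj_mul]⟩
  · exact ⟨T * S, .inr fun X => by rw [hΨ, hS, glConj_mul]⟩

end IsFramePreserving

end FramePreserving

theorem preserver_GLn_general {ι : Type*} [Fintype ι] [DecidableEq ι] (hcard : 3 ≤ Fintype.card ι)
    (φ : {X : Matrix ι ι ℂ // IsUnit X} → Matrix ι ι ℂ) (hcont : Continuous φ)
    (hcomm : ∀ X Y, X.val * Y.val = Y.val * X.val → φ X * φ Y = φ Y * φ X)
    (hshrink : ∀ X, spectrum ℂ (φ X) ⊆ spectrum ℂ X.val) :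
    ∃ T : Matrix ι ι ℂ, IsUnit T ∧
      ((∀ X, φ X = T * X.val * T⁻¹) ∨ (∀ X, φ X = T * X.val.transpose * T⁻¹)) := by
  let φ' (g : GL ι ℂ) : Matrix ι ι ℂ := φ ⟨g, g.isUnit⟩
  have hφ' : IsContinuousPreserver φ' :=
    ⟨hcont.comp (Units.continuous_val.subtype_mk _),
      fun X Y h => hcomm _ _ (congrArg Units.val h), fun X => hshrink _⟩
  obtain ⟨ρ, hρ, hφρ⟩ := hφ'.exists_isFramePreserving_extension
  obtain ⟨T, hT⟩ := hρ.exists_eq_glConj hcard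
  have hφ (X : {X : Matrix ι ι ℂ // IsUnit X}) : φ X = ρ X.val := hφρ X.2.unit
  have hconj (A : Matrix ι ι ℂ) : glConj T A = T.val * A * T.val⁻¹ := by
    rw [glConj_apply, coe_units_inv]
  refine ⟨T.val, T.isUnit, hT.imp (fun h X => ?_) (fun h X => ?_)⟩
  · rw [hφ, h, hconj]
  · rw [hφ, h, hconj]

/-- For `n ≥ 3`, any continuous, commutativity-preserving and
spectrum-shrinking map `φ : GL(n) → M_n` is of the form `φ(X) = T X T⁻¹` or
`φ(X) = T Xᵗ T⁻¹` for some `T ∈ GL(n)`. -/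
theorem preserver_GLn (n : ℕ) (hn : 3 ≤ n)
    (φ : {X : Matrix (Fin n) (Fin n) ℂ // IsUnit X} → Matrix (Fin n) (Fin n) ℂ)
    (hcont : Continuous φ)
    (hcomm : ∀ X Y, X.val * Y.val = Y.val * X.val → φ X * φ Y = φ Y * φ X)
    (hshrink : ∀ X, spectrum ℂ (φ X) ⊆ spectrum ℂ X.val) :
    ∃ T : Matrix (Fin n) (Fin n) ℂ, IsUnit T ∧
      ((∀ X, φ X = T * X.val * T⁻¹) ∨ (∀ X, φ X = T * X.val.transpose * T⁻¹)) :=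
  preserver_GLn_general (by rwa [Fintype.card_fin]) φ hcont hcomm hshrink
end

section
/- Let n ≥ 3 and let φ : SL(n) → M_n be a continuous, commutativity-preserving and spectrum-shrinking map. Then there exists T ∈ GL(n) such that either φ(X) = T X T⁻¹ for all X ∈ SL(n), or φ(X) = T Xᵗ T⁻¹ for all X ∈ SL(n) (where Xᵗ denotes the transpose). -/
open Matrix

/-!
A diagonalizable matrix in `SL(n)` is determined by its eigenvalues and by a frame, that is, a
complete family of orthogonal rank-one idempotents. Since the matrices with simple spectrum form a
connected family, continuity forces `φ X` to have the same eigenvalues as such an `X`, and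
preservation of commutativity then shows that `φ` acts on frames: there is a map on rank-one
idempotents sending frames to frames through which `φ` is computed on diagonalizable matrices.
As `n ≥ 3`, such a map either respects "same range" and "same kernel" or exchanges them; after a
transposition it preserves incidence between vectors and covectors, so by the fundamental theorem
of projective geometry it is `P ↦ T τ(P) T⁻¹` for an invertible `T` and a ring homomorphism `τ` of
`ℂ`. Continuity of `φ` at a non-diagonalizable matrix, approached by diagonalizable matrices whose
eigenvectors blow up, forces `τ = id`, and density of the diagonalizable matrices concludes.
-/

section FundamentalTheorem

variable {n K L : Type*} [Field K] [Field L]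

theorem exists_smul_eq_of_proportional {v w : n → K} (hv : v ≠ 0) (hw : w ≠ 0)
    (h : ∀ i j, v i * w j = v j * w i) : ∃ c : K, c ≠ 0 ∧ v = c • w := by
  obtain ⟨j, hj⟩ := Function.ne_iff.mp hw
  have hvw : v = (v j / w j) • w := by
    ext i
    rw [Pi.smul_apply, smul_eq_mul, div_mul_eq_mul_div, ← h i j, mul_div_cancel_right₀ _ hj]
  refine ⟨v j / w j, fun h0 ↦ hv ?_, hvw⟩
  rw [hvw, h0, zero_smul]

theorem ne_zero_of_apply_eq_one {x : n → K} {i : n} (h : x i = 1) : x ≠ 0 :=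
  Function.ne_iff.mpr ⟨i, by simp [h]⟩

theorem mul_eq_mul_of_common_relation {β₁ β₂ p q r s : K} (hβ : β₁ ≠ 0 ∨ β₂ ≠ 0)
    (h₁ : β₁ * p + β₂ * q = 0) (h₂ : β₁ * r + β₂ * s = 0) : p * s = q * r := by
  rcases hβ with hβ | hβ <;> refine mul_left_cancel₀ hβ ?_
  · linear_combination s * h₁ - q * h₂
  · linear_combination p * h₂ - r * h₁

variable [Fintype n]

/-- Maps `a` on points and `b` on hyperplanes, both given by homogeneous coordinates, that
preserve and reflect incidence. They need not be homogeneous, and their values at `0` are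
irrelevant. -/
def PreservesIncidence (a b : (n → K) → n → L) : Prop :=
  ∀ ⦃m h⦄, m ≠ 0 → h ≠ 0 → (b h ⬝ᵥ a m = 0 ↔ h ⬝ᵥ m = 0)

/-- An incidence preserving pair that fixes the coordinate points, the coordinate hyperplanes and
the unit point. -/
structure PreservesReferenceFrame (a b : (n → K) → n → L) : Prop where
  incidence : PreservesIncidence a b
  point_apply_eq_zero : ∀ ⦃m⦄, m ≠ 0 → ∀ i, a m i = 0 ↔ m i = 0
  hyperplane_apply_eq_zero : ∀ ⦃h⦄, h ≠ 0 → ∀ i, b h i = 0 ↔ h i = 0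
  point_one : a 1 = 1

/-- The coordinate function of an incidence preserving map with respect to a base index `o`:
a point with `o`-th coordinate `1` and all the others `z` has image proportional to the point with
`o`-th coordinate `1` and all the others `coordinateMap a o z`, the value of which can be read off
at any `i ≠ o`. -/
def coordinateMap [DecidableEq n] (a : (n → K) → n → L) (o i : n) (z : K) : L :=
  a (Function.update (fun _ ↦ z) o 1) i / a (Function.update (fun _ ↦ z) o 1) o

namespace PreservesReferenceFrame

variable {a b : (n → K) → n → L} {o i₁ i₂ : n}

theorem point_ne_zero (H : PreservesReferenceFrame a b) {m : n → K} (hm : m ≠ 0) : a m ≠ 0 := by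
  obtain ⟨i, hi⟩ := Function.ne_iff.mp hm
  exact Function.ne_iff.mpr ⟨i, (H.point_apply_eq_zero hm i).not.mpr hi⟩

theorem hyperplane_ne_zero (H : PreservesReferenceFrame a b) {h : n → K} (hh : h ≠ 0) :
    b h ≠ 0 := by
  obtain ⟨i, hi⟩ := Function.ne_iff.mp hh
  exact Function.ne_iff.mpr ⟨i, (H.hyperplane_apply_eq_zero hh i).not.mpr hi⟩

theorem hyperplane_relation [DecidableEq n] (H : PreservesReferenceFrame a b) {m : n → K}
    (hm : m ≠ 0) {i j : n} (hij : i ≠ j) {s t : K} (hst : s ≠ 0 ∨ t ≠ 0)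
    (h : s * m i + t * m j = 0) :
    b (Pi.single i s + Pi.single j t) i * a m i +
      b (Pi.single i s + Pi.single j t) j * a m j = 0 := by
  set f : n → K := Pi.single i s + Pi.single j t with hf
  have hf0 : f ≠ 0 := by
    rcases hst with h0 | h0
    · exact Function.ne_iff.mpr ⟨i, by simpa [hf, hij] using h0⟩
    · exact Function.ne_iff.mpr ⟨j, by simpa [hf, hij.symm] using h0⟩
  have hfm : f ⬝ᵥ m = 0 := by simpa [hf] using h
  rw [← (H.incidence hm hf0).mpr hfm, dotProduct, Fintype.sum_eq_add i j hij]
  rintro k ⟨hki, hkj⟩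
  rw [(H.hyperplane_apply_eq_zero hf0 k).mpr (by simp [hf, hki, hkj]), zero_mul]

theorem point_proportional (H : PreservesReferenceFrame a b) {x y : n → K} (hx : x ≠ 0)
    (hy : y ≠ 0) {i j : n} (h : x i * y j = x j * y i) : a x i * a y j = a x j * a y i := by
  classical
  rcases eq_or_ne i j with rfl | hij
  · rfl
  by_cases hx0 : x j = 0 ∧ x i = 0
  · rw [(H.point_apply_eq_zero hx i).mpr hx0.2, (H.point_apply_eq_zero hx j).mpr hx0.1]
    simp
  have hst : x j ≠ 0 ∨ -x i ≠ 0 := by rwa [neg_ne_zero, ← not_and_or]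
  set f : n → K := Pi.single i (x j) + Pi.single j (-x i) with hf
  have hfi : f i = x j := by simp [hf, hij]
  have hfj : f j = -x i := by simp [hf, hij.symm]
  have hf0 : f ≠ 0 := fun h0 ↦ by
    rw [← hfi, ← hfj, h0] at hst
    simp at hst
  refine mul_eq_mul_of_common_relation (hst.imp ?_ ?_)
    (H.hyperplane_relation hx hij hst (by ring))
    (H.hyperplane_relation hy hij hst (by linear_combination -h))
  · exact fun hs ↦ (H.hyperplane_apply_eq_zero hf0 i).not.mpr (hfi ▸ hs)
  · exact fun ht ↦ (H.hyperplane_apply_eq_zero hf0 j).not.mpr (hfj ▸ ht)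

theorem point_apply_congr (H : PreservesReferenceFrame a b) {x : n → K} (hx : x ≠ 0) {i j : n}
    (h : x i = x j) : a x i = a x j := by
  have h1 : (1 : n → K) ≠ 0 := fun h1 ↦ one_ne_zero (congrFun h1 i)
  simpa [H.point_one] using H.point_proportional hx h1 (i := i) (j := j) (by simpa using h)

section CoordinateMap

variable [DecidableEq n]

theorem coordinateMap_one (H : PreservesReferenceFrame a b) : coordinateMap a o i₁ 1 = 1 := by
  have h1 : Function.update (fun _ ↦ 1) o 1 = (1 : n → K) := Function.update_eq_self o (1 : n → K)
  rw [coordinateMap, h1, H.point_one, Pi.one_apply, Pi.one_apply, div_one]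

theorem coordinateMap_eq_zero (H : PreservesReferenceFrame a b) (h₁ : i₁ ≠ o) {z : K} :
    coordinateMap a o i₁ z = 0 ↔ z = 0 := by
  have hq : Function.update (fun _ ↦ z) o 1 ≠ 0 :=
    ne_zero_of_apply_eq_one (Function.update_self o (1 : K) (fun _ ↦ z))
  rw [coordinateMap, div_eq_zero_iff, H.point_apply_eq_zero hq, H.point_apply_eq_zero hq,
    Function.update_self, Function.update_of_ne h₁]
  simp

theorem point_apply_eq_of_ne_zero (H : PreservesReferenceFrame a b) (h₁ : i₁ ≠ o) {x : n → K}
    (hx : x o ≠ 0) (j : n) : a x j = coordinateMap a o i₁ (x j / x o) * a x o := by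
  have hx' : x ≠ 0 := Function.ne_iff.mpr ⟨o, hx⟩
  rcases eq_or_ne j o with rfl | hj
  · rw [div_self hx, H.coordinateMap_one, one_mul]
  set q : n → K := Function.update (fun _ ↦ x j / x o) o 1 with hq
  have hqo : q o = 1 := Function.update_self ..
  have hqj : ∀ k, k ≠ o → q k = x j / x o := fun k hk ↦ Function.update_of_ne hk ..
  have hq0 : q ≠ 0 := ne_zero_of_apply_eq_one hqo
  have haq : a q o ≠ 0 := (H.point_apply_eq_zero hq0 o).not.mpr (by simp [hqo])
  have hprop : a x o * a q j = a x j * a q o :=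
    H.point_proportional hx' hq0 (by rw [hqo, hqj j hj]; field_simp)
  rw [H.point_apply_congr hq0 (j := i₁) (by rw [hqj j hj, hqj i₁ h₁])] at hprop
  rw [coordinateMap, ← hq, div_mul_eq_mul_div, eq_div_iff haq, ← hprop, mul_comm]

theorem coordinateMap_mul (H : PreservesReferenceFrame a b) (h₁ : i₁ ≠ o) (h₂ : i₂ ≠ o)
    (h₁₂ : i₁ ≠ i₂) (z w : K) :
    coordinateMap a o i₁ (z * w) = coordinateMap a o i₁ z * coordinateMap a o i₁ w := by
  set x : n → K := Function.update (Function.update (fun _ ↦ 1) i₁ z) i₂ (z * w) with hx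
  set y : n → K := Function.update (fun _ ↦ 1) i₂ w with hy
  have hxo : x o = 1 := by simp [hx, h₁.symm, h₂.symm]
  have hyo : y o = 1 := by simp [hy, h₂.symm]
  have hx0 := ne_zero_of_apply_eq_one hxo
  have hy0 := ne_zero_of_apply_eq_one hyo
  have hprop : a x i₁ * a y i₂ = a x i₂ * a y i₁ :=
    H.point_proportional hx0 hy0 (by simp [hx, hy, h₁₂])
  have hax : a x o ≠ 0 := (H.point_apply_eq_zero hx0 o).not.mpr (by simp [hxo])
  have hay : a y o ≠ 0 := (H.point_apply_eq_zero hy0 o).not.mpr (by simp [hyo])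
  have happ {v : n → K} (hv : v o = 1) (j : n) : a v j = coordinateMap a o i₁ (v j) * a v o := by
    simpa [hv] using H.point_apply_eq_of_ne_zero h₁ (x := v) (by simp [hv]) j
  rw [happ hxo i₁, happ hxo i₂, happ hyo i₁, happ hyo i₂] at hprop
  simp only [hx, hy, h₁₂, Function.update_self, Function.update_of_ne, ne_eq, not_false_eq_true,
    H.coordinateMap_one] at hprop
  refine mul_right_cancel₀ (mul_ne_zero hax hay) ?_
  linear_combination -hprop

theorem point_eq_smul (H : PreservesReferenceFrame a b) (h₁ : i₁ ≠ o) (h₂ : i₂ ≠ o)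
    (h₁₂ : i₁ ≠ i₂) {x : n → K} (hx : x ≠ 0) :
    ∃ c : L, c ≠ 0 ∧ a x = c • (coordinateMap a o i₁ ∘ x) := by
  have hτ0 {z : K} : coordinateMap a o i₁ z = 0 ↔ z = 0 := H.coordinateMap_eq_zero h₁
  have hτx : coordinateMap a o i₁ ∘ x ≠ 0 := by
    obtain ⟨j, hj⟩ := Function.ne_iff.mp hx
    exact Function.ne_iff.mpr ⟨j, hτ0.not.mpr hj⟩
  refine exists_smul_eq_of_proportional (H.point_ne_zero hx) hτx fun i j ↦ ?_
  simp only [Function.comp_apply]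
  by_cases hxo : x o = 0
  · have hzero {k : n} (hk : x k = 0) : a x k = 0 ∧ coordinateMap a o i₁ (x k) = 0 :=
      ⟨(H.point_apply_eq_zero hx k).mpr hk, hτ0.mpr hk⟩
    rcases eq_or_ne i o with rfl | hi
    · simp [(hzero hxo).1, (hzero hxo).2]
    rcases eq_or_ne j o with rfl | hj
    · simp [(hzero hxo).1, (hzero hxo).2]
    set y : n → K := Function.update x o 1
    have hyo : y o = 1 := Function.update_self ..
    have hyk : ∀ k, k ≠ o → y k = x k := fun k hk ↦ Function.update_of_ne hk ..
    have hy0 := ne_zero_of_apply_eq_one hyo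
    have hay : a y o ≠ 0 := (H.point_apply_eq_zero hy0 o).not.mpr (by simp [hyo])
    have hprop : a x i * a y j = a x j * a y i :=
      H.point_proportional hx hy0 (by rw [hyk i hi, hyk j hj, mul_comm])
    have happ (k : n) (hk : k ≠ o) : a y k = coordinateMap a o i₁ (x k) * a y o := by
      simpa [hyo, hyk k hk] using H.point_apply_eq_of_ne_zero h₁ (x := y) (by simp [hyo]) k
    rw [happ i hi, happ j hj] at hprop
    exact mul_right_cancel₀ hay (by linear_combination hprop)
  · rw [H.point_apply_eq_of_ne_zero h₁ hxo i, H.point_apply_eq_of_ne_zero h₁ hxo j,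
      div_eq_mul_inv, div_eq_mul_inv, H.coordinateMap_mul h₁ h₂ h₁₂,
      H.coordinateMap_mul h₁ h₂ h₁₂]
    ring

theorem hyperplane_dotProduct_coordinateMap (H : PreservesReferenceFrame a b) (h₁ : i₁ ≠ o)
    (h₂ : i₂ ≠ o) (h₁₂ : i₁ ≠ i₂) {x h : n → K} (hh : h ≠ 0) (hx : h ⬝ᵥ x = 0) :
    b h ⬝ᵥ (coordinateMap a o i₁ ∘ x) = 0 := by
  rcases eq_or_ne x 0 with rfl | hx0
  · simp [dotProduct, (H.coordinateMap_eq_zero h₁).mpr]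
  · obtain ⟨c, hc, hax⟩ := H.point_eq_smul h₁ h₂ h₁₂ hx0
    simpa [hax, hc] using (H.incidence hx0 hh).mpr hx

/-- Evaluate on the points `(p, q, p + q)` of the plane with equation `x + y - z = 0`. -/
theorem coordinateMap_add (H : PreservesReferenceFrame a b) (h₁ : i₁ ≠ o) (h₂ : i₂ ≠ o)
    (h₁₂ : i₁ ≠ i₂) (p q : K) :
    coordinateMap a o i₁ (p + q) = coordinateMap a o i₁ p + coordinateMap a o i₁ q := by
  set τ := coordinateMap a o i₁ with hτ
  have hτ0 : τ 0 = 0 := (H.coordinateMap_eq_zero h₁).mpr rfl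
  have hτ1 : τ 1 = 1 := H.coordinateMap_one
  set h : n → K := Pi.single o 1 + Pi.single i₁ 1 + Pi.single i₂ (-1) with hh
  have hh0 : h ≠ 0 := ne_zero_of_apply_eq_one (i := o) (by simp [hh, h₁.symm, h₂.symm])
  have hrel (p q : K) : b h o * τ p + b h i₁ * τ q + b h i₂ * τ (p + q) = 0 := by
    have hx := H.hyperplane_dotProduct_coordinateMap h₁ h₂ h₁₂ hh0
      (x := Pi.single o p + Pi.single i₁ q + Pi.single i₂ (p + q))
      (by simp [hh, h₁, h₁.symm, h₂, h₂.symm, h₁₂, h₁₂.symm])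
    rw [← hx, dotProduct, ← Fintype.sum_subset (s := {o, i₁, i₂})]
    · rw [Finset.sum_insert (by simp [h₁.symm, h₂.symm]), Finset.sum_pair h₁₂]
      simp [← hτ, h₁, h₁.symm, h₂, h₂.symm, h₁₂, h₁₂.symm, add_assoc]
    · intro k hk
      contrapose! hk
      simp only [Finset.mem_insert, Finset.mem_singleton, not_or] at hk
      simp [← hτ, hk.1, hk.2.1, hk.2.2, hτ0]
  have hb : b h i₂ ≠ 0 :=
    (H.hyperplane_apply_eq_zero hh0 i₂).not.mpr (by simp [hh, h₂, h₁₂.symm])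
  have hrel₁ := hrel 1 0
  have hrel₂ := hrel 0 1
  simp only [add_zero, zero_add, hτ0, hτ1, mul_zero, mul_one] at hrel₁ hrel₂
  exact mul_left_cancel₀ hb (by linear_combination hrel p q - τ p * hrel₁ - τ q * hrel₂)

theorem hyperplane_eq_smul (H : PreservesReferenceFrame a b) (h₁ : i₁ ≠ o) (h₂ : i₂ ≠ o)
    (h₁₂ : i₁ ≠ i₂) {h : n → K} (hh : h ≠ 0) :
    ∃ c : L, c ≠ 0 ∧ b h = c • (coordinateMap a o i₁ ∘ h) := by
  set τ := coordinateMap a o i₁ with hτ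
  have hτ0 {z : K} : τ z = 0 ↔ z = 0 := H.coordinateMap_eq_zero h₁
  have hτneg (z : K) : τ (-z) = -τ z := by
    rw [eq_neg_iff_add_eq_zero, hτ, ← H.coordinateMap_add h₁ h₂ h₁₂, neg_add_cancel,
      H.coordinateMap_eq_zero h₁]
  have hτh : τ ∘ h ≠ 0 := by
    obtain ⟨j, hj⟩ := Function.ne_iff.mp hh
    exact Function.ne_iff.mpr ⟨j, hτ0.not.mpr hj⟩
  refine exists_smul_eq_of_proportional (H.hyperplane_ne_zero hh) hτh fun i j ↦ ?_
  rcases eq_or_ne i j with rfl | hij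
  · rfl
  have hx := H.hyperplane_dotProduct_coordinateMap h₁ h₂ h₁₂ hh
    (x := Pi.single i (h j) + Pi.single j (-h i)) (by simp [mul_comm])
  rw [← hτ, dotProduct, Fintype.sum_eq_add i j hij] at hx
  · simp only [Function.comp_apply, Pi.add_apply, Pi.single_eq_same, Pi.single_eq_of_ne hij,
      Pi.single_eq_of_ne hij.symm, add_zero, zero_add, hτneg] at hx
    simp only [Function.comp_apply]
    linear_combination hx
  · rintro k ⟨hki, hkj⟩
    simp [hki, hkj, hτ0.mpr]

end CoordinateMap

theorem exists_ringHom (H : PreservesReferenceFrame a b) (hn : 2 < Fintype.card n) :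
    ∃ τ : K →+* L, (∀ m, m ≠ 0 → ∃ c : L, c ≠ 0 ∧ a m = c • (τ ∘ m)) ∧
      ∀ h, h ≠ 0 → ∃ c : L, c ≠ 0 ∧ b h = c • (τ ∘ h) := by
  classical
  obtain ⟨o, i₁, i₂, h₁, h₂, h₁₂⟩ := Fintype.two_lt_card_iff.mp hn
  let τ : K →+* L :=
    { toFun := coordinateMap a o i₁
      map_one' := H.coordinateMap_one
      map_zero' := (H.coordinateMap_eq_zero h₁.symm).mpr rfl
      map_mul' := H.coordinateMap_mul h₁.symm h₂.symm h₁₂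
      map_add' := H.coordinateMap_add h₁.symm h₂.symm h₁₂ }
  exact ⟨τ, fun _ ↦ H.point_eq_smul h₁.symm h₂.symm h₁₂,
    fun _ ↦ H.hyperplane_eq_smul h₁.symm h₂.symm h₁₂⟩

end PreservesReferenceFrame

theorem hyperplane_single_dotProduct [DecidableEq n] {b : (n → K) → n → L}
    (hb : ∀ ⦃h⦄, h ≠ 0 → ∀ i, b h i = 0 ↔ h i = 0) (i : n) (v : n → L) :
    b (Pi.single i 1) ⬝ᵥ v = 0 ↔ v i = 0 := by
  have hi : (Pi.single i 1 : n → K) ≠ 0 := ne_zero_of_apply_eq_one (Pi.single_eq_same i 1)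
  have hbi : b (Pi.single i 1) i ≠ 0 := (hb hi i).not.mpr (by simp)
  rw [dotProduct, Fintype.sum_eq_single i, mul_eq_zero, or_iff_right hbi]
  intro k hk
  rw [(hb hi k).mpr (Pi.single_eq_of_ne hk 1), zero_mul]

namespace PreservesIncidence

variable {a b : (n → K) → n → L}

theorem changeOfBasis [DecidableEq n] (H : PreservesIncidence a b) {S T : Matrix n n L}
    (hTS : T * S = 1) :
    PreservesIncidence (fun m ↦ S *ᵥ a m) fun h ↦ b h ᵥ* T := fun m h hm hh ↦ by
  rw [← dotProduct_mulVec, mulVec_mulVec, hTS, one_mulVec, H hm hh]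

theorem dotProduct_point_single [DecidableEq n] (H : PreservesIncidence a b) {h : n → K}
    (hh : h ≠ 0) (i : n) :
    b h ⬝ᵥ a (Pi.single i 1) = 0 ↔ h i = 0 := by
  rw [H (ne_zero_of_apply_eq_one (Pi.single_eq_same i 1)) hh, dotProduct_single_one]

theorem point_apply_eq_zero (H : PreservesIncidence a b)
    (hb : ∀ ⦃h⦄, h ≠ 0 → ∀ i, b h i = 0 ↔ h i = 0) {m : n → K} (hm : m ≠ 0) (i : n) :
    a m i = 0 ↔ m i = 0 := by
  classical
  rw [← hyperplane_single_dotProduct hb,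
    H hm (ne_zero_of_apply_eq_one (Pi.single_eq_same i 1)), single_one_dotProduct]

theorem exists_isUnit_vecMul_apply_eq_zero [DecidableEq n] (H : PreservesIncidence a b) :
    ∃ T : Matrix n n L, IsUnit T ∧ ∀ ⦃h⦄, h ≠ 0 → ∀ i, (b h ᵥ* T) i = 0 ↔ h i = 0 := by
  have hT : ∀ ⦃h⦄, h ≠ 0 → ∀ i, (b h ᵥ* of fun j i ↦ a (Pi.single i 1) j) i = 0 ↔ h i = 0 :=
    fun h hh i ↦ H.dotProduct_point_single hh i
  refine ⟨of fun j i ↦ a (Pi.single i 1) j, ?_, hT⟩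
  rw [isUnit_iff_isUnit_det, isUnit_iff_ne_zero, ne_eq, ← exists_mulVec_eq_zero_iff]
  rintro ⟨v, hv, hTv⟩
  refine hv (funext fun i ↦ (hyperplane_single_dotProduct hT i v).mp ?_)
  rw [← dotProduct_mulVec, hTv, dotProduct_zero]

theorem exists_preservesReferenceFrame [DecidableEq n] [Nonempty n] (H : PreservesIncidence a b) :
    ∃ T : Matrix n n L, IsUnit T ∧
      PreservesReferenceFrame (fun m ↦ T⁻¹ *ᵥ a m) fun h ↦ b h ᵥ* T := by
  obtain ⟨S, hS, hbS⟩ := H.exists_isUnit_vecMul_apply_eq_zero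
  have hSdet := (isUnit_iff_isUnit_det S).mp hS
  set w : n → L := S⁻¹ *ᵥ a 1 with hw
  have hw0 (i : n) : w i ≠ 0 :=
    ((H.changeOfBasis (mul_nonsing_inv S hSdet)).point_apply_eq_zero hbS one_ne_zero
      i).not.mpr one_ne_zero
  have hD : IsUnit (diagonal w) := by
    rw [isUnit_diagonal, Pi.isUnit_iff]
    exact fun i ↦ (hw0 i).isUnit
  have hSD := hS.mul hD
  have hb : ∀ ⦃h⦄, h ≠ 0 → ∀ i, (b h ᵥ* (S * diagonal w)) i = 0 ↔ h i = 0 := fun h hh i ↦ by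
    rw [← vecMul_vecMul, vecMul_diagonal, mul_eq_zero, or_iff_left (hw0 i), hbS hh]
  have hinc : PreservesIncidence (fun m ↦ (S * diagonal w)⁻¹ *ᵥ a m) _ :=
    H.changeOfBasis (mul_nonsing_inv _ ((isUnit_iff_isUnit_det _).mp hSD))
  refine ⟨S * diagonal w, hSD, hinc, fun _ hm ↦ hinc.point_apply_eq_zero hb hm, hb, ?_⟩
  have hw1 : diagonal w *ᵥ 1 = w := by
    ext i
    rw [mulVec_diagonal, Pi.one_apply, mul_one]
  have ha1 : a 1 = (S * diagonal w) *ᵥ 1 := by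
    rw [← mulVec_mulVec, hw1, hw, mulVec_mulVec, mul_nonsing_inv S hSdet, one_mulVec]
  rw [ha1, mulVec_mulVec, nonsing_inv_mul _ ((isUnit_iff_isUnit_det _).mp hSD), one_mulVec]

/-- The fundamental theorem of projective geometry. -/
theorem exists_semilinear [DecidableEq n] (H : PreservesIncidence a b) (hn : 2 < Fintype.card n) :
    ∃ (T : Matrix n n L) (τ : K →+* L), IsUnit T ∧
      (∀ m, m ≠ 0 → ∃ c : L, c ≠ 0 ∧ a m = c • T *ᵥ (τ ∘ m)) ∧
      ∀ h, h ≠ 0 → ∃ c : L, c ≠ 0 ∧ b h ᵥ* T = c • (τ ∘ h) := by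
  have : Nonempty n := Fintype.card_pos_iff.mp (by lia)
  obtain ⟨T, hT, HT⟩ := H.exists_preservesReferenceFrame
  obtain ⟨τ, ha, hb⟩ := HT.exists_ringHom hn
  refine ⟨T, τ, hT, fun m hm ↦ ?_, hb⟩
  obtain ⟨c, hc, hm⟩ := ha m hm
  refine ⟨c, hc, ?_⟩
  rw [← mulVec_smul, ← hm, mulVec_mulVec,
    mul_nonsing_inv _ ((isUnit_iff_isUnit_det T).mp hT), one_mulVec]

end PreservesIncidence

end FundamentalTheorem

section Biorthogonal

variable {ι κ n K : Type*} [Field K] [Fintype n]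

/-- The vectors `x i` and the covectors `f i` form dual bases of their spans, equivalently the
matrices `vecMulVec (x i) (f i)` are mutually orthogonal rank-one idempotents. -/
def Biorthogonal [DecidableEq ι] (x f : ι → n → K) : Prop :=
  ∀ i j, f i ⬝ᵥ x j = if i = j then 1 else 0

theorem exists_dotProduct_eq_one {m : n → K} (hm : m ≠ 0) : ∃ h : n → K, h ⬝ᵥ m = 1 := by
  classical
  obtain ⟨i, hi⟩ := Function.ne_iff.mp hm
  exact ⟨Pi.single i (m i)⁻¹, by rw [single_dotProduct, inv_mul_cancel₀ hi]⟩

theorem exists_ne_zero_forall_dotProduct_eq_zero [Fintype ι]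
    (h : Fintype.card ι < Fintype.card n) (x : ι → n → K) :
    ∃ f : n → K, f ≠ 0 ∧ ∀ i, f ⬝ᵥ x i = 0 := by
  obtain ⟨f, hf, hf0⟩ := Submodule.exists_mem_ne_zero_of_ne_bot
    (LinearMap.ker_ne_bot_of_finrank_lt (f := (of x).mulVecLin) (by simpa using h))
  exact ⟨f, hf0, fun i ↦ (dotProduct_comm _ _).trans (congrFun (LinearMap.mem_ker.mp hf) i)⟩

theorem vecMulVec_mul_vecMulVec_eq_smul {l m : Type*} (a : l → K) (f b : n → K) (g : m → K) :
    vecMulVec a f * vecMulVec b g = (f ⬝ᵥ b) • vecMulVec a g := by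
  rw [vecMulVec_mul_vecMulVec, vecMulVec_smul]

theorem sum_vecMulVec_mulVec [Fintype ι] (x f : ι → n → K) (v : n → K) :
    (∑ i, vecMulVec (x i) (f i)) *ᵥ v = ∑ i, (f i ⬝ᵥ v) • x i := by
  simp only [sum_mulVec, vecMulVec_mulVec, op_smul_eq_smul]

theorem biorthogonal_iff_mul_transpose_eq_one [DecidableEq ι] {x f : ι → n → K} :
    Biorthogonal x f ↔ of f * (of x)ᵀ = 1 := by
  simp only [← Matrix.ext_iff, mul_apply, one_apply]
  rfl

theorem exists_biorthogonal_of_linearIndependent [Finite ι] [DecidableEq ι] {f : ι → n → K}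
    (hf : LinearIndependent K f) : ∃ x : ι → n → K, Biorthogonal x f := by
  classical
  have := Fintype.ofFinite ι
  obtain ⟨g, hg⟩ := (toLinearMapRight' (of f)).exists_leftInverse_of_injective
    (LinearMap.ker_eq_bot.mpr (vecMul_injective_iff.mpr hf))
  refine ⟨(LinearMap.toMatrixRight' g)ᵀ, biorthogonal_iff_mul_transpose_eq_one.mpr ?_⟩
  apply toLinearMapRight'.injective
  change toLinearMapRight' (of f * LinearMap.toMatrixRight' g) = _
  rw [toLinearMapRight'_mul, toLinearMapRight'_one, ← hg]
  congr 1
  exact toLinearMapRight'.apply_symm_apply g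

theorem biorthogonal_sumElim_iff [DecidableEq ι] [DecidableEq κ] {x f : ι → n → K}
    {w u : κ → n → K} :
    Biorthogonal (Sum.elim x w) (Sum.elim f u) ↔ Biorthogonal x f ∧ Biorthogonal w u ∧
      (∀ i j, f i ⬝ᵥ w j = 0) ∧ ∀ j i, u j ⬝ᵥ x i = 0 := by
  simp only [Biorthogonal, Sum.forall, Sum.elim_inl, Sum.elim_inr, Sum.inl.injEq, Sum.inr.injEq,
    reduceCtorEq, if_false]
  grind

theorem biorthogonal_unique {x f : n → K} (h : f ⬝ᵥ x = 1) :
    Biorthogonal (fun _ : Unit ↦ x) fun _ ↦ f := fun i j ↦ by simpa using h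

theorem biorthogonal_pair {x₁ x₂ f₁ f₂ : n → K} (h₁₁ : f₁ ⬝ᵥ x₁ = 1) (h₁₂ : f₁ ⬝ᵥ x₂ = 0)
    (h₂₁ : f₂ ⬝ᵥ x₁ = 0) (h₂₂ : f₂ ⬝ᵥ x₂ = 1) : Biorthogonal ![x₁, x₂] ![f₁, f₂] := by
  intro i j
  fin_cases i <;> fin_cases j <;> simpa

theorem exists_dual_pair {m h k l : n → K} (hm : h ⬝ᵥ m = 1) (km : k ⬝ᵥ m = 0) (lm : l ⬝ᵥ m = 0)
    (hkl : LinearIndependent K ![k, l]) :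
    ∃ x y : n → K, h ⬝ᵥ x = 0 ∧ h ⬝ᵥ y = 0 ∧ k ⬝ᵥ x = 1 ∧ k ⬝ᵥ y = 0 ∧ l ⬝ᵥ x = 0 ∧
      l ⬝ᵥ y = 1 := by
  obtain ⟨z, hz⟩ := exists_biorthogonal_of_linearIndependent hkl
  have h00 := hz 0 0
  have h01 := hz 0 1
  have h10 := hz 1 0
  have h11 := hz 1 1
  simp only [cons_val_zero, cons_val_one] at h00 h01 h10 h11
  refine ⟨z 0 - (h ⬝ᵥ z 0) • m, z 1 - (h ⬝ᵥ z 1) • m, ?_⟩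
  simp [hm, km, lm, h00, h01, h10, h11]

theorem exists_complementary_pair {m h : n → K} (hm : m ≠ 0) (hh : h ≠ 0) (hhm : h ⬝ᵥ m = 0) :
    ∃ p f : n → K, h ⬝ᵥ p = 1 ∧ f ⬝ᵥ m = 1 ∧ f ⬝ᵥ p = 0 := by
  obtain ⟨p, hp⟩ := exists_dotProduct_eq_one hh
  rw [dotProduct_comm] at hp
  obtain ⟨f, hf⟩ := exists_dotProduct_eq_one hm
  exact ⟨p, f - (f ⬝ᵥ p) • h, hp, by simp [hf, hhm], by simp [hp]⟩

theorem exists_linearIndependent_pair (hn : 2 < Fintype.card n) (m : n → K) {k : n → K}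
    (hk : k ≠ 0) : ∃ l : n → K, l ⬝ᵥ m = 0 ∧ LinearIndependent K ![k, l] := by
  obtain ⟨p, hp⟩ := exists_dotProduct_eq_one hk
  obtain ⟨l, hl, hlmp⟩ := exists_ne_zero_forall_dotProduct_eq_zero (by simpa using hn) ![m, p]
  have hlp : l ⬝ᵥ p = 0 := hlmp 1
  refine ⟨l, hlmp 0, (LinearIndependent.pair_iff' hk).mpr fun a ha ↦ ?_⟩
  rw [← ha, smul_dotProduct, dotProduct_comm, hp, smul_eq_mul, mul_one] at hlp
  exact hl (by rw [← ha, hlp, zero_smul])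

namespace Biorthogonal

variable [DecidableEq ι] {x f : ι → n → K}

theorem symm (h : Biorthogonal x f) : Biorthogonal f x := fun i j ↦ by
  rw [dotProduct_comm, h j i]
  simp only [eq_comm]

theorem comp_injective [DecidableEq κ] (h : Biorthogonal x f) {e : κ → ι}
    (he : Function.Injective e) : Biorthogonal (x ∘ e) (f ∘ e) := fun i j ↦ by
  simp [h (e i) (e j), he.eq_iff]

theorem sum_eq_one [DecidableEq n] {x f : n → n → K} (h : Biorthogonal x f) :
    ∑ i, vecMulVec (x i) (f i) = 1 := by
  rw [← mul_eq_one_comm.mp (biorthogonal_iff_mul_transpose_eq_one.mp h)]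
  ext i j
  rw [Matrix.sum_apply, mul_apply]
  rfl

theorem exists_extension [Finite ι] (h : Biorthogonal x f) :
    ∃ (r : ℕ) (w u : Fin r → n → K), Nonempty (ι ⊕ Fin r ≃ n) ∧
      Biorthogonal (Sum.elim x w) (Sum.elim f u) := by
  classical
  have := Fintype.ofFinite ι
  let F : (n → K) →ₗ[K] ι → K := (of f).mulVecLin
  let X : (ι → K) →ₗ[K] n → K := (of x)ᵀ.mulVecLin
  have hFX : F ∘ₗ X = LinearMap.id := by
    rw [← mulVecLin_mul, biorthogonal_iff_mul_transpose_eq_one.mp h, mulVecLin_one]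
  let B := Module.finBasis K (LinearMap.ker F)
  have hker (v : n → K) : (LinearMap.id - X ∘ₗ F : (n → K) →ₗ[K] n → K) v ∈ LinearMap.ker F := by
    rw [LinearMap.mem_ker]
    exact (map_sub F v _).trans (sub_eq_zero.mpr (LinearMap.congr_fun hFX (F v)).symm)
  let G := B.equivFun.toLinearMap ∘ₗ LinearMap.codRestrict _ (LinearMap.id - X ∘ₗ F) hker
  have hG (v : n → K) (j) : LinearMap.toMatrix' G j ⬝ᵥ v = G v j :=
    congrFun (G.toMatrix'_mulVec v) j
  have hX (i : ι) : X (Pi.single i 1) = x i := mulVec_single_one _ i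
  have hfw (i : ι) (j) : f i ⬝ᵥ (B j : n → K) = 0 := congrFun (LinearMap.mem_ker.mp (B j).2) i
  refine ⟨_, fun j ↦ B j, LinearMap.toMatrix' G, ?_, biorthogonal_sumElim_iff.mpr
    ⟨h, fun i j ↦ ?_, hfw, fun j i ↦ ?_⟩⟩
  · have hrange : LinearMap.range F = ⊤ :=
      LinearMap.range_eq_top.mpr fun c ↦ ⟨X c, LinearMap.congr_fun hFX c⟩
    have hrank := F.finrank_range_add_finrank_ker
    rw [hrange, finrank_top, Module.finrank_fintype_fun_eq_card,
      Module.finrank_fintype_fun_eq_card] at hrank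
    exact ⟨Fintype.equivOfCardEq (by rw [Fintype.card_sum, Fintype.card_fin, hrank])⟩
  · have hBj : LinearMap.codRestrict _ (LinearMap.id - X ∘ₗ F) hker (B j) = B j :=
      Subtype.ext (by simp [LinearMap.mem_ker.mp (B j).2])
    rw [hG, LinearMap.comp_apply, hBj]
    simp [eq_comm]
  · have hxi : LinearMap.codRestrict _ (LinearMap.id - X ∘ₗ F) hker (x i) = 0 := by
      refine Subtype.ext ?_
      have hXF : X (F (x i)) = x i := by
        rw [← hX i]
        exact congrArg X (LinearMap.congr_fun hFX _)
      simp [hXF]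
    rw [hG, LinearMap.comp_apply, hxi, map_zero, Pi.zero_apply]

variable [Fintype ι]

theorem dotProduct_sum_mulVec (h : Biorthogonal x f) (i : ι) (v : n → K) :
    f i ⬝ᵥ (∑ j, vecMulVec (x j) (f j)) *ᵥ v = f i ⬝ᵥ v := by
  simp [sum_vecMulVec_mulVec, dotProduct_sum, h i _]

theorem sum_mulVec_apply (h : Biorthogonal x f) (j : ι) :
    (∑ i, vecMulVec (x i) (f i)) *ᵥ x j = x j := by
  simp [sum_vecMulVec_mulVec, h _ j]

theorem sumElim_congr [DecidableEq κ] {x' f' : ι → n → K} {w u : κ → n → K}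
    (h : Biorthogonal (Sum.elim x w) (Sum.elim f u)) (h' : Biorthogonal x' f')
    (hs : ∑ i, vecMulVec (x i) (f i) = ∑ i, vecMulVec (x' i) (f' i)) :
    Biorthogonal (Sum.elim x' w) (Sum.elim f' u) := by
  obtain ⟨-, hwu, hfw, hux⟩ := biorthogonal_sumElim_iff.mp h
  refine biorthogonal_sumElim_iff.mpr ⟨h', hwu, fun i j ↦ ?_, fun j i ↦ ?_⟩
  · rw [← h'.dotProduct_sum_mulVec, ← hs, sum_vecMulVec_mulVec]
    simp [hfw]
  · rw [← h'.sum_mulVec_apply, ← hs, sum_vecMulVec_mulVec]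
    simp [dotProduct_sum, hux]

end Biorthogonal

end Biorthogonal

section RankOneIdempotent

variable {n K : Type*} [Field K] [Fintype n] {A B P Q E : Matrix n n K}

/-- Rank-one idempotent matrices, the points of the projective geometry on which a frame
preserving map acts. -/
def IsRankOneIdempotent (A : Matrix n n K) : Prop :=
  ∃ y g : n → K, g ⬝ᵥ y = 1 ∧ A = vecMulVec y g

/-- Two idempotents with the same range. That they have the same kernel is expressed as
`SameRange Pᵀ Qᵀ`. -/
def SameRange (P Q : Matrix n n K) : Prop :=
  P * Q = Q ∧ Q * P = P

theorem isRankOneIdempotent_vecMulVec {y g : n → K} (h : g ⬝ᵥ y = 1) :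
    IsRankOneIdempotent (vecMulVec y g) :=
  ⟨y, g, h, rfl⟩

namespace SameRange

theorem symm (h : SameRange P Q) : SameRange Q P :=
  ⟨h.2, h.1⟩

theorem trans (h : SameRange P Q) (h' : SameRange Q E) : SameRange P E :=
  ⟨by rw [← h'.1, ← Matrix.mul_assoc, h.1], by rw [← h.2, ← Matrix.mul_assoc, h'.2]⟩

end SameRange

namespace IsRankOneIdempotent

theorem mul_self (hA : IsRankOneIdempotent A) : A * A = A := by
  obtain ⟨y, g, h, rfl⟩ := hA
  rw [vecMulVec_mul_vecMulVec_eq_smul, h, one_smul]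

theorem ne_zero (hA : IsRankOneIdempotent A) : A ≠ 0 := by
  obtain ⟨y, g, h, rfl⟩ := hA
  intro h0
  have hy : vecMulVec y g *ᵥ y = y := by rw [vecMulVec_mulVec, op_smul_eq_smul, h, one_smul]
  rw [h0, zero_mulVec] at hy
  simp [← hy] at h

theorem transpose (hA : IsRankOneIdempotent A) : IsRankOneIdempotent Aᵀ := by
  obtain ⟨y, g, h, rfl⟩ := hA
  exact ⟨g, y, by rwa [dotProduct_comm], transpose_vecMulVec y g⟩

theorem sameRange (hP : IsRankOneIdempotent P) (hQ : IsRankOneIdempotent Q) (h : P * Q = Q) :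
    SameRange P Q := by
  obtain ⟨y, g, -, rfl⟩ := hP
  obtain ⟨z, f, hfz, rfl⟩ := hQ
  refine ⟨h, ?_⟩
  have hz : z = (g ⬝ᵥ z) • y := by
    have hz := congrArg (· *ᵥ z) h
    simpa only [← mulVec_mulVec, vecMulVec_mulVec, op_smul_eq_smul, hfz, one_smul] using hz.symm
  have hfy : (f ⬝ᵥ y) * (g ⬝ᵥ z) = 1 := by
    rw [← hfz, mul_comm, ← smul_eq_mul, ← dotProduct_smul, ← hz]
  rw [vecMulVec_mul_vecMulVec_eq_smul, hz, ← smul_vecMulVec, smul_smul, hfy, one_smul]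

theorem eq_of_mul_eq (hA : IsRankOneIdempotent A) (hB : IsRankOneIdempotent B) (hAB : A * B = A)
    (hBA : B * A = A) : A = B :=
  hAB.symm.trans (hB.sameRange hA hBA).2

theorem mul_eq_zero_or_of_mul_mul_eq_zero (hE : IsRankOneIdempotent E) (h : A * E * B = 0) :
    A * E = 0 ∨ E * B = 0 := by
  obtain ⟨y, g, -, rfl⟩ := hE
  rw [mul_vecMulVec, vecMulVec_mul] at h
  rw [mul_vecMulVec, vecMulVec_mul]
  exact (vecMulVec_eq_zero.mp h).imp (fun h ↦ by simp [h]) fun h ↦ by simp [h]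

theorem dotProduct_smul_eq_vecMulVec (hA : IsRankOneIdempotent A) {y g : n → K}
    (hy : A *ᵥ y = y) (hg : g ᵥ* A = g) : (g ⬝ᵥ y) • A = vecMulVec y g := by
  obtain ⟨z, f, -, rfl⟩ := hA
  rw [vecMulVec_mulVec, op_smul_eq_smul] at hy
  rw [vecMul_vecMulVec] at hg
  conv_lhs => rw [← hy, dotProduct_smul, smul_eq_mul]
  conv_rhs => rw [← hy, ← hg, smul_vecMulVec, vecMulVec_smul, smul_smul]

theorem dotProduct_ne_zero (hA : IsRankOneIdempotent A) {y g : n → K} (hy : y ≠ 0) (hg : g ≠ 0)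
    (hAy : A *ᵥ y = y) (hgA : g ᵥ* A = g) : g ⬝ᵥ y ≠ 0 := fun h ↦ by
  have h0 := hA.dotProduct_smul_eq_vecMulVec hAy hgA
  rw [h, zero_smul, eq_comm, vecMulVec_eq_zero] at h0
  exact h0.elim hy hg

theorem conj [DecidableEq n] (hA : IsRankOneIdempotent A) {T : Matrix n n K} (hT : IsUnit T) :
    IsRankOneIdempotent (T⁻¹ * A * T) := by
  obtain ⟨y, g, h, rfl⟩ := hA
  refine ⟨T⁻¹ *ᵥ y, g ᵥ* T, ?_, by rw [mul_vecMulVec, vecMulVec_mul]⟩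
  rw [dotProduct_mulVec, vecMul_vecMul, mul_nonsing_inv _ ((isUnit_iff_isUnit_det T).mp hT),
    vecMul_one, h]

theorem eq_conj_of_fixed [DecidableEq n] (hA : IsRankOneIdempotent A) {T : Matrix n n K}
    (hT : IsUnit T) {y g u v : n → K} {c d : K} (hgy : g ⬝ᵥ y = 1) (hc : c ≠ 0) (hd : d ≠ 0)
    (hu : u = c • T *ᵥ y) (hv : v ᵥ* T = d • g) (hAu : A *ᵥ u = u) (hvA : v ᵥ* A = v) :
    A = T * vecMulVec y g * T⁻¹ := by
  have hdet : IsUnit T.det := (isUnit_iff_isUnit_det T).mp hT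
  have hTy : (T⁻¹ * A * T) *ᵥ y = y := by
    rw [hu, mulVec_smul] at hAu
    rw [← mulVec_mulVec, ← mulVec_mulVec, smul_right_injective _ hc hAu, mulVec_mulVec,
      nonsing_inv_mul _ hdet, one_mulVec]
  have hgT : g ᵥ* (T⁻¹ * A * T) = g := by
    apply smul_right_injective _ hd
    simp only
    rw [← smul_vecMul, ← hv, vecMul_vecMul, ← Matrix.mul_assoc, ← Matrix.mul_assoc,
      mul_nonsing_inv _ hdet, Matrix.one_mul, ← vecMul_vecMul, hvA]
  rw [← (hA.conj hT).dotProduct_smul_eq_vecMulVec hTy hgT, hgy, one_smul, ← Matrix.mul_assoc,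
    ← Matrix.mul_assoc, mul_nonsing_inv _ hdet, Matrix.one_mul, Matrix.mul_assoc,
    mul_nonsing_inv _ hdet, Matrix.mul_one]

end IsRankOneIdempotent

end RankOneIdempotent

section FramePreserving

variable {n K L : Type*} [Fintype n] [DecidableEq n] [Field K] [Field L]
  {ψ : Matrix n n K → Matrix n n L} {m x y h k l : n → K}

/-- Maps sending the rank-one idempotents of every basis (a complete orthogonal family) to the
rank-one idempotents of a basis. Values at other matrices are irrelevant. -/
def FramePreserving (ψ : Matrix n n K → Matrix n n L) : Prop :=
  ∀ x f : n → n → K, Biorthogonal x f → ∃ y g : n → n → L, Biorthogonal y g ∧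
    ∀ i, ψ (vecMulVec (x i) (f i)) = vecMulVec (y i) (g i)

namespace FramePreserving

theorem comp_transpose (H : FramePreserving ψ) : FramePreserving fun A ↦ ψ Aᵀ := by
  intro x f hxf
  obtain ⟨y, g, hyg, hψ⟩ := H f x hxf.symm
  exact ⟨y, g, hyg, fun i ↦ by simpa using hψ i⟩

theorem transpose_comp (H : FramePreserving ψ) : FramePreserving fun A ↦ (ψ A)ᵀ := by
  intro x f hxf
  obtain ⟨y, g, hyg, hψ⟩ := H x f hxf
  exact ⟨g, y, hyg.symm, fun i ↦ by simp [hψ]⟩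

theorem exists_biorthogonal {ι : Type*} [Finite ι] [DecidableEq ι] (H : FramePreserving ψ)
    {x f : ι → n → K} (hxf : Biorthogonal x f) :
    ∃ y g : ι → n → L, Biorthogonal y g ∧
      ∀ i, ψ (vecMulVec (x i) (f i)) = vecMulVec (y i) (g i) := by
  obtain ⟨r, w, u, ⟨e⟩, hext⟩ := hxf.exists_extension
  obtain ⟨y, g, hyg, hψ⟩ := H _ _ (hext.comp_injective e.symm.injective)
  refine ⟨y ∘ e ∘ Sum.inl, g ∘ e ∘ Sum.inl,
    hyg.comp_injective (e.injective.comp Sum.inl_injective), fun i ↦ ?_⟩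
  simpa using hψ (e (Sum.inl i))

theorem sum_eq_one_of_card {ι : Type*} [Fintype ι] [DecidableEq ι] (H : FramePreserving ψ)
    {x f : ι → n → K} (hxf : Biorthogonal x f) (e : ι ≃ n) :
    ∑ i, ψ (vecMulVec (x i) (f i)) = 1 := by
  obtain ⟨y, g, hyg, hψ⟩ := H.exists_biorthogonal hxf
  simp_rw [hψ]
  rw [← (hyg.comp_injective e.symm.injective).sum_eq_one]
  exact (e.symm.sum_comp fun i ↦ vecMulVec (y i) (g i)).symm

theorem sum_congr {ι : Type*} [Fintype ι] [DecidableEq ι] (H : FramePreserving ψ)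
    {x f x' f' : ι → n → K} (hxf : Biorthogonal x f) (hxf' : Biorthogonal x' f')
    (hs : ∑ i, vecMulVec (x i) (f i) = ∑ i, vecMulVec (x' i) (f' i)) :
    ∑ i, ψ (vecMulVec (x i) (f i)) = ∑ i, ψ (vecMulVec (x' i) (f' i)) := by
  obtain ⟨r, w, u, ⟨e⟩, hext⟩ := hxf.exists_extension
  have h1 := H.sum_eq_one_of_card hext e
  have h2 := H.sum_eq_one_of_card (hext.sumElim_congr hxf' hs) e
  rw [Fintype.sum_sum_type] at h1 h2
  exact add_right_cancel (h1.trans h2.symm)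

theorem isRankOneIdempotent (H : FramePreserving ψ) (hm : h ⬝ᵥ m = 1) :
    IsRankOneIdempotent (ψ (vecMulVec m h)) := by
  obtain ⟨y, g, hyg, hψ⟩ := H.exists_biorthogonal (biorthogonal_unique hm)
  exact ⟨y (), g (), hyg () (), hψ ()⟩

theorem mul_eq_zero (H : FramePreserving ψ) (hm : h ⬝ᵥ m = 1) (hkx : k ⬝ᵥ x = 1)
    (hx : h ⬝ᵥ x = 0) (km : k ⬝ᵥ m = 0) : ψ (vecMulVec m h) * ψ (vecMulVec x k) = 0 := by
  obtain ⟨y, g, hyg, hψ⟩ := H.exists_biorthogonal (biorthogonal_pair hm hx km hkx)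
  have h0 := hψ 0
  have h1 := hψ 1
  simp only [cons_val_zero, cons_val_one] at h0 h1
  rw [h0, h1, vecMulVec_mul_vecMulVec_eq_smul, hyg 0 1]
  simp

/-- The two sides are the images of two bases of the same plane. -/
theorem map_shear (H : FramePreserving ψ) (hm : h ⬝ᵥ m = 1) (hkx : k ⬝ᵥ x = 1)
    (hx : h ⬝ᵥ x = 0) (km : k ⬝ᵥ m = 0) :
    ψ (vecMulVec m h) + ψ (vecMulVec x k) =
      ψ (vecMulVec m (h + k)) + ψ (vecMulVec (x - m) k) := by
  have hs := H.sum_congr (biorthogonal_pair hm hx km hkx)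
    (biorthogonal_pair (x₁ := m) (x₂ := x - m) (f₁ := h + k) (f₂ := k) (by simp [hm, km])
      (by simp [hm, hkx, hx, km]) km (by simp [hkx, km]))
    (by ext i j; simp [vecMulVec_apply]; ring)
  simpa using hs

/-! ### Injectivity -/

theorem eq_add_of_eq_add (H : FramePreserving ψ) (hm : h ⬝ᵥ m = 1) (km : k ⬝ᵥ m = 0)
    (lm : l ⬝ᵥ m = 0) (hkl : LinearIndependent K ![k, l])
    (heq : ψ (vecMulVec m h) = ψ (vecMulVec m (h + k))) :
    ψ (vecMulVec m h) = ψ (vecMulVec m (h + l)) := by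
  obtain ⟨x, y, hx, hy, kx, ky, lx, ly⟩ := exists_dual_pair hm km lm hkl
  have shear₁ := H.map_shear (m := x) (h := k - l) (k := l) (x := x + y) (by simp [kx, lx])
    (by simp [lx, ly]) (by simp [kx, lx, ky, ly]) lx
  have shear₂ := H.map_shear (m := m) (h := h) (k := l) (x := x + y) hm (by simp [lx, ly])
    (by simp [hx, hy]) lm
  rw [sub_add_cancel, add_sub_cancel_left] at shear₁
  have hsum : ψ (vecMulVec m h) + (ψ (vecMulVec x k) + ψ (vecMulVec y l)) =
      ψ (vecMulVec m (h + l)) + ψ (vecMulVec (x + y - m) l) + ψ (vecMulVec x (k - l)) := by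
    rw [← shear₂, ← shear₁]
    abel
  have orth {z f : n → K} (hz : h ⬝ᵥ z = 0) (fm : f ⬝ᵥ m = 0) (fz : f ⬝ᵥ z = 1) :
      ψ (vecMulVec m h) * ψ (vecMulVec z f) = 0 ∧ ψ (vecMulVec z f) * ψ (vecMulVec m h) = 0 :=
    ⟨H.mul_eq_zero hm fz hz fm, H.mul_eq_zero fz hm fm hz⟩
  have orthx := orth hx km kx
  have orthy := orth hy lm ly
  have orthx' := orth (f := k - l) hx (by simp [km, lm]) (by simp [kx, lx])
  -- here the coincidence enters: `x + y - m` is killed by `h + k`, but not by `h`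
  have orthxy : ψ (vecMulVec m h) * ψ (vecMulVec (x + y - m) l) = 0 ∧
      ψ (vecMulVec (x + y - m) l) * ψ (vecMulVec m h) = 0 := by
    have hkm : (h + k) ⬝ᵥ m = 1 := by simp [hm, km]
    have hkz : (h + k) ⬝ᵥ (x + y - m) = 0 := by simp [hm, hx, hy, kx, ky, km]
    have lz : l ⬝ᵥ (x + y - m) = 1 := by simp [lx, ly, lm]
    rw [heq]
    exact ⟨H.mul_eq_zero hkm lz hkz lm, H.mul_eq_zero lz hkm lm hkz⟩
  have hP := H.isRankOneIdempotent hm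
  refine hP.eq_of_mul_eq (H.isRankOneIdempotent (by simp [hm, lm])) ?_ ?_
  · simpa [mul_add, orthx.1, orthy.1, orthx'.1, orthxy.1, hP.mul_self] using
      (congrArg (ψ (vecMulVec m h) * ·) hsum).symm
  · simpa [add_mul, orthx.2, orthy.2, orthx'.2, orthxy.2, hP.mul_self] using
      (congrArg (· * ψ (vecMulVec m h)) hsum).symm

/-- The image of a rank-one idempotent with range spanned by `m` does not depend on its kernel.
Injectivity of frame preserving maps is proved by propagating this property to a contradiction. -/
def ConstantAt (ψ : Matrix n n K → Matrix n n L) (m : n → K) : Prop :=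
  ∀ ⦃h h'⦄, h ⬝ᵥ m = 1 → h' ⬝ᵥ m = 1 → ψ (vecMulVec m h) = ψ (vecMulVec m h')

theorem constantAt_of_eq_add (H : FramePreserving ψ) (hn : 2 < Fintype.card n) (hm : h ⬝ᵥ m = 1)
    (km : k ⬝ᵥ m = 0) (hk : k ≠ 0) (heq : ψ (vecMulVec m h) = ψ (vecMulVec m (h + k))) :
    ConstantAt ψ m := by
  obtain ⟨l, lm, hkl⟩ := exists_linearIndependent_pair hn m hk
  have main ⦃h'⦄ (hm' : h' ⬝ᵥ m = 1) : ψ (vecMulVec m h) = ψ (vecMulVec m h') := by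
    obtain ⟨d, rfl⟩ : ∃ d, h' = h + d := ⟨h' - h, (add_sub_cancel h h').symm⟩
    have dm : d ⬝ᵥ m = 0 := by simpa [hm] using hm'
    by_cases hkd : LinearIndependent K ![k, d]
    · exact H.eq_add_of_eq_add hm km dm hkd heq
    by_cases hld : LinearIndependent K ![l, d]
    · exact H.eq_add_of_eq_add hm lm dm hld (H.eq_add_of_eq_add hm km lm hkl heq)
    have hl : l ≠ 0 := hkl.ne_zero 1
    rw [LinearIndependent.pair_iff' hk] at hkd
    rw [LinearIndependent.pair_iff' hl] at hld
    push Not at hkd hld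
    obtain ⟨a, rfl⟩ := hkd
    obtain ⟨b, hb⟩ := hld
    have ha := (LinearIndependent.pair_iff.mp hkl a (-b) (by rw [neg_smul, hb, add_neg_cancel])).1
    rw [ha, zero_smul, add_zero]
  exact fun h₁ h₂ hm₁ hm₂ ↦ (main hm₁).symm.trans (main hm₂)

theorem ConstantAt.comp_transpose (H : FramePreserving ψ) (hn : 2 < Fintype.card n)
    (hψ : ConstantAt ψ m) (hm : m ≠ 0) (hh : h ≠ 0) (hhm : h ⬝ᵥ m = 0) :
    ConstantAt (fun A ↦ ψ Aᵀ) h := by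
  obtain ⟨p, f, hp, fm, fp⟩ := exists_complementary_pair hm hh hhm
  have shear := H.map_shear fm hp fp hhm
  rw [hψ (h := f + h) (h' := f) (by simp [fm, hhm]) fm] at shear
  refine H.comp_transpose.constantAt_of_eq_add hn (h := p) (k := -m) ?_ ?_ (neg_ne_zero.mpr hm) ?_
  · rwa [dotProduct_comm]
  · rwa [neg_dotProduct, neg_eq_zero, dotProduct_comm]
  · simpa [← sub_eq_add_neg] using add_left_cancel shear

theorem not_constantAt (H : FramePreserving ψ) (hn : 2 < Fintype.card n) (hm : m ≠ 0) :
    ¬ ConstantAt ψ m := by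
  intro hψ
  have covector {z f : n → K} (hz : z ≠ 0) (hf : f ≠ 0) (hfz : f ⬝ᵥ z = 0)
      (h : ConstantAt ψ z) : ConstantAt (fun A ↦ ψ Aᵀ) f := h.comp_transpose H hn hz hf hfz
  have vectors (z : n → K) (hz : z ≠ 0) : ConstantAt ψ z := by
    obtain ⟨k, hk, hkmz⟩ := exists_ne_zero_forall_dotProduct_eq_zero (by simpa using hn) ![m, z]
    simpa using (covector hm hk (hkmz 0) hψ).comp_transpose H.comp_transpose hn hk hz
      (by rw [dotProduct_comm]; exact hkmz 1)
  have covectors (f : n → K) (hf : f ≠ 0) : ConstantAt (fun A ↦ ψ Aᵀ) f := by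
    obtain ⟨z, hz, hfz⟩ := exists_ne_zero_forall_dotProduct_eq_zero (ι := Unit)
      (by rw [Fintype.card_unit]; lia) fun _ ↦ f
    exact covector hz hf (by rw [dotProduct_comm]; exact hfz ()) (vectors z hz)
  obtain ⟨k, hk, km⟩ := exists_ne_zero_forall_dotProduct_eq_zero (ι := Unit)
    (by rw [Fintype.card_unit]; lia) fun _ ↦ m
  obtain ⟨p, f, kp, fm, fp⟩ := exists_complementary_pair hm hk (km ())
  have fkm : (f + k) ⬝ᵥ m = 1 := by simp [fm, km ()]
  have fkp : (f + k) ⬝ᵥ p = 1 := by simp [fp, kp]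
  have hf : f + k ≠ 0 := fun h0 ↦ by simp [h0] at fkm
  have hp : p ≠ 0 := fun h0 ↦ by simp [h0] at kp
  have heq : ψ (vecMulVec m f) = ψ (vecMulVec p k) := calc
    ψ (vecMulVec m f) = ψ (vecMulVec m (f + k)) := vectors m hm fm fkm
    _ = ψ (vecMulVec p (f + k)) := by
      simpa using covectors _ hf (h := m) (h' := p) (by rwa [dotProduct_comm])
        (by rwa [dotProduct_comm])
    _ = ψ (vecMulVec p k) := vectors p hp fkp kp
  have hmul := H.mul_eq_zero fm kp fp (km ())
  rw [heq, (H.isRankOneIdempotent kp).mul_self] at hmul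
  exact (H.isRankOneIdempotent kp).ne_zero hmul

theorem vecMulVec_injective (H : FramePreserving ψ) (hn : 2 < Fintype.card n) (hm : h ⬝ᵥ m = 1)
    (km : k ⬝ᵥ m = 1) (heq : ψ (vecMulVec m h) = ψ (vecMulVec m k)) : h = k := by
  by_contra hhk
  have hm0 : m ≠ 0 := fun h0 ↦ by simp [h0] at hm
  exact H.not_constantAt hn hm0 (H.constantAt_of_eq_add hn (k := k - h) hm (by simp [hm, km])
    (sub_ne_zero.mpr (Ne.symm hhk)) (by rw [heq, add_sub_cancel]))

end FramePreserving

end FramePreserving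

section Straight

variable {n K L : Type*} [Fintype n]

theorem forall_or_forall_of_forall_or {α : Type*} {r s : α → α → Prop}
    (hr : ∀ ⦃a b⦄, r a b → r b a) (hr' : ∀ ⦃a b c⦄, r a b → r b c → r a c)
    (hs : ∀ ⦃a b⦄, s a b → s b a) (hs' : ∀ ⦃a b c⦄, s a b → s b c → s a c)
    (h : ∀ a b, r a b ∨ s a b) : (∀ a b, r a b) ∨ ∀ a b, s a b := by
  by_contra! hne
  obtain ⟨⟨a, b, hab⟩, c, d, hcd⟩ := hne
  have := h a c
  have := h b d
  have := h a d
  have := h b c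
  grind

/-- `Q` is a projection in the plane of `P₀, P₁`, and `U` one in the plane of `P₁, P₂`. -/
theorem IsRankOneIdempotent.sameRange_or_sameRange_transpose [Field L]
    {P₀ P₁ P₂ Q U : Matrix n n L} (h₀ : IsRankOneIdempotent P₀) (h₁ : IsRankOneIdempotent P₁)
    (h₂ : IsRankOneIdempotent P₂) (hQ : IsRankOneIdempotent Q) (hU : IsRankOneIdempotent U)
    (h₀₁ : P₀ * P₁ = 0) (h₁₀ : P₁ * P₀ = 0) (h₀₂ : P₀ * P₂ = 0) (h₂₀ : P₂ * P₀ = 0)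
    (h₁₂ : P₁ * P₂ = 0) (h₂₁ : P₂ * P₁ = 0) (hQU : Q * U = 0) (hUQ : U * Q = 0)
    (hQl : (P₀ + P₁) * Q = Q) (hQr : Q * (P₀ + P₁) = Q)
    (hUl : (P₁ + P₂) * U = U) (hUr : U * (P₁ + P₂) = U) (hne : U ≠ P₂) :
    SameRange P₀ Q ∨ SameRange P₀ᵀ Qᵀ := by
  have hmul : (P₀ + P₁) * (P₁ + P₂) = P₁ := by simp [mul_add, add_mul, h₁.mul_self, *]
  have hmul' : (P₁ + P₂) * (P₀ + P₁) = P₁ := by simp [mul_add, add_mul, h₁.mul_self, *]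
  have hQ₁U : Q * P₁ * U = 0 := by
    rw [← hmul, ← Matrix.mul_assoc, hQr, Matrix.mul_assoc, hUl, hQU]
  have hU₁Q : U * P₁ * Q = 0 := by
    rw [← hmul', ← Matrix.mul_assoc, hUr, Matrix.mul_assoc, hQl, hUQ]
  rcases h₁.mul_eq_zero_or_of_mul_mul_eq_zero hQ₁U with hQ₁ | h₁U
  · refine .inr (h₀.transpose.sameRange hQ.transpose ?_)
    rw [← transpose_mul]
    congr 1
    simpa [mul_add, hQ₁] using hQr
  rcases h₁.mul_eq_zero_or_of_mul_mul_eq_zero hU₁Q with hU₁ | h₁Q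
  · exact (hne (hU.eq_of_mul_eq h₂ (by simpa [mul_add, hU₁] using hUr)
      (by simpa [add_mul, h₁U] using hUl))).elim
  · exact .inl (h₀.sameRange hQ (by simpa [add_mul, h₁Q] using hQl))

namespace FramePreserving

variable [DecidableEq n] [Field K] [Field L] {ψ : Matrix n n K → Matrix n n L}
  {m x h k l : n → K}

theorem add_mul_of_shear (H : FramePreserving ψ) (hm : h ⬝ᵥ m = 1) (hkx : k ⬝ᵥ x = 1)
    (hx : h ⬝ᵥ x = 0) (km : k ⬝ᵥ m = 0) :
    (ψ (vecMulVec m h) + ψ (vecMulVec x k)) * ψ (vecMulVec m (h + k)) =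
      ψ (vecMulVec m (h + k)) := by
  have hm' : (h + k) ⬝ᵥ m = 1 := by simp [hm, km]
  rw [H.map_shear hm hkx hx km, add_mul, (H.isRankOneIdempotent hm').mul_self,
    H.mul_eq_zero (by simp [hkx, km]) hm' km (by simp [hm, hkx, hx, km]), add_zero]

theorem mul_add_of_shear (H : FramePreserving ψ) (hm : h ⬝ᵥ m = 1) (hkx : k ⬝ᵥ x = 1)
    (hx : h ⬝ᵥ x = 0) (km : k ⬝ᵥ m = 0) :
    ψ (vecMulVec m (h + k)) * (ψ (vecMulVec m h) + ψ (vecMulVec x k)) =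
      ψ (vecMulVec m (h + k)) := by
  have := H.transpose_comp.add_mul_of_shear hm hkx hx km
  simpa [← transpose_add, ← transpose_mul] using this

theorem sameRange_or_sameRange_transpose (H : FramePreserving ψ) (hn : 2 < Fintype.card n)
    (hm : h ⬝ᵥ m = 1) (km : k ⬝ᵥ m = 1) :
    SameRange (ψ (vecMulVec m h)) (ψ (vecMulVec m k)) ∨
      SameRange (ψ (vecMulVec m h))ᵀ (ψ (vecMulVec m k))ᵀ := by
  obtain ⟨d, rfl⟩ : ∃ d, k = h + d := ⟨k - h, (add_sub_cancel h k).symm⟩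
  have dm : d ⬝ᵥ m = 0 := by simpa [hm] using km
  have hP := H.isRankOneIdempotent hm
  obtain rfl | hd := eq_or_ne d 0
  · rw [add_zero]
    exact .inl (hP.sameRange hP hP.mul_self)
  obtain ⟨l, lm, hdl⟩ := exists_linearIndependent_pair hn m hd
  obtain ⟨x, y, hx, hy, dx, dy, lx, ly⟩ := exists_dual_pair hm dm lm hdl
  have ldm : (l + d) ⬝ᵥ m = 0 := by simp [lm, dm]
  have ldy : (l + d) ⬝ᵥ y = 1 := by simp [ly, dy]
  have hdy : (h + d) ⬝ᵥ y = 0 := by simp [hy, dy]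
  refine hP.sameRange_or_sameRange_transpose (P₁ := ψ (vecMulVec x d)) (P₂ := ψ (vecMulVec y l))
    (U := ψ (vecMulVec y (l + d))) (H.isRankOneIdempotent dx) (H.isRankOneIdempotent ly)
    (H.isRankOneIdempotent km) (H.isRankOneIdempotent ldy) (H.mul_eq_zero hm dx hx dm)
    (H.mul_eq_zero dx hm dm hx) (H.mul_eq_zero hm ly hy lm) (H.mul_eq_zero ly hm lm hy)
    (H.mul_eq_zero dx ly dy lx) (H.mul_eq_zero ly dx lx dy) (H.mul_eq_zero km ldy hdy ldm)
    (H.mul_eq_zero ldy km ldm hdy) (H.add_mul_of_shear hm dx hx dm)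
    (H.mul_add_of_shear hm dx hx dm) ?_ ?_ fun heq ↦ hd ?_
  · rw [add_comm (ψ (vecMulVec x d)), H.add_mul_of_shear ly dx lx dy]
  · rw [add_comm (ψ (vecMulVec x d)), H.mul_add_of_shear ly dx lx dy]
  · simpa using H.vecMulVec_injective hn ldy ly heq

/-- The images of all rank-one idempotents with range spanned by `m` have the same range. -/
def RangeFixedAt (ψ : Matrix n n K → Matrix n n L) (m : n → K) : Prop :=
  ∀ ⦃h h'⦄, h ⬝ᵥ m = 1 → h' ⬝ᵥ m = 1 → SameRange (ψ (vecMulVec m h)) (ψ (vecMulVec m h'))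

theorem rangeFixedAt_or (H : FramePreserving ψ) (hn : 2 < Fintype.card n) (m : n → K) :
    RangeFixedAt ψ m ∨ RangeFixedAt (fun A ↦ (ψ A)ᵀ) m := by
  refine (forall_or_forall_of_forall_or (α := {h : n → K // h ⬝ᵥ m = 1})
    (r := fun h k ↦ SameRange (ψ (vecMulVec m h)) (ψ (vecMulVec m k)))
    (s := fun h k ↦ SameRange (ψ (vecMulVec m h))ᵀ (ψ (vecMulVec m k))ᵀ)
    (fun _ _ h ↦ h.symm) (fun _ _ _ h h' ↦ h.trans h') (fun _ _ h ↦ h.symm)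
    (fun _ _ _ h h' ↦ h.trans h') fun h k ↦ H.sameRange_or_sameRange_transpose hn h.2 k.2).imp
    ?_ ?_
  · exact fun hr h k hm km ↦ hr ⟨h, hm⟩ ⟨k, km⟩
  · exact fun hr h k hm km ↦ hr ⟨h, hm⟩ ⟨k, km⟩

theorem RangeFixedAt.not_comp_transpose (hψ : RangeFixedAt ψ m) (H : FramePreserving ψ)
    (hn : 2 < Fintype.card n) (hm : m ≠ 0) (hh : h ≠ 0) (hhm : h ⬝ᵥ m = 0) :
    ¬ RangeFixedAt (fun A ↦ ψ Aᵀ) h := by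
  intro hψ'
  obtain ⟨p, f, hp, fm, fp⟩ := exists_complementary_pair hm hh hhm
  have fhm : (f + h) ⬝ᵥ m = 1 := by simp [fm, hhm]
  have hpm : h ⬝ᵥ (p - m) = 1 := by simp [hp, hhm]
  have shear := H.map_shear fm hp fp hhm
  have hAA' := (hψ fm fhm).1
  have hBB' : ψ (vecMulVec p h) * ψ (vecMulVec (p - m) h) = ψ (vecMulVec (p - m) h) := by
    simpa using (hψ' (h := p) (h' := p - m) (by rwa [dotProduct_comm])
      (by rwa [dotProduct_comm])).1
  have hAB := H.mul_eq_zero fm hp fp hhm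
  have heq : ψ (vecMulVec m f) = ψ (vecMulVec m (f + h)) := calc
    ψ (vecMulVec m f) = ψ (vecMulVec m f) * (ψ (vecMulVec m f) + ψ (vecMulVec p h)) := by
      rw [mul_add, (H.isRankOneIdempotent fm).mul_self, hAB, add_zero]
    _ = ψ (vecMulVec m (f + h)) := by
      rw [shear, mul_add, hAA', ← hBB', ← Matrix.mul_assoc, hAB, zero_mul, add_zero]
  exact hh (by simpa using (H.vecMulVec_injective hn fm fhm heq).symm)

/-- The image of a rank-one idempotent has a range depending only on its range, and a kernel
depending only on its kernel, as for `A ↦ T * A * T⁻¹` and in contrast to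
`A ↦ T * Aᵀ * T⁻¹`. -/
structure IsStraight (ψ : Matrix n n K → Matrix n n L) : Prop where
  range : ∀ m ≠ 0, RangeFixedAt ψ m
  ker : ∀ h ≠ 0, RangeFixedAt (fun A ↦ (ψ Aᵀ)ᵀ) h

theorem RangeFixedAt.transpose_comp_transpose (hψ : RangeFixedAt ψ m) (H : FramePreserving ψ)
    (hn : 2 < Fintype.card n) (hm : m ≠ 0) (hh : h ≠ 0) (hhm : h ⬝ᵥ m = 0) :
    RangeFixedAt (fun A ↦ (ψ Aᵀ)ᵀ) h :=
  (H.comp_transpose.rangeFixedAt_or hn h).resolve_left (hψ.not_comp_transpose H hn hm hh hhm)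

theorem RangeFixedAt.isStraight (hψ : RangeFixedAt ψ m) (H : FramePreserving ψ)
    (hn : 2 < Fintype.card n) (hm : m ≠ 0) : IsStraight ψ := by
  have range (z : n → K) (hz : z ≠ 0) : RangeFixedAt ψ z := by
    obtain ⟨k, hk, hkmz⟩ := exists_ne_zero_forall_dotProduct_eq_zero (by simpa using hn) ![m, z]
    simpa using (hψ.transpose_comp_transpose H hn hm hk (hkmz 0)).transpose_comp_transpose
      H.comp_transpose.transpose_comp hn hk hz (by rw [dotProduct_comm]; exact hkmz 1)
  refine ⟨range, fun h hh ↦ ?_⟩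
  obtain ⟨z, hz, hhz⟩ := exists_ne_zero_forall_dotProduct_eq_zero (ι := Unit)
    (by rw [Fintype.card_unit]; lia) fun _ ↦ h
  exact (range z hz).transpose_comp_transpose H hn hz hh (by rw [dotProduct_comm]; exact hhz ())

theorem isStraight_or (H : FramePreserving ψ) (hn : 2 < Fintype.card n) :
    IsStraight ψ ∨ IsStraight fun A ↦ (ψ A)ᵀ := by
  have : Nonempty n := Fintype.card_pos_iff.mp (by lia)
  exact (H.rangeFixedAt_or hn 1).imp (·.isStraight H hn one_ne_zero)
    (·.isStraight H.transpose_comp hn one_ne_zero)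

/-! ### Semilinearity of frame preserving maps -/

theorem RangeFixedAt.exists_mulVec_eq (hψ : RangeFixedAt ψ m) (H : FramePreserving ψ)
    (hm : m ≠ 0) : ∃ y : n → L, y ≠ 0 ∧ ∀ h, h ⬝ᵥ m = 1 → ψ (vecMulVec m h) *ᵥ y = y := by
  obtain ⟨h, hhm⟩ := exists_dotProduct_eq_one hm
  obtain ⟨y, g, hgy, hyg⟩ := H.isRankOneIdempotent hhm
  refine ⟨y, fun h0 ↦ by simp [h0] at hgy, fun k hkm ↦ ?_⟩
  have hy : ψ (vecMulVec m h) *ᵥ y = y := by simp [hyg, vecMulVec_mulVec, hgy]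
  rw [← hy, mulVec_mulVec, (hψ hkm hhm).1]

theorem preservesIncidence (H : FramePreserving ψ) {a b : (n → K) → n → L}
    (ha0 : ∀ m ≠ 0, a m ≠ 0) (hb0 : ∀ h ≠ 0, b h ≠ 0)
    (ha : ∀ m h, h ⬝ᵥ m = 1 → ψ (vecMulVec m h) *ᵥ a m = a m)
    (hb : ∀ m h, h ⬝ᵥ m = 1 → b h ᵥ* ψ (vecMulVec m h) = b h) : PreservesIncidence a b := by
  intro m h hm hh
  refine ⟨fun hab ↦ ?_, fun hhm ↦ ?_⟩
  · by_contra hhm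
    have hm' : ((h ⬝ᵥ m)⁻¹ • h) ⬝ᵥ m = 1 := by simp [hhm]
    refine (H.isRankOneIdempotent hm').dotProduct_ne_zero (ha0 m hm) (hb0 h hh) (ha m _ hm') ?_ hab
    rw [vecMulVec_smul, ← smul_vecMulVec]
    exact hb _ h (by simp [hhm])
  · obtain ⟨p, f, hp, fm, fp⟩ := exists_complementary_pair hm hh hhm
    rw [← ha m f fm, ← hb p h hp, dotProduct_mulVec, vecMul_vecMul, H.mul_eq_zero hp fm hhm fp,
      vecMul_zero, zero_dotProduct]

theorem IsStraight.exists_fixed (hψ : IsStraight ψ) (H : FramePreserving ψ) :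
    ∃ a b : (n → K) → n → L, (∀ m ≠ 0, a m ≠ 0) ∧ (∀ h ≠ 0, b h ≠ 0) ∧
      ∀ m h, h ⬝ᵥ m = 1 →
        ψ (vecMulVec m h) *ᵥ a m = a m ∧ b h ᵥ* ψ (vecMulVec m h) = b h := by
  classical
  choose! a ha ha' using fun m hm ↦ (hψ.range m hm).exists_mulVec_eq H hm
  choose! b hb hb' using fun h hh ↦
    (hψ.ker h hh).exists_mulVec_eq H.comp_transpose.transpose_comp hh
  refine ⟨a, b, ha, hb, fun m h hm ↦ ⟨ha' m (fun h0 ↦ by simp [h0] at hm) h hm, ?_⟩⟩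
  simpa [mulVec_transpose] using
    hb' h (fun h0 ↦ by simp [h0] at hm) m (by rwa [dotProduct_comm])

theorem exists_semilinear (H : FramePreserving ψ) (hn : 2 < Fintype.card n)
    (hψ : IsStraight ψ) : ∃ (T : Matrix n n L) (τ : K →+* L), IsUnit T ∧
      ∀ P, IsRankOneIdempotent P → ψ P = T * P.map τ * T⁻¹ := by
  obtain ⟨a, b, ha0, hb0, hab⟩ := hψ.exists_fixed H
  obtain ⟨T, τ, hT, hTa, hTb⟩ := (H.preservesIncidence ha0 hb0 (fun m h hm ↦ (hab m h hm).1)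
    fun m h hm ↦ (hab m h hm).2).exists_semilinear hn
  refine ⟨T, τ, hT, ?_⟩
  rintro _ ⟨m, h, hm, rfl⟩
  obtain ⟨c, hc, hac⟩ := hTa m fun h0 ↦ by simp [h0] at hm
  obtain ⟨d, hd, hbd⟩ := hTb h fun h0 ↦ by simp [h0] at hm
  have hτ : (τ ∘ h) ⬝ᵥ (τ ∘ m) = 1 := by rw [← RingHom.map_dotProduct, hm, map_one]
  have hmap : (vecMulVec m h).map τ = vecMulVec (τ ∘ m) (τ ∘ h) := by
    ext i j
    simp [vecMulVec_apply]
  rw [hmap]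
  exact (H.isRankOneIdempotent hm).eq_conj_of_fixed hT hτ hc hd hac hbd (hab m h hm).1
    (hab m h hm).2

end FramePreserving

end Straight

/-! ### Connectedness and density along complex lines -/

section ComplexLines

theorem isPreconnected_of_countable_lineMap_notMem {E : Type*} [AddCommGroup E] [Module ℂ E]
    [TopologicalSpace E] [IsTopologicalAddGroup E] [ContinuousSMul ℂ E] {s : Set E}
    (h : ∀ x ∈ s, ∀ y ∈ s, {z : ℂ | AffineMap.lineMap x y z ∉ s}.Countable) :
    IsPreconnected s := by
  refine isPreconnected_of_forall_pair fun x hx y hy ↦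
    ⟨AffineMap.lineMap x y '' {z : ℂ | AffineMap.lineMap x y z ∉ s}ᶜ, ?_, ?_, ?_, ?_⟩
  · rintro _ ⟨z, hz, rfl⟩
    simpa using hz
  · exact ⟨0, by simpa using hx, by simp⟩
  · exact ⟨1, by simpa using hy, by simp⟩
  · exact (((h x hx y hy).isPathConnected_compl_of_one_lt_rank
      (by simp)).isConnected.isPreconnected).image _ AffineMap.lineMap_continuous.continuousOn

theorem mem_closure_of_countable_lineMap_notMem {E : Type*} [AddCommGroup E] [Module ℂ E]
    [TopologicalSpace E] [IsTopologicalAddGroup E] [ContinuousSMul ℂ E] {s : Set E} {x y : E}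
    (h : {z : ℂ | AffineMap.lineMap x y z ∉ s}.Countable) : x ∈ closure s := by
  have hx : AffineMap.lineMap x y (0 : ℂ) ∈ closure s :=
    AffineMap.lineMap_continuous.continuousWithinAt.mem_closure (h.dense_compl ℝ 0)
      fun z hz ↦ not_not.1 hz
  rwa [AffineMap.lineMap_apply_zero] at hx

theorem eq_univ_of_isClosed_of_pairwise_disjoint {X α : Type*} [TopologicalSpace X]
    [PreconnectedSpace X] [Finite α] {F : α → Set X} (hF : ∀ a, IsClosed (F a))
    (hdisj : Pairwise (Function.onFun Disjoint F)) (hcover : ⋃ a, F a = Set.univ) {a : α}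
    (ha : (F a).Nonempty) : F a = Set.univ := by
  refine IsClopen.eq_univ ⟨hF a, ?_⟩ ha
  have hcompl : (F a)ᶜ = ⋃ b ∈ ({a}ᶜ : Set α), F b := by
    ext x
    obtain ⟨c, hc⟩ := Set.mem_iUnion.1 (hcover.ge (Set.mem_univ x))
    have hx : ∀ {b}, x ∈ F b → b = c := fun {b} hb ↦
      by_contra fun hbc ↦ Set.disjoint_left.1 (hdisj hbc) hb hc
    simp only [Set.mem_compl_iff, Set.mem_singleton_iff, Set.mem_iUnion, exists_prop]
    refine ⟨fun hxa ↦ ⟨c, fun hca ↦ hxa (hca ▸ hc), hc⟩, ?_⟩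
    rintro ⟨b, hba, hb⟩ hxa
    exact hba ((hx hb).trans (hx hxa).symm)
  rw [← isClosed_compl_iff, hcompl]
  exact (Set.toFinite _).isClosed_biUnion fun b _ ↦ hF b

theorem eq_of_mem_range_of_injective {X n α : Type*} [TopologicalSpace X] [PreconnectedSpace X]
    [Finite n] [TopologicalSpace α] [T2Space α] {c : X → α} {l : X → n → α} (hc : Continuous c)
    (hl : Continuous l) (hinj : ∀ x, (l x).Injective) (hmem : ∀ x, c x ∈ Set.range (l x))
    {x₀ : X} {i : n} (hi : c x₀ = l x₀ i) (x : X) : c x = l x i := by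
  have huniv : {x | c x = l x i} = Set.univ := by
    refine eq_univ_of_isClosed_of_pairwise_disjoint (F := fun j ↦ {x | c x = l x j})
      (fun j ↦ isClosed_eq hc ((continuous_apply j).comp hl)) ?_ ?_ ⟨x₀, hi⟩
    · exact fun j k hjk ↦ Set.disjoint_left.2 fun x hj hk ↦ hjk (hinj x (hj.symm.trans hk))
    · exact Set.eq_univ_of_forall fun x ↦
        Set.mem_iUnion.2 ((hmem x).imp fun j hj ↦ hj.symm)
  exact huniv.ge (Set.mem_univ x)

end ComplexLines

section Charpoly

theorem rootMultiplicity_prod_X_sub_C_pow {n K : Type*} [Fintype n] [Field K] {l : n → K}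
    (hl : l.Injective) (m : n → ℕ) (i : n) :
    (∏ j, (Polynomial.X - Polynomial.C (l j)) ^ m j).rootMultiplicity (l i) = m i := by
  classical
  have hne : ∏ j, (Polynomial.X - Polynomial.C (l j)) ^ m j ≠ 0 :=
    Finset.prod_ne_zero_iff.2 fun j _ ↦ pow_ne_zero _ (Polynomial.X_sub_C_ne_zero _)
  rw [← Polynomial.count_roots, Polynomial.roots_prod _ _ hne, Multiset.count_bind]
  simp [Multiset.count_singleton, hl.eq_iff]

variable {n K : Type*} [Fintype n] [DecidableEq n] [Field K]

theorem charpoly_eq_prod_of_spectrum_subset_range [IsAlgClosed K] {M : Matrix n n K} {l : n → K}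
    (hl : l.Injective) (h : spectrum K M ⊆ Set.range l) :
    M.charpoly = ∏ j, (Polynomial.X - Polynomial.C (l j)) ^ M.charpoly.rootMultiplicity (l j) := by
  classical
  have hroots : M.charpoly.roots.toFinset ⊆ Finset.univ.image l := fun t ht ↦ by
    rw [Multiset.mem_toFinset, Polynomial.mem_roots M.charpoly_monic.ne_zero,
      ← mem_spectrum_iff_isRoot_charpoly] at ht
    simpa using h ht
  conv_lhs =>
    rw [(IsAlgClosed.splits M.charpoly).eq_prod_roots_of_monic M.charpoly_monic,
      Finset.prod_multiset_map_count]
  rw [Finset.prod_subset hroots, Finset.prod_image hl.injOn]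
  · simp only [Polynomial.count_roots]
  · intro t _ ht
    rw [Multiset.mem_toFinset] at ht
    rw [Multiset.count_eq_zero_of_notMem ht, pow_zero]

theorem mem_spectrum_iff_rootMultiplicity_charpoly_ne_zero {M : Matrix n n K} {t : K} :
    t ∈ spectrum K M ↔ M.charpoly.rootMultiplicity t ≠ 0 := by
  rw [mem_spectrum_iff_isRoot_charpoly, Ne, Polynomial.rootMultiplicity_eq_zero_iff]
  simp [M.charpoly_monic.ne_zero]

/-- The coefficients of the characteristic polynomial being continuous, having prescribed
multiplicities is a closed condition, and there are finitely many choices of multiplicities. -/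
theorem rootMultiplicity_charpoly_eq_of_continuous {X : Type*} [TopologicalSpace X]
    [PreconnectedSpace X] {M : X → Matrix n n ℂ} {l : X → n → ℂ} (hM : Continuous M)
    (hl : Continuous l) (hinj : ∀ x, (l x).Injective)
    (h : ∀ x, spectrum ℂ (M x) ⊆ Set.range (l x)) (x₀ x : X) (i : n) :
    (M x).charpoly.rootMultiplicity (l x i) = (M x₀).charpoly.rootMultiplicity (l x₀ i) := by
  let mult (x : X) (j : n) : Fin (Fintype.card n + 1) :=
    ⟨(M x).charpoly.rootMultiplicity (l x j), Nat.lt_succ_of_le <| by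
      rw [← Polynomial.count_roots, ← (M x).charpoly_natDegree_eq_dim]
      exact (Multiset.count_le_card _ _).trans (Polynomial.card_roots' _)⟩
  have mult_iff (m : n → Fin (Fintype.card n + 1)) : mult ⁻¹' {m} = {x | ∀ t,
      (scalar n t - M x).det = ∏ j, (t - l x j) ^ (m j : ℕ)} := by
    ext x
    constructor
    · rintro rfl t
      rw [← eval_charpoly, charpoly_eq_prod_of_spectrum_subset_range (hinj x) (h x)]
      simp [Polynomial.eval_prod, mult]
    · intro hx
      have hprod : (M x).charpoly = ∏ j, (Polynomial.X - Polynomial.C (l x j)) ^ (m j : ℕ) :=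
        Polynomial.funext fun t ↦ by rw [eval_charpoly, hx]; simp [Polynomial.eval_prod]
      ext j
      exact (congrArg (Polynomial.rootMultiplicity (l x j)) hprod).trans
        (rootMultiplicity_prod_X_sub_C_pow (hinj x) (fun j ↦ (m j : ℕ)) j)
  have huniv := eq_univ_of_isClosed_of_pairwise_disjoint (F := fun m ↦ mult ⁻¹' {m})
    (fun m ↦ by
      simp only [mult_iff, Set.ofPred_forall]
      exact isClosed_iInter fun t ↦ isClosed_eq (by fun_prop) (by fun_prop))
    (fun m m' hm ↦ (Set.disjoint_singleton.2 hm).preimage mult)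
    (Set.eq_univ_of_forall fun x ↦ Set.mem_iUnion.2 ⟨mult x, rfl⟩) (a := mult x₀) ⟨x₀, rfl⟩
  exact congrArg Fin.val (congrFun (huniv.ge (Set.mem_univ x)) i)

end Charpoly

section Diagonalization

theorem exists_map_evalRingHom_eq_lineMap {n K : Type*} [CommRing K] (A B : Matrix n n K) :
    ∃ M : Matrix n n (Polynomial K), ∀ z,
      M.map (Polynomial.evalRingHom z) = AffineMap.lineMap A B z := by
  refine ⟨(Polynomial.X : Polynomial K) • (B - A).map Polynomial.C + A.map Polynomial.C,
    fun z ↦ ?_⟩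
  ext i j
  simp [AffineMap.lineMap_apply_module']

variable {n K : Type*} [Fintype n] [DecidableEq n] [Field K]

theorem exists_eq_conj_diagonal_of_forall_mem_spectrum {M : Matrix n n K} {l : n → K}
    (hl : l.Injective) (h : ∀ j, l j ∈ spectrum K M) :
    ∃ R : Matrix n n K, IsUnit R ∧ M = R * diagonal l * R⁻¹ := by
  have heigen : ∀ j, ∃ v : n → K, v ≠ 0 ∧ M *ᵥ v = l j • v := fun j ↦ by
    obtain ⟨v, hv, hMv⟩ := exists_mulVec_eq_zero_iff.2 <|
      (M.eval_charpoly (l j)).symm.trans (mem_spectrum_iff_isRoot_charpoly.1 (h j))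
    rw [sub_mulVec, sub_eq_zero] at hMv
    exact ⟨v, hv, by rw [← hMv]; simp⟩
  choose v hv hMv using heigen
  have hR : IsUnit (of v)ᵀ := by
    rw [← linearIndependent_cols_iff_isUnit]
    refine Module.End.eigenvectors_linearIndependent' M.mulVecLin l hl v fun j ↦ ?_
    rw [Module.End.hasEigenvector_iff, Module.End.mem_eigenspace_iff]
    exact ⟨by simpa using hMv j, hv j⟩
  have hMR : M * (of v)ᵀ = (of v)ᵀ * diagonal l := by
    ext i j
    rw [mul_diagonal, mul_comm]
    exact congrFun (hMv j) i
  exact ⟨(of v)ᵀ, hR, by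
    rw [← hMR, mul_nonsing_inv_cancel_right _ _ ((isUnit_iff_isUnit_det _).1 hR)]⟩

theorem spectrum_conj_diagonal {S : Matrix n n K} (hS : IsUnit S) (l : n → K) :
    spectrum K (S * diagonal l * S⁻¹) = Set.range l := by
  lift S to (Matrix n n K)ˣ using hS
  rw [← coe_units_inv, spectrum.units_conjugate, spectrum_diagonal]

theorem conj_diagonal_mul_comm {S : Matrix n n K} (hS : IsUnit S) (l l' : n → K) :
    S * diagonal l * S⁻¹ * (S * diagonal l' * S⁻¹) =
      S * diagonal l' * S⁻¹ * (S * diagonal l * S⁻¹) := by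
  have hS' := (isUnit_iff_isUnit_det S).1 hS
  have hmul (D D' : Matrix n n K) : S * D * S⁻¹ * (S * D' * S⁻¹) = S * (D * D') * S⁻¹ := by
    simp only [mul_assoc, nonsing_inv_mul_cancel_left _ _ hS']
  simp only [hmul, diagonal_mul_diagonal, mul_comm]

theorem diagonal_diag_of_commute_diagonal {N : Matrix n n K} {l : n → K} (hl : l.Injective)
    (h : N * diagonal l = diagonal l * N) : diagonal N.diag = N := by
  rw [← isDiag_iff_diagonal_diag]
  intro i j hij
  have hentry := congrFun₂ h i j
  rw [mul_diagonal, diagonal_mul] at hentry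
  have hmul : N i j * (l j - l i) = 0 := by linear_combination hentry
  exact (mul_eq_zero.1 hmul).resolve_right (sub_ne_zero.2 (hl.ne hij.symm))

theorem eq_conj_diagonal_of_commute {R N : Matrix n n K} (hR : IsUnit R) {l : n → K}
    (hl : l.Injective) (h : N * (R * diagonal l * R⁻¹) = R * diagonal l * R⁻¹ * N) :
    N = R * diagonal (R⁻¹ * N * R).diag * R⁻¹ := by
  have hR' := (isUnit_iff_isUnit_det R).1 hR
  have hcomm : R⁻¹ * N * R * diagonal l = diagonal l * (R⁻¹ * N * R) := by
    have h' := congrArg (fun A ↦ R⁻¹ * A * R) h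
    simpa only [mul_assoc, nonsing_inv_mul_cancel_left _ _ hR', nonsing_inv_mul _ hR',
      mul_one] using h'
  rw [diagonal_diag_of_commute_diagonal hl hcomm]
  simp only [mul_assoc, mul_nonsing_inv_cancel_left _ _ hR', mul_nonsing_inv _ hR', mul_one]

theorem exists_eq_conj_diagonal_of_separable_charpoly [IsAlgClosed K] {M : Matrix n n K}
    (h : M.charpoly.Separable) :
    ∃ (S : Matrix n n K) (l : n → K), IsUnit S ∧ M = S * diagonal l * S⁻¹ := by
  classical
  have hcard : Fintype.card n = M.charpoly.roots.toFinset.card := by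
    rw [Multiset.toFinset_card_of_nodup (Polynomial.nodup_roots h),
      ← (IsAlgClosed.splits M.charpoly).natDegree_eq_card_roots, charpoly_natDegree_eq_dim]
  let e := Fintype.equivOfCardEq (hcard.trans (Fintype.card_coe _).symm)
  obtain ⟨S, hS, hM⟩ := exists_eq_conj_diagonal_of_forall_mem_spectrum (M := M)
    (Subtype.val_injective.comp e.injective) fun j ↦ by
      have hroot := (e j).2
      rw [Multiset.mem_toFinset, Polynomial.mem_roots M.charpoly_monic.ne_zero] at hroot
      exact mem_spectrum_iff_isRoot_charpoly.2 hroot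
  exact ⟨S, _, hS, hM⟩

theorem finite_det_lineMap_eq_zero {A : Matrix n n K} (hA : A.det ≠ 0) (B : Matrix n n K) :
    {z : K | (AffineMap.lineMap A B z : Matrix n n K).det = 0}.Finite := by
  obtain ⟨M, hM⟩ := exists_map_evalRingHom_eq_lineMap A B
  have heval : ∀ z, M.det.eval z = (AffineMap.lineMap A B z : Matrix n n K).det := fun z ↦ by
    rw [← hM, ← RingHom.mapMatrix_apply, ← RingHom.map_det, Polynomial.coe_evalRingHom]
  have hne : M.det ≠ 0 := fun h0 ↦ hA <| by
    rw [← AffineMap.lineMap_apply_zero (k := K) A B, ← heval, h0, Polynomial.eval_zero]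
  exact (Polynomial.finite_setOfPred_isRoot hne).subset fun z hz ↦ (heval z).trans hz

theorem finite_not_separable_charpoly_lineMap [CharZero K] (A : Matrix n n K) {B : Matrix n n K}
    (hB : B.charpoly.Separable) :
    {z : K | ¬ (AffineMap.lineMap A B z : Matrix n n K).charpoly.Separable}.Finite := by
  obtain ⟨M, hM⟩ := exists_map_evalRingHom_eq_lineMap A B
  let disc := M.charpoly.resultant M.charpoly.derivative (Fintype.card n) (Fintype.card n - 1)
  have hdisc : ∀ z, disc.eval z = 0 ↔
      ¬ (AffineMap.lineMap A B z : Matrix n n K).charpoly.Separable := fun z ↦ by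
    have hmap : M.charpoly.map (Polynomial.evalRingHom z) =
        (AffineMap.lineMap A B z : Matrix n n K).charpoly := by rw [← hM, charpoly_map]
    have hdegree := (AffineMap.lineMap A B z : Matrix n n K).charpoly_natDegree_eq_dim
    have heval : disc.eval z = (AffineMap.lineMap A B z : Matrix n n K).charpoly.resultant
        (AffineMap.lineMap A B z : Matrix n n K).charpoly.derivative := by
      rw [Polynomial.natDegree_derivative, hdegree, ← hmap, Polynomial.derivative_map,
        Polynomial.resultant_map_map, Polynomial.coe_evalRingHom]
    rw [heval, Polynomial.resultant_eq_zero_iff, Polynomial.Separable]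
    exact and_iff_right (Or.inl (charpoly_monic _).ne_zero)
  have hne : disc ≠ 0 := fun h0 ↦ (hdisc 1).1 (by rw [h0, Polynomial.eval_zero]) <| by
    rwa [AffineMap.lineMap_apply_one]
  exact (Polynomial.finite_setOfPred_isRoot hne).subset fun z hz ↦ (hdisc z).2 hz

end Diagonalization

section SimpleSpectrum

variable {n : Type*} [Fintype n]

theorem isPreconnected_setOf_isUnit [DecidableEq n] :
    IsPreconnected {S : Matrix n n ℂ | IsUnit S} := by
  refine isPreconnected_of_countable_lineMap_notMem fun A hA B _ ↦ ?_
  simp only [Set.mem_ofPred_eq, isUnit_iff_isUnit_det, isUnit_iff_ne_zero, not_not] at hA ⊢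
  exact (finite_det_lineMap_eq_zero hA B).countable

variable (n) in
/-- The lists `μ` of logarithms of pairwise distinct numbers, normalized to have sum zero. They
parametrize `simpleUnimodular` through the entrywise exponential. -/
def simpleExponents : Set (n → ℂ) :=
  {μ | ∑ i, μ i = 0 ∧ Function.Injective fun i ↦ Complex.exp (μ i)}

variable (n) in
/-- The lists of pairwise distinct numbers with product one: the spectra of the matrices of
determinant one with simple spectrum. -/
def simpleUnimodular : Set (n → ℂ) :=
  {l | ∏ i, l i = 1 ∧ Function.Injective l}

theorem countable_lineMap_notMem_simpleExponents {μ ν : n → ℂ} (hμ : ∑ i, μ i = 0)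
    (hν : ν ∈ simpleExponents n) :
    {z : ℂ | AffineMap.lineMap μ ν z ∉ simpleExponents n}.Countable := by
  have hsum (z : ℂ) : ∑ i, (AffineMap.lineMap μ ν z : n → ℂ) i = 0 := by
    simp [AffineMap.lineMap_apply_module', Finset.sum_add_distrib, ← Finset.mul_sum, hμ, hν.1]
  have hsubset : {z : ℂ | AffineMap.lineMap μ ν z ∉ simpleExponents n} ⊆
      ⋃ (i : n) (j : n) (k : ℤ), {z : ℂ | i ≠ j ∧ (AffineMap.lineMap μ ν z : n → ℂ) i =
        (AffineMap.lineMap μ ν z : n → ℂ) j + k * (2 * Real.pi * Complex.I)} := fun z hz ↦ by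
    obtain ⟨i, j, hexp, hij⟩ := Function.not_injective_iff.1 (not_and.1 hz (hsum z))
    obtain ⟨k, hk⟩ := Complex.exp_eq_exp_iff_exists_int.1 hexp
    exact Set.mem_iUnion.2 ⟨i, Set.mem_iUnion.2 ⟨j, Set.mem_iUnion.2 ⟨k, hij, hk⟩⟩⟩
  refine (Set.countable_iUnion fun i ↦ Set.countable_iUnion fun j ↦
    Set.countable_iUnion fun k ↦ Set.Subsingleton.countable ?_).mono hsubset
  rintro z ⟨hij, hz⟩ w ⟨-, hw⟩
  simp only [AffineMap.lineMap_apply_module', Pi.add_apply, Pi.smul_apply, Pi.sub_apply,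
    smul_eq_mul] at hz hw
  by_contra hzw
  have hmul : (z - w) * ((ν i - μ i) - (ν j - μ j)) = 0 := by linear_combination hz - hw
  have hslope := (mul_eq_zero.1 hmul).resolve_left (sub_ne_zero.2 hzw)
  exact hij <| hν.2 <| Complex.exp_eq_exp_iff_exists_int.2
    ⟨k, by linear_combination hz + (1 - z) * hslope⟩

theorem isPreconnected_simpleExponents : IsPreconnected (simpleExponents n) :=
  isPreconnected_of_countable_lineMap_notMem fun _ hμ _ hν ↦
    countable_lineMap_notMem_simpleExponents hμ.1 hν

theorem simpleExponents_nonempty : (simpleExponents n).Nonempty := by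
  rcases isEmpty_or_nonempty n with hn | hn
  · exact ⟨0, by simp, Function.injective_of_subsingleton _⟩
  let a (i : n) : ℝ := (Fintype.equivFin n i : ℕ)
  let mean : ℝ := (∑ i, a i) / Fintype.card n
  refine ⟨fun i ↦ ((a i - mean : ℝ) : ℂ), ?_, fun i j hij ↦ ?_⟩
  · rw [← Complex.ofReal_sum, Finset.sum_sub_distrib, Finset.sum_const, Finset.card_univ,
      nsmul_eq_mul, mul_div_cancel₀ _ (by simp), sub_self, Complex.ofReal_zero]
  · simp only [← Complex.ofReal_exp, Complex.ofReal_inj, Real.exp_eq_exp, sub_left_inj, a,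
      Nat.cast_inj] at hij
    exact (Fintype.equivFin n).injective (Fin.ext hij)

theorem exists_exp_eq_of_prod_eq_one [Nonempty n] {l : n → ℂ} (hl : ∏ i, l i = 1) :
    ∃ μ : n → ℂ, ∑ i, μ i = 0 ∧ (fun i ↦ Complex.exp (μ i)) = l := by
  classical
  have hne (i : n) : l i ≠ 0 :=
    Finset.prod_ne_zero_iff.1 (hl.trans_ne one_ne_zero) i (Finset.mem_univ i)
  have hexp : Complex.exp (∑ i, Complex.log (l i)) = 1 := by
    simp only [Complex.exp_sum, Complex.exp_log (hne _), hl]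
  obtain ⟨k, hk⟩ := Complex.exp_eq_one_iff.1 hexp
  obtain ⟨i₀⟩ := ‹Nonempty n›
  refine ⟨fun i ↦ Complex.log (l i) - if i = i₀ then k * (2 * Real.pi * Complex.I) else 0,
    ?_, ?_⟩
  · simp [Finset.sum_sub_distrib, hk]
  · ext i
    rw [Complex.exp_sub, Complex.exp_log (hne i)]
    split_ifs <;> simp [Complex.exp_int_mul_two_pi_mul_I]

theorem image_exp_simpleExponents [Nonempty n] :
    (fun (μ : n → ℂ) i ↦ Complex.exp (μ i)) '' simpleExponents n = simpleUnimodular n := by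
  ext l
  constructor
  · rintro ⟨μ, ⟨hsum, hinj⟩, rfl⟩
    exact ⟨by rw [← Complex.exp_sum, hsum, Complex.exp_zero], hinj⟩
  · rintro ⟨hprod, hinj⟩
    obtain ⟨μ, hsum, rfl⟩ := exists_exp_eq_of_prod_eq_one hprod
    exact ⟨μ, ⟨hsum, hinj⟩, rfl⟩

theorem isPreconnected_simpleUnimodular [Nonempty n] : IsPreconnected (simpleUnimodular n) := by
  rw [← image_exp_simpleExponents]
  exact isPreconnected_simpleExponents.image _ (by fun_prop)

theorem simpleUnimodular_nonempty [Nonempty n] : (simpleUnimodular n).Nonempty := by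
  rw [← image_exp_simpleExponents]
  exact simpleExponents_nonempty.image _

theorem setOf_prod_eq_one_subset_closure_simpleUnimodular [Nonempty n] :
    {l : n → ℂ | ∏ i, l i = 1} ⊆ closure (simpleUnimodular n) := by
  intro l hl
  obtain ⟨μ, hμ, rfl⟩ := exists_exp_eq_of_prod_eq_one hl
  obtain ⟨ν, hν⟩ := simpleExponents_nonempty (n := n)
  rw [← image_exp_simpleExponents]
  exact mem_closure_image (Continuous.continuousAt (by fun_prop)) <|
    mem_closure_of_countable_lineMap_notMem (countable_lineMap_notMem_simpleExponents hμ hν)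

variable [DecidableEq n]

variable (n) in
/-- The diagonalizable complex matrices of determinant one. -/
def diagonalizableUnimodular : Set (Matrix n n ℂ) :=
  {X | ∃ (S : Matrix n n ℂ) (l : n → ℂ), IsUnit S ∧ ∏ i, l i = 1 ∧ X = S * diagonal l * S⁻¹}

theorem exists_separable_charpoly : ∃ D : Matrix n n ℂ, D.charpoly.Separable := by
  refine ⟨diagonal fun i ↦ ((Fintype.equivFin n i : ℕ) : ℂ), ?_⟩
  rw [charpoly_diagonal, Polynomial.separable_prod_X_sub_C_iff]
  exact Nat.cast_injective.comp (Fin.val_injective.comp (Fintype.equivFin n).injective)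

theorem mem_closure_setOf_separable_charpoly {X : Matrix n n ℂ} (hX : X.det ≠ 0) :
    X ∈ closure {W : Matrix n n ℂ | W.charpoly.Separable ∧ W.det ≠ 0} := by
  obtain ⟨D, hD⟩ := exists_separable_charpoly (n := n)
  refine mem_closure_of_countable_lineMap_notMem (y := D) (Set.Countable.mono (fun z hz ↦ ?_)
    ((finite_not_separable_charpoly_lineMap X hD).union
      (finite_det_lineMap_eq_zero hX D)).countable)
  by_contra! hz'
  simp only [Set.mem_union, Set.mem_ofPred_eq, not_or, not_not] at hz'
  exact hz hz'

/-- A matrix near `X` is moved into the special linear group by dividing it by the branch of the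
root of its determinant that is close to `1`. -/
theorem setOf_det_eq_one_subset_closure_diagonalizableUnimodular [Nonempty n] :
    {X : Matrix n n ℂ | X.det = 1} ⊆ closure (diagonalizableUnimodular n) := by
  intro X hX
  rw [Set.mem_ofPred_eq] at hX
  let scale (W : Matrix n n ℂ) : ℂ := Complex.exp (-Complex.log W.det / Fintype.card n)
  have hscale : ContinuousAt (fun W ↦ scale W • W) X := by
    have hlog : ContinuousAt (fun W : Matrix n n ℂ ↦ Complex.log W.det) X :=
      ContinuousAt.clog (by fun_prop) (by simp [hX])
    exact (hlog.neg.div_const _).cexp.smul continuousAt_id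
  have hscaleX : scale X • X = X := by simp [scale, hX]
  rw [← hscaleX]
  refine hscale.continuousWithinAt.mem_closure
    (mem_closure_setOf_separable_charpoly (hX.trans_ne one_ne_zero)) fun W hW ↦ ?_
  obtain ⟨S, l, hS, hWS⟩ := exists_eq_conj_diagonal_of_separable_charpoly hW.1
  refine ⟨S, scale W • l, hS, ?_, ?_⟩
  · have hdet : ∏ i, l i = W.det := by rw [hWS, det_conj hS, det_diagonal]
    have hpow : scale W ^ Fintype.card n = W.det⁻¹ := by
      rw [← Complex.exp_nat_mul, mul_div_cancel₀ _ (by simp), Complex.exp_neg,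
        Complex.exp_log hW.2]
    simp [Finset.prod_mul_distrib, hpow, hdet, hW.2]
  · rw [diagonal_smul, mul_smul_comm, smul_mul_assoc, ← hWS]

end SimpleSpectrum

/-! ### Preservers on diagonalizable matrices -/

section SLPreserver

variable {n : Type*} [Fintype n] [DecidableEq n]

/-- A continuous, commutativity-preserving and spectrum-shrinking map on the matrices of
determinant one. It is encoded as a map on all matrices whose values at matrices with other
determinants are irrelevant. -/
structure IsSLPreserver (Φ : Matrix n n ℂ → Matrix n n ℂ) : Prop where
  continuousOn : ContinuousOn Φ {X | X.det = 1}
  map_mul_comm : ∀ X Y, X.det = 1 → Y.det = 1 → X * Y = Y * X → Φ X * Φ Y = Φ Y * Φ X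
  spectrum_subset : ∀ X, X.det = 1 → spectrum ℂ (Φ X) ⊆ spectrum ℂ X

theorem det_conj_diagonal {S : Matrix n n ℂ} (hS : IsUnit S) {l : n → ℂ} (hl : ∏ i, l i = 1) :
    (S * diagonal l * S⁻¹).det = 1 := by
  rw [det_conj hS, det_diagonal, hl]

theorem continuous_conj_diagonal {X : Type*} [TopologicalSpace X] {S : X → Matrix n n ℂ}
    {l : X → n → ℂ} (hS : Continuous S) (hunit : ∀ x, IsUnit (S x)) (hl : Continuous l) :
    Continuous fun x ↦ S x * diagonal (l x) * (S x)⁻¹ := by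
  have hdet (x : X) : (S x).det ≠ 0 := ((isUnit_iff_isUnit_det _).1 (hunit x)).ne_zero
  simp only [Matrix.inv_def, Ring.inverse_eq_inv']
  exact (hS.mul hl.matrix_diagonal).mul ((hS.matrix_det.inv₀ hdet).smul hS.matrix_adjugate)

theorem submatrix_mul_diagonal_mul_inv (S : Matrix n n ℂ) (l : n → ℂ) (σ : Equiv.Perm n) :
    S.submatrix id σ * diagonal (l ∘ σ) * (S.submatrix id σ)⁻¹ = S * diagonal l * S⁻¹ := by
  have hinv : (S.submatrix id σ)⁻¹ = S⁻¹.submatrix σ id := inv_submatrix_equiv S (Equiv.refl n) σ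
  rw [hinv, ← submatrix_diagonal_equiv, submatrix_mul_equiv, submatrix_mul_equiv, submatrix_id_id]

theorem isUnit_submatrix_id {S : Matrix n n ℂ} (hS : IsUnit S) (σ : Equiv.Perm n) :
    IsUnit (S.submatrix id σ) :=
  (isUnit_submatrix_equiv (Equiv.refl n) σ).2 hS

namespace IsSLPreserver

variable {Φ : Matrix n n ℂ → Matrix n n ℂ} (H : IsSLPreserver Φ)
include H

theorem spectrum_subset_range {S : Matrix n n ℂ} (hS : IsUnit S) {l : n → ℂ}
    (hl : ∏ i, l i = 1) : spectrum ℂ (Φ (S * diagonal l * S⁻¹)) ⊆ Set.range l :=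
  spectrum_conj_diagonal hS l ▸ H.spectrum_subset _ (det_conj_diagonal hS hl)

theorem rootMultiplicity_eq [Nonempty n] {S S' : Matrix n n ℂ} (hS : IsUnit S)
    (hS' : IsUnit S') {l l' : n → ℂ} (hl : l ∈ simpleUnimodular n) (hl' : l' ∈ simpleUnimodular n)
    (i : n) : (Φ (S * diagonal l * S⁻¹)).charpoly.rootMultiplicity (l i) =
      (Φ (S' * diagonal l' * S'⁻¹)).charpoly.rootMultiplicity (l' i) := by
  have : PreconnectedSpace {S : Matrix n n ℂ // IsUnit S} :=
    Subtype.preconnectedSpace isPreconnected_setOf_isUnit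
  have := Subtype.preconnectedSpace (isPreconnected_simpleUnimodular (n := n))
  have hconj : Continuous fun p : {S : Matrix n n ℂ // IsUnit S} × simpleUnimodular n ↦
      p.1.1 * diagonal p.2.1 * p.1.1⁻¹ :=
    continuous_conj_diagonal (by fun_prop) (fun p ↦ p.1.2) (by fun_prop)
  exact rootMultiplicity_charpoly_eq_of_continuous
    (X := {S : Matrix n n ℂ // IsUnit S} × simpleUnimodular n)
    (M := fun p ↦ Φ (p.1.1 * diagonal p.2.1 * p.1.1⁻¹)) (l := fun p ↦ p.2.1)
    (H.continuousOn.comp_continuous hconj fun p ↦ det_conj_diagonal p.1.2 p.2.2.1)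
    (by fun_prop) (fun p ↦ p.2.2.2) (fun p ↦ H.spectrum_subset_range p.1.2 p.2.2.1)
    (⟨S', hS'⟩, ⟨l', hl'⟩) (⟨S, hS⟩, ⟨l, hl⟩) i

/-- Swapping two eigenvalues together with their eigenvectors does not change the matrix, so all
multiplicities agree. -/
theorem mem_spectrum_conj_diagonal [Nonempty n] {S : Matrix n n ℂ} (hS : IsUnit S) {l : n → ℂ}
    (hl : l ∈ simpleUnimodular n) (j : n) : l j ∈ spectrum ℂ (Φ (S * diagonal l * S⁻¹)) := by
  obtain ⟨t, ht⟩ :=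
    spectrum.nonempty_of_isAlgClosed_of_finiteDimensional ℂ (Φ (S * diagonal l * S⁻¹))
  obtain ⟨i, rfl⟩ := H.spectrum_subset_range hS hl.1 ht
  let σ := Equiv.swap j i
  have hlσ : l ∘ σ ∈ simpleUnimodular n :=
    ⟨(Equiv.prod_comp σ l).trans hl.1, hl.2.comp σ.injective⟩
  rw [mem_spectrum_iff_rootMultiplicity_charpoly_ne_zero] at ht ⊢
  have hmult := H.rootMultiplicity_eq (isUnit_submatrix_id hS σ) hS hlσ hl i
  rw [submatrix_mul_diagonal_mul_inv, Function.comp_apply, Equiv.swap_apply_right] at hmult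
  rwa [hmult]

theorem eq_conj_diagonal_of_mem_simpleUnimodular [Nonempty n] {S R : Matrix n n ℂ}
    (hS : IsUnit S) (hR : IsUnit R) {l₀ : n → ℂ} (hl₀ : l₀ ∈ simpleUnimodular n)
    (hΦ₀ : Φ (S * diagonal l₀ * S⁻¹) = R * diagonal l₀ * R⁻¹) {l : n → ℂ}
    (hl : l ∈ simpleUnimodular n) : Φ (S * diagonal l * S⁻¹) = R * diagonal l * R⁻¹ := by
  have hconj : Continuous fun l : n → ℂ ↦ S * diagonal l * S⁻¹ :=
    continuous_conj_diagonal continuous_const (fun _ ↦ hS) continuous_id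
  have := Subtype.preconnectedSpace (isPreconnected_simpleUnimodular (n := n))
  have hcont : Continuous fun l : simpleUnimodular n ↦ Φ (S * diagonal l.1 * S⁻¹) :=
    H.continuousOn.comp_continuous (hconj.comp continuous_subtype_val)
      fun l ↦ det_conj_diagonal hS l.2.1
  have hdiag (l : simpleUnimodular n) : Φ (S * diagonal l.1 * S⁻¹) =
      R * diagonal (R⁻¹ * Φ (S * diagonal l.1 * S⁻¹) * R).diag * R⁻¹ := by
    refine eq_conj_diagonal_of_commute hR hl₀.2 ?_
    rw [← hΦ₀]
    exact H.map_mul_comm _ _ (det_conj_diagonal hS l.2.1) (det_conj_diagonal hS hl₀.1)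
      (conj_diagonal_mul_comm hS _ _)
  have hrange (i : n) (l : simpleUnimodular n) :
      (R⁻¹ * Φ (S * diagonal l.1 * S⁻¹) * R) i i ∈ Set.range l.1 := by
    have hspec := (congrArg (spectrum ℂ) (hdiag l)).trans (spectrum_conj_diagonal hR _)
    exact H.spectrum_subset_range hS l.2.1 (hspec.ge ⟨i, rfl⟩)
  have hbase (i : n) : (R⁻¹ * Φ (S * diagonal l₀ * S⁻¹) * R) i i = l₀ i := by
    have hR' := (isUnit_iff_isUnit_det R).1 hR
    rw [hΦ₀, mul_assoc, nonsing_inv_mul_cancel_right _ _ hR',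
      nonsing_inv_mul_cancel_left _ _ hR', diagonal_apply_eq]
  have hentry (i : n) : (R⁻¹ * Φ (S * diagonal l * S⁻¹) * R).diag i = l i :=
    eq_of_mem_range_of_injective (x₀ := ⟨l₀, hl₀⟩)
      (((continuous_const.mul hcont).mul continuous_const).matrix_elem i i)
      continuous_subtype_val (fun l ↦ l.2.2) (hrange i) (hbase i) ⟨l, hl⟩
  rw [hdiag ⟨l, hl⟩, funext hentry]

theorem exists_map_conj_diagonal [Nonempty n] {S : Matrix n n ℂ} (hS : IsUnit S) :
    ∃ R : Matrix n n ℂ, IsUnit R ∧ ∀ l : n → ℂ, ∏ i, l i = 1 →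
      Φ (S * diagonal l * S⁻¹) = R * diagonal l * R⁻¹ := by
  obtain ⟨l₀, hl₀⟩ := simpleUnimodular_nonempty (n := n)
  obtain ⟨R, hR, hΦ₀⟩ := exists_eq_conj_diagonal_of_forall_mem_spectrum hl₀.2
    (H.mem_spectrum_conj_diagonal hS hl₀)
  have hconj {S : Matrix n n ℂ} (hS : IsUnit S) : Continuous fun l ↦ S * diagonal l * S⁻¹ :=
    continuous_conj_diagonal continuous_const (fun _ ↦ hS) continuous_id
  refine ⟨R, hR, fun l hl ↦ ?_⟩
  have heqOn : Set.EqOn (fun l ↦ Φ (S * diagonal l * S⁻¹)) (fun l ↦ R * diagonal l * R⁻¹)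
      {l | ∏ i, l i = 1} :=
    Set.EqOn.of_subset_closure
      (fun l hl ↦ H.eq_conj_diagonal_of_mem_simpleUnimodular hS hR hl₀ hΦ₀ hl)
      (H.continuousOn.comp (hconj hS).continuousOn fun l hl ↦ det_conj_diagonal hS hl)
      (hconj hR).continuousOn (fun l hl ↦ hl.1)
      setOf_prod_eq_one_subset_closure_simpleUnimodular
  exact heqOn hl

end IsSLPreserver

end SLPreserver

/-! ### Reduction to rank-one idempotents -/

section ConjDiagonal

variable {n K L : Type*} [Fintype n] [DecidableEq n] [Field K] [Field L]

theorem vecMulVec_col_row_inv (S : Matrix n n K) (i : n) :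
    vecMulVec (S.col i) (S⁻¹.row i) = S * diagonal (Pi.single i 1) * S⁻¹ := by
  ext j k
  simp [vecMulVec_apply, mul_apply (N := S⁻¹), mul_diagonal, Pi.single_apply]

theorem conj_diagonal_eq_sum (S : Matrix n n K) (l : n → K) :
    S * diagonal l * S⁻¹ = ∑ i, l i • (S * diagonal (Pi.single i 1) * S⁻¹) := by
  conv_lhs => rw [← Finset.univ_sum_single l]
  rw [← diagonalAddMonoidHom_apply, map_sum, Finset.mul_sum, Finset.sum_mul]
  refine Finset.sum_congr rfl fun i _ ↦ ?_
  have hsingle : Pi.single i (l i) = l i • (Pi.single i 1 : n → K) := by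
    rw [← Pi.single_smul, smul_eq_mul, mul_one]
  rw [diagonalAddMonoidHom_apply, hsingle, diagonal_smul, mul_smul_comm, smul_mul_assoc]

theorem smul_one_add_smul_conj_diagonal {S : Matrix n n K} (hS : IsUnit S) (a b : K) (l : n → K) :
    a • 1 + b • (S * diagonal l * S⁻¹) = S * diagonal (fun i ↦ a + b * l i) * S⁻¹ := by
  have hone : S * 1 * S⁻¹ = 1 := by
    rw [mul_one, mul_nonsing_inv _ ((isUnit_iff_isUnit_det S).1 hS)]
  have hdiag : diagonal (fun i ↦ a + b * l i) = a • (1 : Matrix n n K) + b • diagonal l := by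
    rw [smul_one_eq_diagonal, ← diagonal_smul, diagonal_add]
    rfl
  rw [hdiag, mul_add, add_mul, mul_smul_comm, smul_mul_assoc, hone, mul_smul_comm, smul_mul_assoc]

theorem conj_diagonal_map {S : Matrix n n K} (hS : IsUnit S) (τ : K →+* L) (l : n → K) :
    (S * diagonal l * S⁻¹).map τ = S.map τ * diagonal (fun i ↦ τ (l i)) * (S.map τ)⁻¹ := by
  have hinv : (S.map τ)⁻¹ = S⁻¹.map τ := inv_eq_left_inv <| by
    rw [← Matrix.map_mul, nonsing_inv_mul _ ((isUnit_iff_isUnit_det S).1 hS),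
      Matrix.map_one τ (map_zero τ) (map_one τ)]
  rw [hinv, Matrix.map_mul, Matrix.map_mul, diagonal_map (map_zero τ)]

theorem biorthogonal_iff_exists_isUnit {x f : n → n → K} :
    Biorthogonal x f ↔ ∃ S : Matrix n n K, IsUnit S ∧ x = S.col ∧ f = S⁻¹.row := by
  rw [biorthogonal_iff_mul_transpose_eq_one]
  constructor
  · intro h
    exact ⟨(of x)ᵀ, IsUnit.of_mul_eq_one _ (mul_eq_one_comm.mp h), rfl,
      (inv_eq_left_inv h).symm⟩
  · rintro ⟨S, hS, rfl, rfl⟩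
    exact nonsing_inv_mul _ ((isUnit_iff_isUnit_det S).1 hS)

theorem isRankOneIdempotent_conj_diagonal_single {S : Matrix n n K} (hS : IsUnit S) (i : n) :
    IsRankOneIdempotent (S * diagonal (Pi.single i 1) * S⁻¹) := by
  have hSS := biorthogonal_iff_exists_isUnit.2 ⟨S, hS, rfl, rfl⟩
  exact vecMulVec_col_row_inv S i ▸ isRankOneIdempotent_vecMulVec (by simpa using hSS i i)

end ConjDiagonal

section IdempotentMap

variable {n : Type*} [Fintype n] [DecidableEq n]

/-- The map on rank-one idempotents `P` through which `Φ` acts: the matrix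
`2⁻¹ • 1 + (2 ^ (card n - 1) - 2⁻¹) • P` has determinant one, and `Φ` is read off at it. Values at
other matrices are irrelevant. -/
noncomputable def idempotentMap (Φ : Matrix n n ℂ → Matrix n n ℂ) (P : Matrix n n ℂ) :
    Matrix n n ℂ :=
  (2 ^ (Fintype.card n - 1) - 2⁻¹ : ℂ)⁻¹ •
    (Φ ((2⁻¹ : ℂ) • 1 + (2 ^ (Fintype.card n - 1) - 2⁻¹ : ℂ) • P) - (2⁻¹ : ℂ) • 1)

theorem idempotentMap_transpose (Φ : Matrix n n ℂ → Matrix n n ℂ) (P : Matrix n n ℂ) :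
    idempotentMap (fun X ↦ (Φ X)ᵀ) P = (idempotentMap Φ P)ᵀ := by
  simp [idempotentMap]

variable {Φ : Matrix n n ℂ → Matrix n n ℂ}

theorem idempotentMap_conj_diagonal_single {S R : Matrix n n ℂ} (hS : IsUnit S) (hR : IsUnit R)
    (hΦ : ∀ l : n → ℂ, ∏ i, l i = 1 → Φ (S * diagonal l * S⁻¹) = R * diagonal l * R⁻¹) (i : n) :
    idempotentMap Φ (S * diagonal (Pi.single i 1) * S⁻¹) =
      R * diagonal (Pi.single i 1) * R⁻¹ := by
  have hscale : (2 ^ (Fintype.card n - 1) - 2⁻¹ : ℂ) ≠ 0 := by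
    intro h
    have hnorm := congrArg norm (sub_eq_zero.1 h)
    rw [norm_pow, norm_inv, Complex.norm_ofNat] at hnorm
    linarith [one_le_pow₀ (a := (2 : ℝ)) one_le_two (n := Fintype.card n - 1)]
  have hprod : ∏ j, (2⁻¹ + (2 ^ (Fintype.card n - 1) - 2⁻¹) * (Pi.single i 1 : n → ℂ) j) = 1 := by
    have hrest (j) (hj : j ∈ Finset.univ.erase i) :
        2⁻¹ + (2 ^ (Fintype.card n - 1) - 2⁻¹) * (Pi.single i 1 : n → ℂ) j = 2⁻¹ := by
      rw [Pi.single_eq_of_ne (Finset.ne_of_mem_erase hj), mul_zero, add_zero]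
    rw [← Finset.mul_prod_erase _ _ (Finset.mem_univ i), Finset.prod_congr rfl hrest]
    simp
  rw [idempotentMap, smul_one_add_smul_conj_diagonal hS, hΦ _ hprod,
    ← smul_one_add_smul_conj_diagonal hR, add_sub_cancel_left, inv_smul_smul₀ hscale]

namespace IsSLPreserver

variable (H : IsSLPreserver Φ)
include H

theorem framePreserving_idempotentMap [Nonempty n] : FramePreserving (idempotentMap Φ) := by
  intro x f hxf
  obtain ⟨S, hS, rfl, rfl⟩ := biorthogonal_iff_exists_isUnit.1 hxf
  obtain ⟨R, hR, hΦ⟩ := H.exists_map_conj_diagonal hS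
  refine ⟨R.col, R⁻¹.row, biorthogonal_iff_exists_isUnit.2 ⟨R, hR, rfl, rfl⟩, fun i ↦ ?_⟩
  rw [vecMulVec_col_row_inv, vecMulVec_col_row_inv, idempotentMap_conj_diagonal_single hS hR hΦ]

theorem map_conj_diagonal [Nonempty n] {T : Matrix n n ℂ} {τ : ℂ →+* ℂ}
    (hT : ∀ P, IsRankOneIdempotent P → idempotentMap Φ P = T * P.map τ * T⁻¹)
    {S : Matrix n n ℂ} (hS : IsUnit S) {l : n → ℂ} (hl : ∏ i, l i = 1) :
    Φ (S * diagonal l * S⁻¹) = T * (S.map τ * diagonal l * (S.map τ)⁻¹) * T⁻¹ := by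
  obtain ⟨R, hR, hΦ⟩ := H.exists_map_conj_diagonal hS
  rw [hΦ l hl, conj_diagonal_eq_sum, conj_diagonal_eq_sum (S.map τ), Finset.mul_sum,
    Finset.sum_mul]
  refine Finset.sum_congr rfl fun i _ ↦ ?_
  have hsingle : (fun j ↦ τ ((Pi.single i 1 : n → ℂ) j)) = Pi.single i 1 :=
    funext fun j ↦ by rw [Pi.apply_single (fun _ ↦ τ) (fun _ ↦ map_zero τ), map_one]
  rw [← idempotentMap_conj_diagonal_single hS hR hΦ,
    hT _ (isRankOneIdempotent_conj_diagonal_single hS i), conj_diagonal_map hS, hsingle,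
    mul_smul_comm, smul_mul_assoc]

end IsSLPreserver

end IdempotentMap

/-! ### The ring homomorphism is the identity -/

section Transvection

theorem transvection_map {n K L : Type*} [DecidableEq n] [CommRing K] [CommRing L] (τ : K →+* L)
    (i j : n) (s : K) : (transvection i j s).map τ = transvection i j (τ s) := by
  simp [transvection, Matrix.map_add, Matrix.map_single]

variable {n R K : Type*} [Fintype n] [DecidableEq n] [CommRing R] [Field K]

theorem transvection_mul_diagonal_mul_transvection_neg {i j : n} (hij : i ≠ j) (s : R)
    (l : n → R) : transvection i j s * diagonal l * transvection i j (-s) =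
      diagonal l + single i j (s * (l j - l i)) := by
  ext a b
  have hji : single i j s * diagonal l * single i j (-s) = 0 := by
    rw [single_mul_mul_single, diagonal_apply_ne' _ hij, mul_zero, zero_mul, single_zero]
  simp only [transvection, add_mul, mul_add, one_mul, mul_one, hji, add_zero]
  simp only [Matrix.add_apply, mul_diagonal, diagonal_mul, single_apply]
  split_ifs with h
  · rw [h.1, h.2]
    ring
  · ring

theorem det_diagonal_add_single {i j : n} (hij : i ≠ j) {l : n → R} (hl : l i = 1) (c : R) :
    (diagonal l + single i j c).det = ∏ k, l k := by
  have hmul : diagonal l * transvection i j c = diagonal l + single i j c := by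
    rw [transvection, mul_add, mul_one]
    congr 1
    ext a b
    simp only [diagonal_mul, single_apply]
    split_ifs with h
    · rw [← h.1, hl, one_mul]
    · rw [mul_zero]
  rw [← hmul, det_mul, det_diagonal, det_transvection_of_ne _ _ hij, mul_one]

theorem inv_transvection {i j : n} (hij : i ≠ j) (s : K) :
    (transvection i j s)⁻¹ = transvection i j (-s) :=
  inv_eq_left_inv <| by
    rw [transvection_mul_transvection_same _ _ hij, neg_add_cancel, transvection_zero]

theorem isUnit_transvection {i j : n} (hij : i ≠ j) (s : K) : IsUnit (transvection i j s) := by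
  rw [isUnit_iff_isUnit_det, det_transvection_of_ne _ _ hij]
  exact isUnit_one

end Transvection

section IdentityOfTendsto

open Filter Topology

theorem eq_id_of_tendsto_map_inv_mul {K : Type*} [Field K] [CharZero K] [TopologicalSpace K]
    [T2Space K] [ContinuousMul K] [ContinuousSMul ℚ≥0 K] {τ : K →+* K} {c : K}
    (hτ : Tendsto (fun d ↦ τ d⁻¹ * d) (𝓝[≠] 0) (𝓝 c)) : τ = RingHom.id K := by
  have hratio (u : K) (hu : u ≠ 0) : τ u / u = c := by
    have hseq : Tendsto (fun N : ℕ ↦ (u * N)⁻¹) atTop (𝓝[≠] 0) := by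
      refine tendsto_nhdsWithin_iff.2 ⟨?_, ?_⟩
      · simpa [mul_inv, mul_comm] using tendsto_inv_atTop_nhds_zero_nat.const_mul u⁻¹
      · filter_upwards [eventually_ne_atTop 0] with N hN
        exact inv_ne_zero (mul_ne_zero hu (Nat.cast_ne_zero.2 hN))
    refine tendsto_nhds_unique (tendsto_const_nhds.congr' ?_) (hτ.comp hseq)
    filter_upwards [eventually_ne_atTop 0] with N hN
    have hN' : (N : K) ≠ 0 := Nat.cast_ne_zero.2 hN
    simp only [Function.comp_apply, inv_inv, map_mul, map_natCast]
    field_simp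
  ext u
  rcases eq_or_ne u 0 with rfl | hu
  · rw [map_zero, map_zero]
  · have h := (hratio u hu).trans (hratio 1 one_ne_zero).symm
    rw [map_one, div_one, div_eq_one_iff_eq hu] at h
    exact h

end IdentityOfTendsto

section SLPreserver

open Filter Topology

variable {n : Type*} [Fintype n] [DecidableEq n] {Φ : Matrix n n ℂ → Matrix n n ℂ}

namespace IsSLPreserver

variable (H : IsSLPreserver Φ)
include H

theorem map_transvection_mul_diagonal [Nonempty n] {T : Matrix n n ℂ} (hT : IsUnit T)
    {τ : ℂ →+* ℂ} (hΦ : ∀ P, IsRankOneIdempotent P → idempotentMap Φ P = T * P.map τ * T⁻¹)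
    {i j : n} (hij : i ≠ j) (s : ℂ) {l : n → ℂ} (hl : ∏ i, l i = 1) :
    (T⁻¹ * Φ (diagonal l + single i j (s * (l j - l i))) * T) i j = τ s * (l j - l i) := by
  have hT' := (isUnit_iff_isUnit_det T).1 hT
  have hconj (s : ℂ) : transvection i j s * diagonal l * (transvection i j s)⁻¹ =
      diagonal l + single i j (s * (l j - l i)) := by
    rw [inv_transvection hij, transvection_mul_diagonal_mul_transvection_neg hij]
  rw [← hconj, H.map_conj_diagonal hΦ (isUnit_transvection hij s) hl, transvection_map, hconj,
    mul_assoc, nonsing_inv_mul_cancel_right _ _ hT', nonsing_inv_mul_cancel_left _ _ hT']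
  simp [hij]

/-- The family `diagonal (1 + d, 1, (1 + d)⁻¹) + E₂₁` of diagonalizable matrices converges to a
unipotent matrix as `d → 0`, but its eigenvectors involve `d⁻¹`. -/
theorem exists_tendsto_map_inv_mul (hn : 2 < Fintype.card n) {T : Matrix n n ℂ} (hT : IsUnit T)
    {τ : ℂ →+* ℂ} (hΦ : ∀ P, IsRankOneIdempotent P → idempotentMap Φ P = T * P.map τ * T⁻¹) :
    ∃ c, Tendsto (fun d ↦ τ d⁻¹ * d) (𝓝[≠] 0) (𝓝 c) := by
  obtain ⟨j, i, k, hji, hjk, hik⟩ := Fintype.two_lt_card_iff.1 hn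
  have : Nonempty n := ⟨i⟩
  let l (d : ℂ) : n → ℂ := Function.update (Function.update 1 j (1 + d)) k (1 + d)⁻¹
  have hli (d) : l d i = 1 := by simp [l, hik, hji.symm]
  have hlj (d) : l d j = 1 + d := by simp [l, hjk]
  have hne : ∀ᶠ d in 𝓝 (0 : ℂ), 1 + d ≠ 0 :=
    (continuousAt_const.add continuousAt_id).eventually_ne (by simp)
  have hprod (d : ℂ) (hd : 1 + d ≠ 0) : ∏ i, l d i = 1 := by
    rw [Finset.prod_update_of_mem (Finset.mem_univ k), Finset.prod_update_of_mem (by simp [hjk])]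
    simp [hd]
  have hlim : Tendsto (fun d ↦ (T⁻¹ * Φ (diagonal (l d) + single i j 1) * T) i j) (𝓝 0)
      (𝓝 ((T⁻¹ * Φ (diagonal (l 0) + single i j 1) * T) i j)) := by
    have hdet (d : ℂ) (hd : 1 + d ≠ 0) : (diagonal (l d) + single i j 1).det = 1 :=
      (det_diagonal_add_single hji.symm (hli d) 1).trans (hprod d hd)
    have hl : ContinuousAt l 0 :=
      (continuousAt_const.update j (continuousAt_const.add continuousAt_id)).update k
        ((continuousAt_const.add continuousAt_id).inv₀ (by simp))
    have hmat : ContinuousAt (fun d ↦ diagonal (l d) + single i j 1) 0 :=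
      (continuous_id.matrix_diagonal.continuousAt.comp hl).add continuousAt_const
    have hval := (H.continuousOn _ (hdet 0 (by simp))).tendsto.comp
      (tendsto_nhdsWithin_iff.2 ⟨hmat.tendsto, hne.mono hdet⟩)
    exact ((continuous_id.matrix_elem i j).tendsto _).comp ((hval.const_mul T⁻¹).mul_const T)
  refine ⟨_, (hlim.mono_left nhdsWithin_le_nhds).congr' ?_⟩
  filter_upwards [self_mem_nhdsWithin, nhdsWithin_le_nhds hne] with d hd hd1
  have := H.map_transvection_mul_diagonal hT hΦ hji.symm d⁻¹ (hprod d hd1)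
  rwa [hli, hlj, add_sub_cancel_left, inv_mul_cancel₀ hd] at this

end IsSLPreserver

end SLPreserver

section SLPreserver

variable {n : Type*} [Fintype n] [DecidableEq n] {Φ : Matrix n n ℂ → Matrix n n ℂ}

namespace IsSLPreserver

theorem transpose (H : IsSLPreserver Φ) : IsSLPreserver fun X ↦ (Φ X)ᵀ where
  continuousOn := continuous_id.matrix_transpose.comp_continuousOn H.continuousOn
  map_mul_comm X Y hX hY hXY := by
    rw [← transpose_mul, ← transpose_mul, H.map_mul_comm X Y hX hY hXY]
  spectrum_subset X hX t ht := by
    rw [mem_spectrum_iff_isRoot_charpoly, charpoly_transpose] at ht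
    exact H.spectrum_subset X hX (mem_spectrum_iff_isRoot_charpoly.2 ht)

theorem exists_conj_of_isStraight (H : IsSLPreserver Φ) (hn : 2 < Fintype.card n)
    (hstraight : FramePreserving.IsStraight (idempotentMap Φ)) :
    ∃ T : Matrix n n ℂ, IsUnit T ∧ ∀ X, X.det = 1 → Φ X = T * X * T⁻¹ := by
  have : Nonempty n := Fintype.card_pos_iff.1 (by lia)
  obtain ⟨T, τ, hT, hΦ⟩ := H.framePreserving_idempotentMap.exists_semilinear hn hstraight
  obtain ⟨c, hc⟩ := H.exists_tendsto_map_inv_mul hn hT hΦ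
  obtain rfl := eq_id_of_tendsto_map_inv_mul hc
  have heqOn : Set.EqOn Φ (fun X ↦ T * X * T⁻¹) {X | X.det = 1} := by
    refine Set.EqOn.of_subset_closure (s := diagonalizableUnimodular n) ?_ H.continuousOn
      (by fun_prop) ?_ setOf_det_eq_one_subset_closure_diagonalizableUnimodular
    · rintro _ ⟨S, l, hS, hl, rfl⟩
      simpa using H.map_conj_diagonal hΦ hS hl
    · rintro _ ⟨S, l, hS, hl, rfl⟩
      exact det_conj_diagonal hS hl
  exact ⟨T, hT, heqOn⟩

theorem exists_conj_or (H : IsSLPreserver Φ) (hn : 2 < Fintype.card n) :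
    ∃ T : Matrix n n ℂ, IsUnit T ∧ ((∀ X, X.det = 1 → Φ X = T * X * T⁻¹) ∨
      ∀ X, X.det = 1 → Φ X = T * Xᵀ * T⁻¹) := by
  have : Nonempty n := Fintype.card_pos_iff.1 (by lia)
  rcases H.framePreserving_idempotentMap.isStraight_or hn with h | h
  · obtain ⟨T, hT, hΦ⟩ := H.exists_conj_of_isStraight hn h
    exact ⟨T, hT, Or.inl hΦ⟩
  · simp_rw [← idempotentMap_transpose] at h
    obtain ⟨T, hT, hΦ⟩ := H.transpose.exists_conj_of_isStraight hn h
    rw [isUnit_iff_isUnit_det] at hT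
    refine ⟨(T⁻¹)ᵀ, ?_, Or.inr fun X hX ↦ ?_⟩
    · rw [isUnit_iff_isUnit_det, det_transpose]
      exact isUnit_nonsing_inv_det _ hT
    · rw [← transpose_transpose (Φ X), hΦ X hX, transpose_mul, transpose_mul,
        ← transpose_nonsing_inv, nonsing_inv_nonsing_inv _ hT, mul_assoc]

end IsSLPreserver

theorem isSLPreserver_extend {φ : {X : Matrix n n ℂ // X.det = 1} → Matrix n n ℂ}
    (hcont : Continuous φ)
    (hcomm : ∀ X Y, X.val * Y.val = Y.val * X.val → φ X * φ Y = φ Y * φ X)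
    (hshrink : ∀ X, spectrum ℂ (φ X) ⊆ spectrum ℂ X.val) :
    IsSLPreserver (Function.extend Subtype.val φ 0) := by
  have hφ (X : Matrix n n ℂ) (hX : X.det = 1) :
      Function.extend Subtype.val φ 0 X = φ ⟨X, hX⟩ :=
    Subtype.val_injective.extend_apply φ 0 ⟨X, hX⟩
  refine ⟨?_, fun X Y hX hY hXY ↦ ?_, fun X hX ↦ ?_⟩
  · rw [continuousOn_iff_continuous_domRestrict]
    exact hcont.congr fun X ↦ (hφ X.1 X.2).symm
  · rw [hφ X hX, hφ Y hY]
    exact hcomm _ _ hXY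
  · rw [hφ X hX]
    exact hshrink _

end SLPreserver

/-- For `n ≥ 3`, any continuous, commutativity-preserving and
spectrum-shrinking map `φ : SL(n) → M_n` is of the form `φ(X) = T X T⁻¹` or
`φ(X) = T Xᵗ T⁻¹` for some `T ∈ GL(n)`. -/
theorem preserver_SLn (n : ℕ) (hn : 3 ≤ n)
    (φ : {X : Matrix (Fin n) (Fin n) ℂ // X.det = 1} → Matrix (Fin n) (Fin n) ℂ)
    (hcont : Continuous φ)
    (hcomm : ∀ X Y, X.val * Y.val = Y.val * X.val → φ X * φ Y = φ Y * φ X)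
    (hshrink : ∀ X, spectrum ℂ (φ X) ⊆ spectrum ℂ X.val) :
    ∃ T : Matrix (Fin n) (Fin n) ℂ, IsUnit T ∧
      ((∀ X, φ X = T * X.val * T⁻¹) ∨ (∀ X, φ X = T * X.val.transpose * T⁻¹)) := by
  have hn' : 2 < Fintype.card (Fin n) := by rwa [Fintype.card_fin]
  obtain ⟨T, hT, hΦ⟩ := (isSLPreserver_extend hcont hcomm hshrink).exists_conj_or hn'
  have hφ (X) : Function.extend Subtype.val φ 0 X.1 = φ X :=
    Subtype.val_injective.extend_apply φ 0 X
  refine ⟨T, hT, hΦ.imp (fun h X ↦ ?_) fun h X ↦ ?_⟩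
  · rw [← hφ, h X.1 X.2]
  · rw [← hφ, h X.1 X.2]
end
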